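/- arXiv:2402.09227 — 2 statements merged into one kernel-verified Lean document; each statement's English description precedes it below -/
import Mathlib

section
/- Let H be a complex Hilbert space with dim H ≥ 3 and let φ : B_s(H) → B_s(H) be a surjective map such that for all A, B, C ∈ B_s(H), A − B ↔_q C if and only if φ(A) − φ(B) ↔_q φ(C). Then there exist a nonzero real scalar c, an operator U on H that is either unitary or antiunitary, and a function f : B_s(H) → ℝ such that φ(A) = c·U A U* + f(A)·I for all A ∈ B_s(H); moreover f(A) = 0 for every A ∈ B_s(H) for which there exists a nonzero B ∈ B_s(H) not commuting with A such that AB + BA = 0. -/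
noncomputable section

variable {H : Type*} [NormedAddCommGroup H] [InnerProductSpace ℂ H] [CompleteSpace H]

/-- `A ↔_c B`: the self-adjoint operators `A` and `B` commute. -/
def CommC (A B : selfAdjoint (H →L[ℂ] H)) : Prop :=
  (A : H →L[ℂ] H) * (B : H →L[ℂ] H) = (B : H →L[ℂ] H) * (A : H →L[ℂ] H)

/-- `A ↔_q B`: the self-adjoint operators `A` and `B` quasi-commute, i.e.
they either commute or anti-commute. -/
def CommQ (A B : selfAdjoint (H →L[ℂ] H)) : Prop :=
  (A : H →L[ℂ] H) * (B : H →L[ℂ] H) = (B : H →L[ℂ] H) * (A : H →L[ℂ] H) ∨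
  (A : H →L[ℂ] H) * (B : H →L[ℂ] H) + (B : H →L[ℂ] H) * (A : H →L[ℂ] H) = 0

/-!
Two operators with `A - B ↔_q C` that do not commute anticommute; adding a scalar to `A` destroys
this, so commutation of `A - B` with `C` can be read off from the quasi-commutation of `A - B + t`
with `C` for all real `t`. Hence `φ` preserves bicommutants. Modulo scalars, multiples of a
projection of rank one generate minimal bicommutants, and an exchange property separates them from
other operators with this property, so `φ` maps them to each other. Changing `A` by a multiple of
`x ⊗ x` changes `φ A` by a multiple of `θ x ⊗ θ x`, again modulo scalars, so `φ` is additive on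
combinations of such operators; the linear relations between the operators `x ⊗ x` for `x` in a
plane then force a common factor `c` and `|⟪θ x, θ y⟫| = |⟪x, y⟫|`. Wigner's theorem replaces `θ`
by a linear or antilinear isometry `U`, and `φ A` is recovered from its differences with the images
of rank one operators that commute with `A` on a given vector. Finally, a nonzero scalar shift of an
anticommuting, non-commuting pair neither commutes nor anticommutes.
-/

open scoped InnerProductSpace

local notation "Bₛ(" H ")" => selfAdjoint (H →L[ℂ] H)

section Semilinear

theorem exists_forall_apply_eq_smul {ι K L V W : Type*} [Field K] [Field L] {σ : K →+* L}
    [RingHomSurjective σ] [AddCommGroup V] [Module K V] [AddCommGroup W] [Module L W]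
    {f g : V →ₛₗ[σ] W} {c : ι → L} (hg : Function.Injective g)
    (h : ∀ x, ∃ i, f x = c i • g x) : ∃ i, ∀ x, f x = c i • g x := by
  rcases subsingleton_or_nontrivial V with hV | hV
  · exact (h 0).imp fun i hi x => by rwa [Subsingleton.elim x 0]
  obtain ⟨u, hu⟩ := exists_ne (0 : V)
  have hgu : g u ≠ 0 := (map_ne_zero_iff g hg).2 hu
  obtain ⟨i, hi⟩ := h u
  refine ⟨i, fun v => ?_⟩
  obtain ⟨j, hj⟩ := h v
  obtain ⟨k, hk⟩ := h (u + v)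
  have hrel : (c i - c k) • g u = (c k - c j) • g v := by
    rw [map_add, map_add, hi, hj] at hk
    linear_combination (norm := module) hk
  by_cases hkj : c k = c j
  · rw [hkj, sub_self, zero_smul] at hrel
    rw [hj, ← sub_eq_zero.1 ((smul_eq_zero.1 hrel).resolve_right hgu)]
  · obtain ⟨b, hb⟩ := σ.surjective ((c k - c j)⁻¹ * (c i - c k))
    have hv : v = b • u := hg <| by
      rw [map_smulₛₗ, hb, mul_smul, hrel, inv_smul_smul₀ (sub_ne_zero.2 hkj)]
    rw [hv, map_smulₛₗ, map_smulₛₗ, hi, smul_comm]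

end Semilinear

section InnerProductSpace

variable {E F : Type*} [NormedAddCommGroup E] [InnerProductSpace ℂ E]
  [NormedAddCommGroup F] [InnerProductSpace ℂ F]

theorem norm_inner_self (x : E) : ‖⟪x, x⟫_ℂ‖ = ‖x‖ ^ 2 := by
  rw [inner_self_eq_norm_sq_to_K, norm_pow, RCLike.norm_ofReal, abs_norm]

theorem exists_eq_smul_add_inner_eq_zero (x v : E) :
    ∃ (l : ℂ) (w : E), v = l • x + w ∧ ⟪x, w⟫_ℂ = 0 := by
  obtain ⟨_, hy, w, hw, rfl⟩ := (ℂ ∙ x).exists_add_mem_mem_orthogonal v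
  obtain ⟨l, rfl⟩ := Submodule.mem_span_singleton.1 hy
  exact ⟨l, w, rfl, Submodule.mem_orthogonal_singleton_iff_inner_right.1 hw⟩

theorem exists_norm_eq_one_forall_inner_eq_zero {s : Finset E}
    (hs : (s.card : Cardinal) < Module.rank ℂ E) :
    ∃ v : E, ‖v‖ = 1 ∧ ∀ x ∈ s, ⟪x, v⟫_ℂ = 0 := by
  have hne : (Submodule.span ℂ (s : Set E))ᗮ ≠ ⊥ := by
    intro h
    have : FiniteDimensional ℂ (Submodule.span ℂ (s : Set E)) :=
      FiniteDimensional.span_finset ℂ s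
    have hrank := rank_span_finset_le (R := ℂ) s
    rw [Submodule.orthogonal_eq_bot_iff.1 h, rank_top] at hrank
    exact hs.not_ge hrank
  obtain ⟨v, hv, hv0⟩ := Submodule.exists_mem_ne_zero_of_ne_bot hne
  refine ⟨(‖v‖⁻¹ : ℂ) • v, norm_smul_inv_norm hv0, fun x hx => ?_⟩
  rw [inner_smul_right, (Submodule.mem_orthogonal _ v).1 hv x (Submodule.subset_span hx), mul_zero]

theorem exists_norm_eq_one_inner_eq_zero (hdim : 3 ≤ Module.rank ℂ E) (x y : E) :
    ∃ v : E, ‖v‖ = 1 ∧ ⟪x, v⟫_ℂ = 0 ∧ ⟪y, v⟫_ℂ = 0 := by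
  classical
  have hcard : (({x, y} : Finset E).card : Cardinal) < Module.rank ℂ E :=
    lt_of_lt_of_le (by exact_mod_cast Nat.lt_succ_of_le Finset.card_le_two) hdim
  obtain ⟨v, hv, hxy⟩ := exists_norm_eq_one_forall_inner_eq_zero hcard
  exact ⟨v, hv, hxy x (by simp), hxy y (by simp)⟩

theorem inner_eq_zero_of_mem_span_pair {x y z v : E} (hx : ⟪x, v⟫_ℂ = 0) (hy : ⟪y, v⟫_ℂ = 0)
    (hz : z ∈ Submodule.span ℂ {x, y}) : ⟪z, v⟫_ℂ = 0 := by
  obtain ⟨a, b, rfl⟩ := Submodule.mem_span_pair.1 hz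
  rw [inner_add_left, inner_smul_left, inner_smul_left, hx, hy, mul_zero, mul_zero, add_zero]

theorem exists_norm_eq_one_eq_smul {x y : F} (hxy : ‖x‖ = ‖y‖) (h : ‖⟪x, y⟫_ℂ‖ = ‖y‖ ^ 2) :
    ∃ m : ℂ, ‖m‖ = 1 ∧ x = m • y := by
  rcases eq_or_ne y 0 with rfl | hy
  · exact ⟨1, norm_one, by rw [smul_zero, ← norm_eq_zero, hxy, norm_zero]⟩
  have hx : x ≠ 0 := norm_ne_zero_iff.1 (hxy ▸ norm_ne_zero_iff.2 hy)
  obtain ⟨m, -, hm⟩ := (norm_inner_eq_norm_iff (𝕜 := ℂ) hy hx).1 (by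
    rw [norm_inner_symm, h, hxy, sq])
  refine ⟨m, ?_, hm⟩
  rwa [hm, norm_smul, mul_eq_right₀ (norm_ne_zero_iff.2 hy)] at hxy

end InnerProductSpace

section Wigner

variable {E F : Type*} [NormedAddCommGroup E] [InnerProductSpace ℂ E]
  [NormedAddCommGroup F] [InnerProductSpace ℂ F]

theorem exists_linearIsometry_coe_eq_of_re_inner {T : E → F}
    (hT : ∀ x y, (⟪T x, T y⟫_ℂ).re = (⟪x, y⟫_ℂ).re) : ∃ L : E →ₗᵢ[ℝ] F, ⇑L = T := by
  have hzero {d : F} (hd : (⟪d, d⟫_ℂ).re = 0) : d = 0 := by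
    rwa [← RCLike.re_to_complex, inner_self_eq_norm_sq, sq_eq_zero_iff, norm_eq_zero] at hd
  have hadd (x y : E) : T (x + y) = T x + T y := by
    have horth (u : E) : (⟪T u, T (x + y) - (T x + T y)⟫_ℂ).re = 0 := by
      simp only [inner_sub_right, inner_add_right, Complex.sub_re, Complex.add_re, hT]; ring
    refine sub_eq_zero.1 (hzero ?_)
    rw [inner_sub_left, inner_add_left, Complex.sub_re, Complex.add_re, horth, horth, horth]
    simp
  have hsmul (t : ℝ) (x : E) : T (t • x) = t • T x := by
    have horth (u : E) : (⟪T u, T (t • x) - t • T x⟫_ℂ).re = 0 := by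
      rw [inner_sub_right, Complex.sub_re, hT, ← Complex.coe_smul, ← Complex.coe_smul,
        inner_smul_right, inner_smul_right, Complex.re_ofReal_mul, Complex.re_ofReal_mul, hT,
        sub_self]
    refine sub_eq_zero.1 (hzero ?_)
    rw [inner_sub_left, Complex.sub_re, horth, ← Complex.coe_smul t (T x), inner_smul_left,
      Complex.conj_ofReal, Complex.re_ofReal_mul, Complex.coe_smul, horth, mul_zero, sub_zero]
  have hnorm (x : E) : ‖T x‖ = ‖x‖ := by
    have h := hT x x
    rwa [← RCLike.re_to_complex, ← RCLike.re_to_complex, inner_self_eq_norm_sq,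
      inner_self_eq_norm_sq, sq_eq_sq₀ (norm_nonneg _) (norm_nonneg _)] at h
  exact ⟨⟨⟨⟨T, hadd⟩, hsmul⟩, hnorm⟩, rfl⟩

theorem eq_I_or_eq_neg_I {z : ℂ} (hre : z.re = 0) (hz : ‖z‖ = 1) :
    z = Complex.I ∨ z = -Complex.I := by
  have h := Complex.sq_norm z
  rw [hz, Complex.normSq_apply, hre] at h
  rcases mul_self_eq_one_iff.1 (by linarith : z.im * z.im = 1) with him | him
  · exact Or.inl (Complex.ext hre him)
  · exact Or.inr (Complex.ext (by simpa using hre) (by simpa using him))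

theorem map_I_smul_eq_or {L : E →ₗᵢ[ℝ] F} (hL : ∀ x y, ‖⟪L x, L y⟫_ℂ‖ = ‖⟪x, y⟫_ℂ‖) :
    (∀ x, L (Complex.I • x) = Complex.I • L x) ∨
      ∀ x, L (Complex.I • x) = -(Complex.I • L x) := by
  have hre (x y : E) : (⟪L x, L y⟫_ℂ).re = (⟪x, y⟫_ℂ).re := by
    have h1 := norm_add_sq (𝕜 := ℂ) (L x) (L y)
    have h2 := norm_add_sq (𝕜 := ℂ) x y
    rw [← map_add, L.norm_map, L.norm_map, L.norm_map, h2] at h1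
    simp only [RCLike.re_to_complex] at h1
    linarith
  have hpt (x : E) : L (Complex.I • x) = Complex.I • L x ∨
      L (Complex.I • x) = -(Complex.I • L x) := by
    have hnorm : ‖L (Complex.I • x)‖ = ‖L x‖ := by
      rw [L.norm_map, L.norm_map, norm_smul, Complex.norm_I, one_mul]
    obtain ⟨m, hm, hmx⟩ := exists_norm_eq_one_eq_smul hnorm (by
      rw [hL, L.norm_map, inner_smul_left, norm_mul, RCLike.norm_conj, Complex.norm_I, one_mul,
        norm_inner_self])
    rcases eq_or_ne x 0 with rfl | hx
    · exact Or.inl (by simp only [smul_zero, map_zero])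
    have hm0 : m.re = 0 := by
      have h := hre (Complex.I • x) x
      rw [hmx, inner_smul_left, inner_smul_left, inner_self_eq_norm_sq_to_K,
        inner_self_eq_norm_sq_to_K, L.norm_map] at h
      simpa [← Complex.ofReal_pow, hx] using h
    rcases eq_I_or_eq_neg_I hm0 hm with rfl | rfl
    · exact Or.inl hmx
    · exact Or.inr (hmx.trans (neg_smul _ _))
  let J : E →+ E := DistribSMul.toAddMonoidHom E Complex.I
  let J' : F →+ F := DistribSMul.toAddMonoidHom F Complex.I
  let L' : E →+ F := L.toLinearMap.toAddMonoidHom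
  have hunion : ((⊤ : AddSubgroup E) : Set E) ⊆
      (L'.comp J).eqLocus (J'.comp L') ∪ (L'.comp J).eqLocus (-(J'.comp L')) :=
    fun x _ => hpt x
  exact (AddSubgroupClass.subset_union.1 hunion).imp (fun h x => h trivial) fun h x => h trivial

theorem exists_semilinearIsometry_coe_eq {σ : ℂ →+* ℂ} (hσ : ∀ t : ℝ, σ t = t)
    (L : E →ₗᵢ[ℝ] F) (hI : ∀ x, L (Complex.I • x) = σ Complex.I • L x) :
    ∃ U : E →ₛₗᵢ[σ] F, ⇑U = L := by
  refine ⟨⟨⟨L.toLinearMap.toAddHom, fun z x => ?_⟩, L.norm_map⟩, rfl⟩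
  change L (z • x) = σ z • L x
  rw [← Complex.re_add_im z]
  simp only [add_smul, mul_smul, map_add, map_mul, hσ, Complex.coe_smul, map_smul, hI]

theorem exists_extend_of_inner_eq_zero {σ : ℂ →+* ℂ} [RingHomIsometric σ] {e : E} {f : F}
    (he : ‖e‖ = 1) (hf : ‖f‖ = 1) (L : (ℂ ∙ e)ᗮ →ₛₗᵢ[σ] F) (hfL : ∀ w, ⟪f, L w⟫_ℂ = 0) :
    ∃ U : E →ₛₗᵢ[σ] F, ∀ (α : ℂ) (w : (ℂ ∙ e)ᗮ), U (α • e + w) = σ α • f + L w := by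
  have hperp (w : (ℂ ∙ e)ᗮ) : ⟪e, (w : E)⟫_ℂ = 0 :=
    Submodule.mem_orthogonal_singleton_iff_inner_right.1 w.2
  let P : E →ₗ[ℂ] (ℂ ∙ e)ᗮ := (ℂ ∙ e)ᗮ.orthogonalProjectionOnto
  let U : E →ₛₗ[σ] F :=
    { toFun := fun x => σ ⟪e, x⟫_ℂ • f + L (P x)
      map_add' := fun x y => by
        simp only [inner_add_right, map_add]; module
      map_smul' := fun z x => by
        simp only [inner_smul_right, map_mul, map_smul, map_smulₛₗ]; module }
  have hU (α : ℂ) (w : (ℂ ∙ e)ᗮ) : U (α • e + w) = σ α • f + L w := by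
    have h1 : ⟪e, α • e + w⟫_ℂ = α := by
      rw [inner_add_right, inner_smul_right, inner_self_eq_one_of_norm_eq_one (𝕜 := ℂ) he,
        hperp w, mul_one, add_zero]
    have h2 : P (α • e + w) = w := by
      have he0 : P e = 0 :=
        Submodule.orthogonalProjectionOnto_orthogonalComplement_singleton_eq_zero e
      have hw : P w = w := Submodule.orthogonalProjectionOnto_mem_subspace_eq_self w
      rw [map_add, map_smul, he0, hw, smul_zero, zero_add]
    change σ ⟪e, α • e + w⟫_ℂ • f + L (P (α • e + w)) = _
    rw [h1, h2]
  refine ⟨⟨U, fun x => ?_⟩, hU⟩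
  obtain ⟨α, w, rfl, hw⟩ := exists_eq_smul_add_inner_eq_zero e x
  lift w to (ℂ ∙ e)ᗮ using Submodule.mem_orthogonal_singleton_iff_inner_right.2 hw
  have h1 := norm_add_sq_eq_norm_sq_add_norm_sq_of_inner_eq_zero (σ α • f) (L w)
    (by rw [inner_smul_left, hfL, mul_zero])
  have h2 := norm_add_sq_eq_norm_sq_add_norm_sq_of_inner_eq_zero (α • e) (w : E)
    (by rw [inner_smul_left, hw, mul_zero])
  rw [norm_smul, RingHomIsometric.norm_map, hf, ← he, ← norm_smul α e, L.norm_map,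
    Submodule.coe_norm, ← h2, ← hU] at h1
  exact (mul_self_inj_of_nonneg (norm_nonneg _) (norm_nonneg _)).1 h1

/-- `θ` preserves the modulus of the inner product (the transition probabilities of quantum
mechanics); this is the hypothesis of Wigner's theorem. -/
def PreservesNormInner (θ : E → F) : Prop := ∀ x y, ‖⟪θ x, θ y⟫_ℂ‖ = ‖⟪x, y⟫_ℂ‖

/-- The vector `u` orthogonal to `θ e` such that `θ e + u` is a multiple of `θ (e + w)`, for a
unit vector `e` and `w` orthogonal to it. It is independent of the phase of `θ (e + w)`, which
makes it a linearization of `θ` on the orthogonal complement of `e`. -/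
def orthPart (θ : E → F) (e w : E) : F := ⟪θ (e + w), θ e⟫_ℂ • θ (e + w) - θ e

omit [InnerProductSpace ℂ E] in
theorem add_orthPart (θ : E → F) (e w : E) :
    θ e + orthPart θ e w = ⟪θ (e + w), θ e⟫_ℂ • θ (e + w) := add_sub_cancel _ _

namespace PreservesNormInner

variable {θ : E → F} {e w v : E}

theorem norm_map (h : PreservesNormInner θ) (x : E) : ‖θ x‖ = ‖x‖ := by
  have h2 := h x x
  rwa [norm_inner_self, norm_inner_self, sq_eq_sq₀ (norm_nonneg _) (norm_nonneg _)] at h2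

theorem inner_eq_zero (h : PreservesNormInner θ) {x y : E} (hxy : ⟪x, y⟫_ℂ = 0) :
    ⟪θ x, θ y⟫_ℂ = 0 := by
  rw [← norm_eq_zero, h, hxy, norm_zero]

theorem norm_inner_add_left (h : PreservesNormInner θ) (he : ‖e‖ = 1) (hw : ⟪e, w⟫_ℂ = 0) :
    ‖⟪θ (e + w), θ e⟫_ℂ‖ = 1 := by
  rw [h, inner_add_left, inner_eq_zero_symm.1 hw, add_zero, norm_inner_self, he, one_pow]

theorem inner_orthPart (h : PreservesNormInner θ) (he : ‖e‖ = 1) (hw : ⟪e, w⟫_ℂ = 0) :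
    ⟪θ e, orthPart θ e w⟫_ℂ = 0 := by
  rw [orthPart, inner_sub_right, inner_smul_right, ← inner_conj_symm (θ e), Complex.mul_conj',
    h.norm_inner_add_left he hw, inner_self_eq_norm_sq_to_K, h.norm_map, he]
  simp

theorem norm_inner_add_orthPart (h : PreservesNormInner θ) (he : ‖e‖ = 1) (hw : ⟪e, w⟫_ℂ = 0)
    (x : E) : ‖⟪θ x, θ e + orthPart θ e w⟫_ℂ‖ = ‖⟪x, e + w⟫_ℂ‖ := by
  rw [add_orthPart, inner_smul_right, norm_mul, h.norm_inner_add_left he hw, one_mul, h]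

theorem norm_one_add_inner_orthPart (h : PreservesNormInner θ) (he : ‖e‖ = 1)
    (hw : ⟪e, w⟫_ℂ = 0) (hv : ⟪e, v⟫_ℂ = 0) :
    ‖1 + ⟪orthPart θ e w, orthPart θ e v⟫_ℂ‖ = ‖1 + ⟪w, v⟫_ℂ‖ := by
  have h1 : ‖⟪θ e + orthPart θ e w, θ e + orthPart θ e v⟫_ℂ‖ = ‖⟪e + w, e + v⟫_ℂ‖ := by
    rw [← h.norm_inner_add_orthPart he hv, add_orthPart θ e w, inner_smul_left, norm_mul,
      RCLike.norm_conj, h.norm_inner_add_left he hw, one_mul]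
  simpa only [inner_add_left, inner_add_right, inner_self_eq_one_of_norm_eq_one (𝕜 := ℂ) he,
    inner_self_eq_one_of_norm_eq_one (𝕜 := ℂ) ((h.norm_map e).trans he), h.inner_orthPart he hv,
    inner_eq_zero_symm.1 (h.inner_orthPart he hw), hv, inner_eq_zero_symm.1 hw, add_zero,
    zero_add] using h1

theorem norm_orthPart (h : PreservesNormInner θ) (he : ‖e‖ = 1) (hw : ⟪e, w⟫_ℂ = 0) :
    ‖orthPart θ e w‖ = ‖w‖ := by
  have h1 := norm_add_sq_eq_norm_sq_add_norm_sq_of_inner_eq_zero _ _ (h.inner_orthPart he hw)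
  have h2 := norm_add_sq_eq_norm_sq_add_norm_sq_of_inner_eq_zero _ _ hw
  rw [add_orthPart, norm_smul, h.norm_inner_add_left he hw, one_mul, h.norm_map, h.norm_map,
    h2] at h1
  exact ((mul_self_inj_of_nonneg (norm_nonneg _) (norm_nonneg _)).1 (add_left_cancel h1)).symm

theorem norm_inner_orthPart_self (h : PreservesNormInner θ) (he : ‖e‖ = 1) (hw : ⟪e, w⟫_ℂ = 0) :
    ‖⟪θ w, orthPart θ e w⟫_ℂ‖ = ‖w‖ ^ 2 := by
  have h1 := h.norm_inner_add_orthPart he hw w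
  rwa [inner_add_right, inner_add_right, inner_eq_zero_symm.1 hw,
    h.inner_eq_zero (inner_eq_zero_symm.1 hw), zero_add, zero_add, norm_inner_self] at h1

theorem exists_eq_smul_orthPart (h : PreservesNormInner θ) (he : ‖e‖ = 1) (hw : ⟪e, w⟫_ℂ = 0) :
    ∃ m : ℂ, ‖m‖ = 1 ∧ θ w = m • orthPart θ e w := by
  have hnorm := h.norm_orthPart he hw
  exact exists_norm_eq_one_eq_smul ((h.norm_map w).trans hnorm.symm)
    (by rw [h.norm_inner_orthPart_self he hw, hnorm])

theorem norm_inner_orthPart (h : PreservesNormInner θ) (he : ‖e‖ = 1) (hw : ⟪e, w⟫_ℂ = 0)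
    (hv : ⟪e, v⟫_ℂ = 0) : ‖⟪orthPart θ e w, orthPart θ e v⟫_ℂ‖ = ‖⟪w, v⟫_ℂ‖ := by
  obtain ⟨m, hm, hmw⟩ := h.exists_eq_smul_orthPart he hw
  obtain ⟨n, hn, hnv⟩ := h.exists_eq_smul_orthPart he hv
  rw [← h w v, hmw, hnv, inner_smul_left, inner_smul_right, norm_mul, norm_mul, RCLike.norm_conj,
    hm, hn, one_mul, one_mul]

theorem re_inner_orthPart (h : PreservesNormInner θ) (he : ‖e‖ = 1) (hw : ⟪e, w⟫_ℂ = 0)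
    (hv : ⟪e, v⟫_ℂ = 0) : (⟪orthPart θ e w, orthPart θ e v⟫_ℂ).re = (⟪w, v⟫_ℂ).re := by
  have h1 := congrArg (· ^ 2) (h.norm_one_add_inner_orthPart he hw hv)
  have h2 := congrArg (· ^ 2) (h.norm_inner_orthPart he hw hv)
  simp only [Complex.sq_norm, Complex.normSq_apply, Complex.add_re, Complex.one_re,
    Complex.add_im, Complex.one_im, zero_add] at h1 h2
  linarith

theorem exists_linearIsometry_orthPart (h : PreservesNormInner θ) (he : ‖e‖ = 1) :
    (∃ L : (ℂ ∙ e)ᗮ →ₗᵢ[ℂ] F, ∀ w, L w = orthPart θ e w) ∨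
      ∃ L : (ℂ ∙ e)ᗮ →ₗᵢ⋆[ℂ] F, ∀ w, L w = orthPart θ e w := by
  have hperp (w : (ℂ ∙ e)ᗮ) : ⟪e, (w : E)⟫_ℂ = 0 :=
    Submodule.mem_orthogonal_singleton_iff_inner_right.1 w.2
  obtain ⟨L, hL⟩ := exists_linearIsometry_coe_eq_of_re_inner
    (T := fun w : (ℂ ∙ e)ᗮ => orthPart θ e w)
    fun w v => h.re_inner_orthPart he (hperp w) (hperp v)
  have hnorm (w v : (ℂ ∙ e)ᗮ) : ‖⟪L w, L v⟫_ℂ‖ = ‖⟪w, v⟫_ℂ‖ := by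
    rw [hL]; exact h.norm_inner_orthPart he (hperp w) (hperp v)
  refine (map_I_smul_eq_or hnorm).imp (fun hI => ?_) fun hI => ?_
  · obtain ⟨U, hU⟩ := exists_semilinearIsometry_coe_eq (σ := .id ℂ) (fun _ => rfl) L hI
    exact ⟨U, fun w => congrFun (hU.trans hL) w⟩
  · obtain ⟨U, hU⟩ := exists_semilinearIsometry_coe_eq (σ := starRingEnd ℂ) Complex.conj_ofReal L
      fun w => by rw [hI, Complex.conj_I, neg_smul]
    exact ⟨U, fun w => congrFun (hU.trans hL) w⟩

theorem exists_eq_smul_of_extend {σ : ℂ →+* ℂ} [RingHomIsometric σ] (h : PreservesNormInner θ)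
    (he : ‖e‖ = 1) {L : (ℂ ∙ e)ᗮ →ₛₗᵢ[σ] F} (hL : ∀ w, L w = orthPart θ e w) :
    ∃ U : E →ₛₗᵢ[σ] F, ∀ x, ∃ m : ℂ, ‖m‖ = 1 ∧ θ x = m • U x := by
  have hperp (w : (ℂ ∙ e)ᗮ) : ⟪e, (w : E)⟫_ℂ = 0 :=
    Submodule.mem_orthogonal_singleton_iff_inner_right.1 w.2
  obtain ⟨U, hU⟩ := exists_extend_of_inner_eq_zero he ((h.norm_map e).trans he) L
    fun w => by rw [hL, h.inner_orthPart he (hperp w)]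
  refine ⟨U, fun x => exists_norm_eq_one_eq_smul (by rw [h.norm_map, U.norm_map]) ?_⟩
  obtain ⟨α, w, rfl, hw⟩ := exists_eq_smul_add_inner_eq_zero e x
  lift w to (ℂ ∙ e)ᗮ using Submodule.mem_orthogonal_singleton_iff_inner_right.2 hw
  rw [U.norm_map]
  rcases eq_or_ne α 0 with rfl | hα
  · have hUw : U w = orthPart θ e w := by simpa [hL] using hU 0 w
    rw [zero_smul, zero_add, hUw, h.norm_inner_orthPart_self he hw]
  · have hUx : U (α • e + w) = σ α • (θ e + orthPart θ e (α⁻¹ • (w : E))) := by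
      rw [hU, smul_add, ← Submodule.coe_smul, ← hL, map_smulₛₗ, map_inv₀,
        smul_inv_smul₀ ((map_ne_zero σ).2 hα)]
    rw [hUx, inner_smul_right, norm_mul, RingHomIsometric.norm_map,
      h.norm_inner_add_orthPart he (by rw [inner_smul_right, hw, mul_zero]), ← norm_mul,
      ← inner_smul_right, smul_add, smul_inv_smul₀ hα, norm_inner_self]

theorem exists_linearIsometry (h : PreservesNormInner θ) :
    (∃ U : E →ₗᵢ[ℂ] F, ∀ x, ∃ m : ℂ, ‖m‖ = 1 ∧ θ x = m • U x) ∨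
      ∃ U : E →ₗᵢ⋆[ℂ] F, ∀ x, ∃ m : ℂ, ‖m‖ = 1 ∧ θ x = m • U x := by
  rcases subsingleton_or_nontrivial E with hE | hE
  · refine Or.inl ⟨⟨0, fun x => by simp [Subsingleton.elim x 0]⟩, fun x => ⟨1, norm_one, ?_⟩⟩
    change θ x = (1 : ℂ) • (0 : F)
    rw [smul_zero, ← norm_eq_zero, h.norm_map, Subsingleton.elim x 0, norm_zero]
  obtain ⟨e, he⟩ := exists_norm_eq E zero_le_one
  exact (h.exists_linearIsometry_orthPart he).imp (fun ⟨_, hL⟩ => h.exists_eq_smul_of_extend he hL)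
    fun ⟨_, hL⟩ => h.exists_eq_smul_of_extend he hL

end PreservesNormInner

end Wigner

instance : CoeFun Bₛ(H) fun _ => H → H := ⟨fun A => (A : H →L[ℂ] H)⟩

section Shortcuts

-- Finding these through the general instances on `selfAdjoint` is very slow, or fails.
instance : AddCommGroup Bₛ(H) := inferInstance
instance : AddCommMonoid Bₛ(H) := inferInstance
instance : AddZeroClass Bₛ(H) := inferInstance
instance : SMul ℝ Bₛ(H) := inferInstance
instance : Module ℝ Bₛ(H) := inferInstance
instance : MulAction ℝ Bₛ(H) := inferInstance
instance : SMulWithZero ℝ Bₛ(H) := inferInstance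
instance : DistribMulAction ℝ Bₛ(H) := Module.toDistribMulAction
instance : DistribSMul ℝ Bₛ(H) := DistribMulAction.toDistribSMul
instance : SMulZeroClass ℝ Bₛ(H) := DistribSMul.toSMulZeroClass

end Shortcuts

section Operators

variable {A B C : Bₛ(H)} {x y w : H}

theorem selfAdjoint_ext_apply (h : ∀ x, A x = B x) : A = B :=
  Subtype.ext (ContinuousLinearMap.ext h)

theorem coe_add_apply (A B : Bₛ(H)) (x : H) : (A + B) x = A x + B x := rfl

theorem coe_sub_apply (A B : Bₛ(H)) (x : H) : (A - B) x = A x - B x := rfl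

theorem coe_one_apply (x : H) : (1 : Bₛ(H)) x = x := rfl

theorem coe_zero_apply (x : H) : (0 : Bₛ(H)) x = 0 := rfl

theorem coe_smul_apply (t : ℝ) (A : Bₛ(H)) (x : H) : (t • A) x = (t : ℂ) • A x := by
  rw [selfAdjoint.val_smul, smul_apply, Complex.coe_smul]

theorem inner_apply_left (A : Bₛ(H)) (x y : H) : ⟪A x, y⟫_ℂ = ⟪x, A y⟫_ℂ :=
  A.2.isSymmetric x y

theorem eq_of_apply_eq_of_inner_eq_zero (hx : A x = B x)
    (h : ∀ w, ⟪x, w⟫_ℂ = 0 → A w = B w) : A = B := by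
  refine selfAdjoint_ext_apply fun v => ?_
  obtain ⟨l, w, rfl, hw⟩ := exists_eq_smul_add_inner_eq_zero x v
  rw [map_add, map_add, map_smul, map_smul, hx, h w hw]

theorem inner_sub_smul_eq_zero {a : ℝ} (hx : A x = (a : ℂ) • x) (hxw : ⟪x, w⟫_ℂ = 0) (b : ℂ) :
    ⟪x, A w - b • w⟫_ℂ = 0 := by
  rw [inner_sub_right, ← inner_apply_left, hx, inner_smul_left, inner_smul_right, hxw, mul_zero,
    mul_zero, sub_zero]

theorem exists_real_apply_eq_smul {l : ℂ} (h : A x = l • x) : ∃ r : ℝ, A x = (r : ℂ) • x := by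
  rcases eq_or_ne x 0 with rfl | hx
  · exact ⟨0, by rw [map_zero, smul_zero]⟩
  have hl := inner_apply_left A x x
  rw [h, inner_smul_left, inner_smul_right] at hl
  have hl' := mul_right_cancel₀ (inner_self_ne_zero.2 hx) hl
  exact ⟨l.re, by rw [Complex.conj_eq_iff_re.1 hl', h]⟩

theorem CommC.symm (h : CommC A B) : CommC B A := Eq.symm h

theorem CommC.apply_comm (h : CommC A B) (x : H) : A (B x) = B (A x) :=
  congrArg (fun T : H →L[ℂ] H => T x) h

theorem commC_of_apply_comm (h : ∀ x, A (B x) = B (A x)) : CommC A B :=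
  ContinuousLinearMap.ext h

theorem commC_one_left (A : Bₛ(H)) : CommC 1 A := Commute.one_left (A : H →L[ℂ] H)

theorem CommC.add_left (hA : CommC A C) (hB : CommC B C) : CommC (A + B) C :=
  Commute.add_left hA hB

theorem CommC.smul_left (h : CommC A B) (t : ℝ) : CommC (t • A) B :=
  Commute.smul_left h t

/-- The self-adjoint operator `z ↦ ⟪x, z⟫_ℂ • x`, which is `|x⟩⟨x|` in Dirac's notation; for a unit
vector `x` it is the projection onto the line through `x`. -/
def ketBra (x : H) : Bₛ(H) :=
  ⟨InnerProductSpace.rankOne ℂ x x, by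
    rw [selfAdjoint.mem_iff, ContinuousLinearMap.star_eq_adjoint,
      InnerProductSpace.adjoint_rankOne]⟩

theorem ketBra_apply (x z : H) : ketBra x z = ⟪x, z⟫_ℂ • x := rfl

theorem ketBra_zero : ketBra (0 : H) = 0 :=
  selfAdjoint_ext_apply fun z => smul_zero ⟪(0 : H), z⟫_ℂ

theorem ketBra_smul (l : ℂ) (x : H) : ketBra (l • x) = ‖l‖ ^ 2 • ketBra x := by
  refine selfAdjoint_ext_apply fun z => ?_
  simp only [coe_smul_apply, ketBra_apply, inner_smul_left, smul_smul, Complex.ofReal_pow,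
    ← Complex.conj_mul']
  ring_nf

theorem ketBra_apply_self (x : H) : ketBra x x = ((‖x‖ ^ 2 : ℝ) : ℂ) • x := by
  rw [ketBra_apply, inner_self_eq_norm_sq_to_K, Complex.ofReal_pow]; rfl

theorem ketBra_apply_self_of_norm_eq_one (hx : ‖x‖ = 1) : ketBra x x = x := by
  rw [ketBra_apply_self, hx, one_pow, Complex.ofReal_one, one_smul]

theorem ketBra_apply_of_inner_eq_zero (h : ⟪x, w⟫_ℂ = 0) : ketBra x w = 0 := by
  rw [ketBra_apply, h, zero_smul]

theorem sum_smul_ketBra_apply_eq_zero {ι : Type*} [Fintype ι] {s : ι → ℝ} {x : ι → H}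
    (h : ∀ i, ⟪x i, w⟫_ℂ = 0) : (∑ i, s i • ketBra (x i) : Bₛ(H)) w = 0 := by
  rw [AddSubgroup.val_finsetSum, sum_apply]
  exact Finset.sum_eq_zero fun i _ => by
    rw [coe_smul_apply, ketBra_apply_of_inner_eq_zero (h i), smul_zero]

theorem commC_ketBra_of_apply_eq {l : ℂ} (h : A x = l • x) : CommC A (ketBra x) := by
  obtain ⟨r, hr⟩ := exists_real_apply_eq_smul h
  refine commC_of_apply_comm fun z => ?_
  rw [ketBra_apply, ketBra_apply, map_smul, ← inner_apply_left, hr, inner_smul_left,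
    Complex.conj_ofReal, smul_smul, mul_comm]

theorem CommC.exists_apply_eq_smul (h : CommC A (ketBra x)) : ∃ r : ℝ, A x = (r : ℂ) • x := by
  rcases eq_or_ne x 0 with rfl | hx
  · exact ⟨0, by rw [map_zero, smul_zero]⟩
  have hx' := h.apply_comm x
  rw [ketBra_apply, ketBra_apply, map_smul] at hx'
  refine exists_real_apply_eq_smul (l := (⟪x, x⟫_ℂ)⁻¹ * ⟪x, A x⟫_ℂ) ?_
  rw [mul_smul, ← hx', inv_smul_smul₀ (inner_self_ne_zero.2 hx)]

theorem CommQ.exists_apply_eq_smul (h : CommQ A (ketBra x)) :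
    ∃ r : ℝ, A x = (r : ℂ) • x := by
  rcases h with h | h
  · exact CommC.exists_apply_eq_smul h
  rcases eq_or_ne x 0 with rfl | hx
  · exact ⟨0, by rw [map_zero, smul_zero]⟩
  have hx' : ⟪x, x⟫_ℂ • A x + ⟪x, A x⟫_ℂ • x = 0 := by
    simpa [ketBra_apply] using congrArg (fun T : H →L[ℂ] H => T x) h
  refine exists_real_apply_eq_smul (l := (⟪x, x⟫_ℂ)⁻¹ * -⟪x, A x⟫_ℂ) ?_
  rw [mul_smul, neg_smul, ← eq_neg_of_add_eq_zero_left hx',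
    inv_smul_smul₀ (inner_self_ne_zero.2 hx)]

theorem exists_forall_mem_apply_eq_smul (W : Submodule ℂ H)
    (h : ∀ w ∈ W, CommC A (ketBra w)) : ∃ r : ℝ, ∀ w ∈ W, A w = (r : ℂ) • w := by
  obtain ⟨r, hr⟩ := exists_forall_apply_eq_smul (σ := .id ℂ) (c := ((↑) : ℝ → ℂ))
    (f := (A : H →L[ℂ] H).toLinearMap ∘ₗ W.subtype) (g := W.subtype) W.subtype_injective
    fun w => (h w w.2).exists_apply_eq_smul
  exact ⟨r, fun w hw => hr ⟨w, hw⟩⟩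

end Operators

section ModScalar

variable {A B C : Bₛ(H)}

/-- The class of a self-adjoint operator modulo the real multiples of the identity, up to which
commutation relations determine an operator. -/
def modScalar : Bₛ(H) →ₗ[ℝ] Bₛ(H) ⧸ (ℝ ∙ (1 : Bₛ(H))) := Submodule.mkQ _

theorem modScalar_eq_zero_iff : modScalar A = 0 ↔ ∃ k : ℝ, A = k • 1 := by
  rw [modScalar, Submodule.mkQ_apply, Submodule.Quotient.mk_eq_zero,
    Submodule.mem_span_singleton]
  exact exists_congr fun _ => eq_comm

theorem modScalar_eq_iff : modScalar A = modScalar B ↔ ∃ k : ℝ, A = B + k • 1 := by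
  rw [← sub_eq_zero, ← map_sub, modScalar_eq_zero_iff]
  exact exists_congr fun _ => sub_eq_iff_eq_add'

theorem modScalar_one : modScalar (1 : Bₛ(H)) = 0 :=
  modScalar_eq_zero_iff.2 ⟨1, (one_smul ℝ _).symm⟩

theorem eq_zero_of_modScalar_eq_zero (h : modScalar A = 0) {v : H} (hv : v ≠ 0) (hA : A v = 0) :
    A = 0 := by
  obtain ⟨k, rfl⟩ := modScalar_eq_zero_iff.1 h
  rw [coe_smul_apply, coe_one_apply, smul_eq_zero, Complex.ofReal_eq_zero] at hA
  rw [hA.resolve_right hv, zero_smul]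

theorem CommC.congr_left (h : CommC A C) (hAB : modScalar A = modScalar B) : CommC B C := by
  obtain ⟨k, rfl⟩ := modScalar_eq_iff.1 hAB.symm
  exact h.add_left ((commC_one_left C).smul_left k)

theorem modScalar_eq_zero_of_forall_apply (h : ∀ x, ∃ r : ℝ, A x = (r : ℂ) • x) :
    modScalar A = 0 := by
  obtain ⟨r, hr⟩ := exists_forall_mem_apply_eq_smul ⊤ fun x _ =>
    commC_ketBra_of_apply_eq (h x).choose_spec
  refine modScalar_eq_zero_iff.2 ⟨r, selfAdjoint_ext_apply fun x => ?_⟩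
  rw [hr x trivial, coe_smul_apply, coe_one_apply]

theorem commC_of_modScalar_eq_zero (h : modScalar A = 0) (C : Bₛ(H)) : CommC A C := by
  obtain ⟨k, rfl⟩ := modScalar_eq_zero_iff.1 h
  exact (commC_one_left C).smul_left k

theorem modScalar_eq_zero_iff_commC : modScalar A = 0 ↔ ∀ C, CommC A C :=
  ⟨commC_of_modScalar_eq_zero, fun h =>
    modScalar_eq_zero_of_forall_apply fun x => (h (ketBra x)).exists_apply_eq_smul⟩

theorem modScalar_eq_zero_iff_commQ : modScalar A = 0 ↔ ∀ C, CommQ A C :=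
  ⟨fun h C => Or.inl (commC_of_modScalar_eq_zero h C), fun h =>
    modScalar_eq_zero_of_forall_apply fun x => (h (ketBra x)).exists_apply_eq_smul⟩

/-- An operator anticommuting with `C` cannot do so after a shift by `1`, unless `C = 0`. -/
theorem commC_iff_forall_commQ : CommC A C ↔ ∀ k : ℝ, CommQ (A + k • 1) C := by
  refine ⟨fun h k => Or.inl (h.add_left ((commC_one_left C).smul_left k)), fun h => ?_⟩
  rcases h 0 with h0 | h0
  · exact CommC.congr_left h0 (by rw [zero_smul, add_zero])
  rcases h 1 with h1 | h1
  · exact CommC.congr_left h1 (by rw [one_smul, map_add, modScalar_one, add_zero])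
  have hC : (C : H →L[ℂ] H) = 0 := by
    simp only [zero_smul, add_zero, one_smul, AddSubgroup.coe_add, selfAdjoint.val_one] at h0 h1
    have h2 : (2 : ℂ) • (C : H →L[ℂ] H) = 0 := by
      linear_combination (norm := (simp only [add_mul, mul_add, one_mul, mul_one]; module))
        h1 - h0
    exact (smul_eq_zero.1 h2).resolve_left two_ne_zero
  change (A : H →L[ℂ] H) * C = C * A
  rw [hC, mul_zero, zero_mul]

end ModScalar

section Eigenspace

variable {C : Bₛ(H)} {a b : ℝ} {x y w : H}

/-- The eigenspace of a self-adjoint operator for a real number, as a complex subspace. -/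
def realEigenspace (C : Bₛ(H)) (a : ℝ) : Submodule ℂ H :=
  Module.End.eigenspace (C : H →L[ℂ] H).toLinearMap (a : ℂ)

theorem mem_realEigenspace : x ∈ realEigenspace C a ↔ C x = (a : ℂ) • x :=
  Module.End.mem_eigenspace_iff

theorem inner_eq_zero_of_mem_realEigenspace (hab : a ≠ b) (hx : x ∈ realEigenspace C a)
    (hy : y ∈ realEigenspace C b) : ⟪x, y⟫_ℂ = 0 := by
  have h := inner_apply_left C x y
  rw [mem_realEigenspace.1 hx, mem_realEigenspace.1 hy, inner_smul_left, inner_smul_right,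
    Complex.conj_ofReal] at h
  by_contra h0
  exact hab (by exact_mod_cast mul_right_cancel₀ h0 h)

/-- `C` is annihilated by the polynomial `(t - a) * (t - b)`; stated as: `C - b` maps into the
`a`-eigenspace. For `a ≠ b` these are the operators whose spectrum lies in `{a, b}`. -/
def IsQuadratic (C : Bₛ(H)) (a b : ℝ) : Prop := ∀ x, C x - (b : ℂ) • x ∈ realEigenspace C a

namespace IsQuadratic

theorem symm (h : IsQuadratic C a b) : IsQuadratic C b a := fun x => by
  have hx := mem_realEigenspace.1 (h x)
  rw [map_sub, map_smul] at hx
  rw [mem_realEigenspace, map_sub, map_smul]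
  linear_combination (norm := module) hx

theorem apply_eq_smul_or (h : IsQuadratic C a b) {d : ℂ} (hx : C x = d • x) :
    C x = (a : ℂ) • x ∨ C x = (b : ℂ) • x := by
  have h0 : (d - a) • (d - b) • x = 0 := by
    have h1 := mem_realEigenspace.1 (h x)
    rw [map_sub, map_smul, hx, map_smul, hx] at h1
    linear_combination (norm := module) h1
  rcases smul_eq_zero.1 h0 with h0 | h0
  · exact .inl (by rw [hx, sub_eq_zero.1 h0])
  · exact .inr (by rw [hx]; exact sub_eq_zero.1 (by rw [← sub_smul, h0]))

theorem modScalar_eq_zero (h : IsQuadratic C a b) (h0 : ∀ y ∈ realEigenspace C a, y = 0) :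
    modScalar C = 0 :=
  modScalar_eq_zero_of_forall_apply fun x => ⟨b, sub_eq_zero.1 (h0 _ (h x))⟩

theorem ne (h : IsQuadratic C a b) (hC : modScalar C ≠ 0) : a ≠ b := by
  rintro rfl
  refine hC (modScalar_eq_zero_of_forall_apply fun x => ⟨a, ?_⟩)
  have hx : ⟪C x - (a : ℂ) • x, C x - (a : ℂ) • x⟫_ℂ = 0 := by
    rw [inner_sub_right, ← inner_apply_left, mem_realEigenspace.1 (h x), inner_smul_left,
      inner_smul_right, Complex.conj_ofReal, sub_self]
  exact sub_eq_zero.1 (inner_self_eq_zero.1 hx)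

theorem exists_norm_eq_one (h : IsQuadratic C a b) (hC : modScalar C ≠ 0) :
    ∃ y ∈ realEigenspace C a, ‖y‖ = 1 := by
  by_contra! hne
  refine hC (h.modScalar_eq_zero fun y hy => by_contra fun hy0 => ?_)
  exact hne (((‖y‖⁻¹ : ℝ) : ℂ) • y) (Submodule.smul_mem _ _ hy) (by simp [norm_smul, hy0])

theorem eq_smul_ketBra_add (h : IsQuadratic C a b) (hy : y ∈ realEigenspace C a) (hy1 : ‖y‖ = 1)
    (h0 : ∀ w ∈ realEigenspace C a, ⟪y, w⟫_ℂ = 0 → w = 0) : C = (a - b) • ketBra y + b • 1 := by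
  rw [mem_realEigenspace] at hy
  refine eq_of_apply_eq_of_inner_eq_zero (x := y) ?_ fun w hw => ?_
  · rw [coe_add_apply, coe_smul_apply, coe_smul_apply, coe_one_apply,
      ketBra_apply_self_of_norm_eq_one hy1, hy, ← add_smul, Complex.ofReal_sub, sub_add_cancel]
  · rw [coe_add_apply, coe_smul_apply, coe_smul_apply, coe_one_apply,
      ketBra_apply_of_inner_eq_zero hw, smul_zero, zero_add]
    exact sub_eq_zero.1 (h0 _ (h w) (inner_sub_smul_eq_zero hy hw b))

end IsQuadratic

theorem isQuadratic_ketBra (x : H) : IsQuadratic (ketBra x) (‖x‖ ^ 2) 0 := fun z => by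
  rw [mem_realEigenspace, Complex.ofReal_zero, zero_smul, sub_zero, ketBra_apply x z, map_smul,
    ketBra_apply_self, smul_comm]

theorem isQuadratic_ketBra_add_ketBra (hx : ‖x‖ = 1) (hy : ‖y‖ = 1) (hxy : ⟪x, y⟫_ℂ = 0) :
    IsQuadratic (ketBra x + ketBra y) 1 0 := fun z => by
  have hyx : ⟪y, x⟫_ℂ = 0 := inner_eq_zero_symm.1 hxy
  simp only [mem_realEigenspace, coe_add_apply, ketBra_apply, inner_add_right, inner_smul_right,
    hxy, hyx, inner_self_eq_one_of_norm_eq_one (𝕜 := ℂ) hx,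
    inner_self_eq_one_of_norm_eq_one (𝕜 := ℂ) hy, Complex.ofReal_zero, Complex.ofReal_one,
    zero_smul, one_smul, sub_zero, mul_one, mul_zero, add_zero, zero_add]

theorem modScalar_ketBra_ne_zero (hdim : 3 ≤ Module.rank ℂ H) (hx : x ≠ 0) :
    modScalar (ketBra x) ≠ 0 := fun h => by
  obtain ⟨v, hv, hxv, -⟩ := exists_norm_eq_one_inner_eq_zero hdim x x
  have h0 := eq_zero_of_modScalar_eq_zero h (norm_ne_zero_iff.1 (hv ▸ one_ne_zero))
    (ketBra_apply_of_inner_eq_zero hxv)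
  have hxx : ketBra x x = 0 := by rw [h0, coe_zero_apply]
  rw [ketBra_apply, smul_eq_zero, inner_self_eq_zero, or_self] at hxx
  exact hx hxx

end Eigenspace

section Bicommutant

variable {C D E : Bₛ(H)} {S : Set Bₛ(H)} {a b : ℝ} {x y : H}

/-- The self-adjoint operators in the bicommutant of `S`, taken within the self-adjoint
operators. -/
def bicomm (S : Set Bₛ(H)) : Submodule ℝ Bₛ(H) where
  carrier := {D | ∀ X, (∀ C ∈ S, CommC C X) → CommC D X}
  add_mem' hA hB X hX := (hA X hX).add_left (hB X hX)
  zero_mem' X _ := Commute.zero_left (X : H →L[ℂ] H)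
  smul_mem' t _ hA X hX := (hA X hX).smul_left t

theorem mem_bicomm : D ∈ bicomm S ↔ ∀ X, (∀ C ∈ S, CommC C X) → CommC D X := Iff.rfl

theorem subset_bicomm : S ⊆ bicomm S := fun C hC _ hX => hX C hC

theorem bicomm_mono {T : Set Bₛ(H)} (h : S ⊆ T) : bicomm S ≤ bicomm T :=
  fun _ hD X hX => hD X fun C hC => hX C (h hC)

theorem one_mem_bicomm : 1 ∈ bicomm S := fun X _ => commC_one_left X

theorem mem_bicomm_empty : D ∈ bicomm ∅ ↔ modScalar D = 0 := by
  simp only [mem_bicomm, modScalar_eq_zero_iff_commC, Set.mem_empty_iff_false, IsEmpty.forall_iff,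
    implies_true, forall_true_left]

theorem mem_bicomm_singleton : D ∈ bicomm {C} ↔ ∀ X, CommC C X → CommC D X := by
  simp only [mem_bicomm, Set.mem_singleton_iff, forall_eq]

theorem mem_bicomm_pair : E ∈ bicomm {C, D} ↔ ∀ X, CommC C X → CommC D X → CommC E X := by
  simp only [mem_bicomm, Set.mem_insert_iff, Set.mem_singleton_iff, forall_eq_or_imp, forall_eq,
    and_imp]

theorem exists_smul_on_realEigenspace (hD : D ∈ bicomm {C}) (a : ℝ) :
    ∃ r : ℝ, ∀ w ∈ realEigenspace C a, D w = (r : ℂ) • w :=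
  exists_forall_mem_apply_eq_smul _ fun _ hw =>
    mem_bicomm_singleton.1 hD _ (commC_ketBra_of_apply_eq (mem_realEigenspace.1 hw))

theorem IsQuadratic.exists_eq_smul_add (h : IsQuadratic C a b) (hab : a ≠ b)
    (hD : D ∈ bicomm {C}) : ∃ s t : ℝ, D = s • C + t • 1 := by
  obtain ⟨l, hl⟩ := exists_smul_on_realEigenspace hD a
  obtain ⟨m, hm⟩ := exists_smul_on_realEigenspace hD b
  have key : (a - b) • D = (l - m) • C + (m * a - l * b) • 1 := by
    refine selfAdjoint_ext_apply fun v => ?_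
    have h1 := hl _ (h v)
    have h2 := hm _ (h.symm v)
    rw [map_sub, map_smul] at h1 h2
    simp only [coe_add_apply, coe_smul_apply, coe_one_apply]
    push_cast
    linear_combination (norm := module) h1 - h2
  refine ⟨(a - b)⁻¹ * (l - m), (a - b)⁻¹ * (m * a - l * b), ?_⟩
  rw [mul_smul, mul_smul, ← smul_add, ← key, inv_smul_smul₀ (sub_ne_zero.2 hab)]

/-- The bicommutant of `C` is minimal among those of non-scalar operators. -/
def IsMinimal (C : Bₛ(H)) : Prop := ∀ D ∈ bicomm {C}, D ∉ bicomm ∅ → C ∈ bicomm {D}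

theorem IsQuadratic.isMinimal (h : IsQuadratic C a b) : IsMinimal C := fun D hCD hD => by
  by_cases hC : modScalar C = 0
  · exact bicomm_mono (Set.empty_subset _) (mem_bicomm_empty.2 hC)
  obtain ⟨s, t, hst⟩ := h.exists_eq_smul_add (h.ne hC) hCD
  have hs : s ≠ 0 := by
    rintro rfl
    rw [hst, zero_smul, zero_add] at hD
    exact hD (Submodule.smul_mem _ t one_mem_bicomm)
  rw [← Submodule.smul_mem_iff _ hs, eq_sub_of_add_eq hst.symm]
  exact sub_mem (subset_bicomm rfl) (Submodule.smul_mem _ t one_mem_bicomm)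

section Spectrum

variable {f g : ℝ → ℝ}

local notation "σᵣ(" C ")" => spectrum ℝ (C : H →L[ℂ] H)

theorem IsMinimal.exists_forall_eq_of_mul_eq_zero (hC : IsMinimal C) (hf : Continuous f)
    (hg : Continuous g) (hfg : ∀ t, f t * g t = 0) {p r : ℝ} (hp : p ∈ σᵣ(C)) (hr : r ∈ σᵣ(C))
    (hpr : f p ≠ f r) : ∃ l, ∀ t ∈ σᵣ(C), g t ≠ 0 → t = l := by
  have hsa : IsSelfAdjoint (C : H →L[ℂ] H) := C.2
  let D : Bₛ(H) := ⟨cfc f (C : H →L[ℂ] H), cfc_predicate f _⟩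
  have hDC : D ∈ bicomm {C} := mem_bicomm_singleton.2 fun X hX =>
    hsa.commute_cfc (show Commute (C : H →L[ℂ] H) X from hX) f
  have hD : D ∉ bicomm ∅ := fun h => by
    obtain ⟨k, hk⟩ := modScalar_eq_zero_iff.1 (mem_bicomm_empty.1 h)
    have hfk : cfc f (C : H →L[ℂ] H) = cfc (fun _ => k) (C : H →L[ℂ] H) := by
      rw [cfc_const k _ hsa, Algebra.algebraMap_eq_smul_one]
      exact congrArg Subtype.val hk
    have heq := (cfc_eq_cfc_iff_eqOn hsa hf.continuousOn continuousOn_const).1 hfk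
    exact hpr ((heq hp).trans (heq hr).symm)
  obtain ⟨l, hl⟩ := exists_smul_on_realEigenspace (hC D hDC hD) 0
  have hfg0 : cfc f (C : H →L[ℂ] H) * cfc g (C : H →L[ℂ] H) = 0 := by
    rw [← cfc_mul f g _ hf.continuousOn hg.continuousOn, ← cfc_zero ℝ (C : H →L[ℂ] H)]
    exact cfc_congr fun t _ => hfg t
  -- The range of `g(C)` lies in the kernel of `D = f(C)`, where `C` acts as the scalar `l`.
  have hlg : cfc (fun t => (t - l) * g t) (C : H →L[ℂ] H) = cfc (0 : ℝ → ℝ) (C : H →L[ℂ] H) := by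
    rw [cfc_zero, cfc_mul (fun t => t - l) g _ (by fun_prop) hg.continuousOn,
      cfc_sub (fun t => t) (fun _ => l) _ (by fun_prop) (by fun_prop), cfc_id' ℝ _ hsa,
      cfc_const l _ hsa, Algebra.algebraMap_eq_smul_one]
    ext v
    have hv := hl (cfc g (C : H →L[ℂ] H) v) <| mem_realEigenspace.2 <| by
      simpa using congrArg (fun T : H →L[ℂ] H => T v) hfg0
    simp [hv]
  have heq := (cfc_eq_cfc_iff_eqOn hsa (by fun_prop) continuousOn_const).1 hlg
  exact ⟨l, fun t ht hgt => sub_eq_zero.1 ((mul_eq_zero.1 (heq ht)).resolve_right hgt)⟩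

theorem IsMinimal.not_lt_lt (hC : IsMinimal C) {p q r : ℝ} (hp : p ∈ σᵣ(C)) (hq : q ∈ σᵣ(C))
    (hr : r ∈ σᵣ(C)) (hpq : p < q) : ¬ q < r := fun hqr => by
  obtain ⟨m, hqm, hmr⟩ := exists_between hqr
  have hmul (t : ℝ) : max (t - m) 0 * max (m - t) 0 = 0 := by
    rcases le_total t m with h | h
    · rw [max_eq_right (sub_nonpos.2 h), zero_mul]
    · rw [max_eq_right (sub_nonpos.2 h), mul_zero]
  have hpr : max (p - m) 0 ≠ max (r - m) 0 := by
    rw [max_eq_right (by linarith), max_eq_left (by linarith)]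
    exact (sub_pos.2 hmr).ne
  obtain ⟨l, hl⟩ := hC.exists_forall_eq_of_mul_eq_zero (f := fun t => max (t - m) 0)
    (g := fun t => max (m - t) 0) (by fun_prop) (by fun_prop) hmul hp hr hpr
  have hl' {t : ℝ} (ht : t ∈ σᵣ(C)) (htm : t < m) : t = l :=
    hl t ht (lt_max_of_lt_left (sub_pos.2 htm)).ne'
  exact hpq.ne ((hl' hp (hpq.trans hqm)).trans (hl' hq hqm).symm)

theorem isQuadratic_of_spectrum_subset (h : ∀ t ∈ σᵣ(C), t = a ∨ t = b) : IsQuadratic C a b := by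
  have hsa : IsSelfAdjoint (C : H →L[ℂ] H) := C.2
  have hz : cfc (fun t => (t - a) * (t - b)) (C : H →L[ℂ] H) = 0 := by
    rw [← cfc_zero ℝ (C : H →L[ℂ] H)]
    refine cfc_congr fun t ht => mul_eq_zero.2 ?_
    exact (h t ht).imp sub_eq_zero.2 sub_eq_zero.2
  rw [cfc_mul (fun t => t - a) (fun t => t - b) _ (by fun_prop) (by fun_prop),
    cfc_sub (fun t => t) (fun _ => a) _ (by fun_prop) (by fun_prop),
    cfc_sub (fun t => t) (fun _ => b) _ (by fun_prop) (by fun_prop), cfc_id' ℝ _ hsa,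
    cfc_const a _ hsa, cfc_const b _ hsa] at hz
  refine fun x => mem_realEigenspace.2 (sub_eq_zero.1 ?_)
  simpa [Algebra.algebraMap_eq_smul_one] using congrArg (fun T : H →L[ℂ] H => T x) hz

theorem IsMinimal.exists_isQuadratic (hC : IsMinimal C) : ∃ a b, IsQuadratic C a b := by
  rcases (spectrum ℝ (C : H →L[ℂ] H)).eq_empty_or_nonempty with hne | hne
  · exact ⟨0, 0, isQuadratic_of_spectrum_subset (by simp [hne])⟩
  have hcpt : IsCompact σᵣ(C) := spectrum.isCompact _
  obtain ⟨a, ha, hmin⟩ := hcpt.exists_isLeast hne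
  obtain ⟨b, hb, hmax⟩ := hcpt.exists_isGreatest hne
  refine ⟨a, b, isQuadratic_of_spectrum_subset fun t ht => ?_⟩
  by_contra! hab
  exact hC.not_lt_lt ha ht hb ((hmin ht).lt_of_ne hab.1.symm) ((hmax ht).lt_of_ne hab.2)

end Spectrum

/-- A property of `s • ketBra x + t • 1` expressed through commutation: the bicommutants of `C`
and of any minimal operator commuting with it satisfy the exchange property. -/
structure RankOneLike (C : Bₛ(H)) : Prop where
  notMem : C ∉ bicomm ∅
  isMinimal : IsMinimal C
  exchange : ∀ D, CommC D C → IsMinimal D → ∀ E ∈ bicomm {C, D}, E ∉ bicomm {C} →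
    D ∈ bicomm {C, E}

theorem IsQuadratic.exists_smul_eq_of_mem_bicomm_pair (hD : IsQuadratic D a b) (hab : a ≠ b)
    (hx : x ≠ 0) (hDx : D x = (a : ℂ) • x) (hE : E ∈ bicomm {ketBra x, D}) :
    ∃ r s t : ℝ, (a - b) • E = r • D + s • ketBra x + t • 1 := by
  have hE' {w : H} {c : ℂ} {d : ℝ} (hc : ketBra x w = c • w) (hd : w ∈ realEigenspace D d) :
      CommC E (ketBra w) :=
    mem_bicomm_pair.1 hE _ (commC_ketBra_of_apply_eq hc)
      (commC_ketBra_of_apply_eq (mem_realEigenspace.1 hd))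
  have hDx' : x ∈ realEigenspace D a := mem_realEigenspace.2 hDx
  obtain ⟨e, he⟩ := (hE' (ketBra_apply_self x) hDx').exists_apply_eq_smul
  obtain ⟨l, hl⟩ := exists_forall_mem_apply_eq_smul (A := E) (realEigenspace D a ⊓ (ℂ ∙ x)ᗮ)
    fun w hw => by
      refine hE' (c := 0) ?_ hw.1
      rw [ketBra_apply_of_inner_eq_zero (Submodule.mem_orthogonal_singleton_iff_inner_right.1 hw.2),
        zero_smul]
  obtain ⟨m, hm⟩ := exists_forall_mem_apply_eq_smul (A := E) (realEigenspace D b) fun w hw => by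
    refine hE' (c := 0) ?_ hw
    rw [ketBra_apply_of_inner_eq_zero (inner_eq_zero_of_mem_realEigenspace hab hDx' hw), zero_smul]
  refine ⟨l - m, (a - b) * (e - l) / ‖x‖ ^ 2, m * a - l * b,
    eq_of_apply_eq_of_inner_eq_zero (x := x) ?_ fun w hw => ?_⟩
  · have hx2 : (‖x‖ : ℂ) ≠ 0 := by exact_mod_cast norm_ne_zero_iff.2 hx
    simp only [coe_add_apply, coe_smul_apply, coe_one_apply, he, hDx, ketBra_apply_self]
    push_cast
    match_scalars
    field_simp
    ring
  · have h1 := hl _ ⟨hD w, Submodule.mem_orthogonal_singleton_iff_inner_right.2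
      (inner_sub_smul_eq_zero hDx hw b)⟩
    have h2 := hm _ (hD.symm w)
    rw [map_sub, map_smul] at h1 h2
    simp only [coe_add_apply, coe_smul_apply, coe_one_apply, ketBra_apply_of_inner_eq_zero hw]
    push_cast
    linear_combination (norm := module) h1 - h2

theorem mem_bicomm_pair_of_smul_eq {q r s t : ℝ} (hq : q ≠ 0)
    (h : q • E = r • D + s • C + t • 1) (hE : E ∉ bicomm {C}) : D ∈ bicomm {C, E} := by
  have hlin {T : Set Bₛ(H)} (hC : C ∈ T) : s • C + t • 1 ∈ bicomm T :=
    add_mem (Submodule.smul_mem _ s (subset_bicomm hC)) (Submodule.smul_mem _ t one_mem_bicomm)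
  rw [add_assoc] at h
  have hr : r ≠ 0 := by
    rintro rfl
    rw [← Submodule.smul_mem_iff _ hq, h, zero_smul, zero_add] at hE
    exact hE (hlin rfl)
  rw [← Submodule.smul_mem_iff _ hr, eq_sub_of_add_eq h.symm]
  exact sub_mem (Submodule.smul_mem _ q (subset_bicomm (Or.inr rfl))) (hlin (Or.inl rfl))

theorem rankOneLike_ketBra (hdim : 3 ≤ Module.rank ℂ H) (hx : x ≠ 0) :
    RankOneLike (ketBra x) := by
  refine ⟨fun h => modScalar_ketBra_ne_zero hdim hx (mem_bicomm_empty.1 h),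
    (isQuadratic_ketBra x).isMinimal, fun D hDx hD E hE hE' => ?_⟩
  by_cases hD0 : modScalar D = 0
  · exact bicomm_mono (Set.empty_subset _) (mem_bicomm_empty.2 hD0)
  obtain ⟨a, b, hQ⟩ := hD.exists_isQuadratic
  obtain ⟨d, hd⟩ := hDx.exists_apply_eq_smul
  obtain ⟨a, b, hQ, hda⟩ : ∃ a b : ℝ, IsQuadratic D a b ∧ D x = (a : ℂ) • x :=
    (hQ.apply_eq_smul_or hd).elim (fun h => ⟨a, b, hQ, h⟩) fun h => ⟨b, a, hQ.symm, h⟩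
  have hab := hQ.ne hD0
  obtain ⟨r, s, t, h⟩ := hQ.exists_smul_eq_of_mem_bicomm_pair hab hx hda hE
  exact mem_bicomm_pair_of_smul_eq (sub_ne_zero.2 hab) h hE'

theorem ketBra_mem_bicomm_pair (hab : a ≠ b) {z : H} (hy : y ∈ realEigenspace C a)
    (hz : z ∈ realEigenspace C b) (hy1 : ‖y‖ = 1) : ketBra y ∈ bicomm {C, ketBra y + ketBra z} := by
  refine mem_bicomm_pair.2 fun X hCX hX => ?_
  have hzy := inner_eq_zero_of_mem_realEigenspace hab.symm hz hy
  have hXy : X y ∈ realEigenspace C a := by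
    rw [mem_realEigenspace, hCX.apply_comm, mem_realEigenspace.1 hy, map_smul]
  have hXyz := hX.apply_comm y
  rw [coe_add_apply, coe_add_apply, ketBra_apply_self_of_norm_eq_one hy1,
    ketBra_apply_of_inner_eq_zero hzy, add_zero, ketBra_apply_of_inner_eq_zero
      (inner_eq_zero_of_mem_realEigenspace hab.symm hz hXy), add_zero, ketBra_apply] at hXyz
  exact (commC_ketBra_of_apply_eq hXyz.symm).symm

theorem not_commC_ketBra_add (hy : ‖y‖ = 1) {w : H} (hw : w ≠ 0) (hyw : ⟪y, w⟫_ℂ = 0)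
    (hCy : C y = y) (hCw : C w = 0) : ¬ CommC C (ketBra (y + w)) := fun h => by
  obtain ⟨r, hr⟩ := h.exists_apply_eq_smul
  rw [map_add, hCy, hCw, add_zero] at hr
  have hr1 := congrArg (fun v => ⟪y, v⟫_ℂ) hr
  simp only [inner_smul_right, inner_add_right, hyw, add_zero,
    inner_self_eq_one_of_norm_eq_one (𝕜 := ℂ) hy, mul_one] at hr1
  rw [← hr1, one_smul, left_eq_add] at hr
  exact hw hr

theorem RankOneLike.forall_eq_zero_or (hC : RankOneLike C) (hab : a ≠ b) {z : H}
    (hy : y ∈ realEigenspace C a) (hy1 : ‖y‖ = 1) (hz : z ∈ realEigenspace C b) (hz1 : ‖z‖ = 1) :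
    (∀ w ∈ realEigenspace C a, ⟪y, w⟫_ℂ = 0 → w = 0) ∨
      ∀ w ∈ realEigenspace C b, ⟪z, w⟫_ℂ = 0 → w = 0 := by
  by_contra! h
  obtain ⟨⟨y', hy', hyy', hy0⟩, z', hz', hzz', hz0⟩ := h
  have horth {u v : H} (hu : u ∈ realEigenspace C a) (hv : v ∈ realEigenspace C b) : ⟪u, v⟫_ℂ = 0 :=
    inner_eq_zero_of_mem_realEigenspace hab hu hv
  have hcomm {u : H} {c : ℝ} (hu : u ∈ realEigenspace C c) : CommC C (ketBra u) :=
    commC_ketBra_of_apply_eq (mem_realEigenspace.1 hu)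
  have hmem : ketBra y + ketBra z ∈ bicomm {C, ketBra y} :=
    hC.exchange _ ((hcomm hy).symm.add_left (hcomm hz).symm)
      (isQuadratic_ketBra_add_ketBra hy1 hz1 (horth hy hz)).isMinimal _
      (ketBra_mem_bicomm_pair hab hy hz hy1) fun h =>
        not_commC_ketBra_add hy1 hy0 hyy' (ketBra_apply_self_of_norm_eq_one hy1)
          (ketBra_apply_of_inner_eq_zero hyy')
          (mem_bicomm_singleton.1 h _ (hcomm (add_mem hy hy')))
  refine not_commC_ketBra_add hz1 hz0 hzz' ?_ ?_ <| mem_bicomm_pair.1 hmem _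
    (hcomm (add_mem hz hz')) (commC_ketBra_of_apply_eq (l := 0) ?_)
  · rw [coe_add_apply, ketBra_apply_of_inner_eq_zero (horth hy hz), zero_add,
      ketBra_apply_self_of_norm_eq_one hz1]
  · rw [coe_add_apply, ketBra_apply_of_inner_eq_zero (horth hy hz'),
      ketBra_apply_of_inner_eq_zero hzz', add_zero]
  · rw [ketBra_apply_of_inner_eq_zero (horth hy (add_mem hz hz')), zero_smul]

theorem RankOneLike.exists_eq_smul_ketBra_add (hC : RankOneLike C) :
    ∃ x : H, ‖x‖ = 1 ∧ ∃ s t : ℝ, s ≠ 0 ∧ C = s • ketBra x + t • 1 := by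
  have hC0 : modScalar C ≠ 0 := fun h => hC.notMem (mem_bicomm_empty.2 h)
  obtain ⟨a, b, hQ⟩ := hC.isMinimal.exists_isQuadratic
  have hab := hQ.ne hC0
  obtain ⟨y, hy, hy1⟩ := hQ.exists_norm_eq_one hC0
  obtain ⟨z, hz, hz1⟩ := hQ.symm.exists_norm_eq_one hC0
  rcases hC.forall_eq_zero_or hab hy hy1 hz hz1 with h | h
  · exact ⟨y, hy1, _, _, sub_ne_zero.2 hab, hQ.eq_smul_ketBra_add hy hy1 h⟩
  · exact ⟨z, hz1, _, _, sub_ne_zero.2 hab.symm, hQ.symm.eq_smul_ketBra_add hz hz1 h⟩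

end Bicommutant

section Additive

/-- The mixed second difference of `f` in the directions `s` and `t` vanishes everywhere. -/
def HasZeroSecondDiff {M G : Type*} [Add M] [Add G] (f : M → G) (s t : M) : Prop :=
  ∀ a, f (a + s + t) + f a = f (a + s) + f (a + t)

theorem HasZeroSecondDiff.add_left {M G : Type*} [AddSemigroup M] [AddCommGroup G] {f : M → G}
    {s s' t : M} (h : HasZeroSecondDiff f s t) (h' : HasZeroSecondDiff f s' t) :
    HasZeroSecondDiff f (s + s') t := fun a => by
  have ha' := h' (a + s)
  rw [add_assoc a s s'] at ha'
  linear_combination (norm := abel) ha' + h a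

theorem hasZeroSecondDiff_zero_left {M G : Type*} [AddZeroClass M] [AddCommMagma G] (f : M → G)
    (t : M) : HasZeroSecondDiff f 0 t := fun a => by
  rw [add_zero, add_comm]

theorem map_sum_of_hasZeroSecondDiff {M G ι : Type*} [AddCommMonoid M] [AddCommGroup G]
    {f : M → G} (h0 : f 0 = 0) {u : ι → M} (h : ∀ i j, HasZeroSecondDiff f (u i) (u j))
    (s : Finset ι) : f (∑ i ∈ s, u i) = ∑ i ∈ s, f (u i) := by
  classical
  induction s using Finset.induction_on with
  | empty => rw [Finset.sum_empty, Finset.sum_empty, h0]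
  | insert j s hj ih =>
    have hs : HasZeroSecondDiff f (∑ i ∈ s, u i) (u j) :=
      Finset.sum_induction _ (HasZeroSecondDiff f · (u j)) (fun _ _ => .add_left)
        (hasZeroSecondDiff_zero_left f _) fun i _ => h i j
    have hs0 := hs 0
    rw [zero_add, zero_add, h0, add_zero] at hs0
    rw [Finset.sum_insert hj, Finset.sum_insert hj, add_comm, hs0, ih, add_comm]

theorem map_eq_mul_map_one_of_nonneg (f : ℝ →+ ℝ) {δ : ℝ} (hδ : 0 < δ)
    (hf : ∀ s, 0 ≤ s → s ≤ δ → 0 ≤ f s) (t : ℝ) : f t = t * f 1 := by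
  have hnonneg (s : ℝ) (hs : 0 ≤ s) : 0 ≤ f s := by
    obtain ⟨n, hn⟩ := exists_nat_ge (s / δ)
    have hn1 : s / (n + 1) ≤ δ := by
      rw [div_le_iff₀ hδ] at hn
      rw [div_le_iff₀ (by positivity)]
      linarith
    have hmap : f s = (n + 1 : ℕ) • f (s / (n + 1)) := by
      rw [← map_nsmul, nsmul_eq_mul, Nat.cast_succ, mul_div_cancel₀ _ (by positivity)]
    rw [hmap]
    exact nsmul_nonneg (hf _ (by positivity) hn1) _
  have hmono : Monotone f := fun a b hab => by
    rw [← sub_nonneg, ← map_sub]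
    exact hnonneg _ (sub_nonneg.2 hab)
  have hcont := MeasureTheory.Measure.AddMonoidHom.continuous_of_measurable f hmono.measurable
  simpa using map_real_smul f hcont t 1

end Additive

section KetBraMap

variable {θ : H → H} {g : H → ℝ → ℝ} {x y e v : H}

theorem ketBra_add_add_ketBra_sub (x y : H) :
    ketBra (x + y) + ketBra (x - y) = (2 : ℝ) • ketBra x + (2 : ℝ) • ketBra y := by
  refine selfAdjoint_ext_apply fun z => ?_
  simp only [coe_add_apply, coe_smul_apply, ketBra_apply, inner_add_left, inner_sub_left]
  push_cast
  module

theorem inner_sum_smul_ketBra_apply {ι : Type*} (S : Finset ι) (t : ι → ℝ) (x : ι → H) (u w : H) :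
    ⟪u, (∑ i ∈ S, t i • ketBra (x i) : Bₛ(H)) w⟫_ℂ =
      ∑ i ∈ S, (t i : ℂ) * (⟪x i, w⟫_ℂ * ⟪u, x i⟫_ℂ) := by
  rw [AddSubgroup.val_finsetSum, sum_apply, inner_sum]
  refine Finset.sum_congr rfl fun i _ => ?_
  rw [coe_smul_apply, ketBra_apply, inner_smul_right, inner_smul_right]

theorem exists_ketBra_add_ketBra_eq (he : ‖e‖ = 1) (hv : ‖v‖ = 1) (hev : ⟪e, v⟫_ℂ = 0) {s : ℝ}
    (hs0 : 0 ≤ s) (hs2 : s ≤ 2) :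
    ∃ y ∈ Submodule.span ℂ {e, v}, ∃ z ∈ Submodule.span ℂ {e, v}, ‖y‖ = 1 ∧ ‖z‖ = 1 ∧
      ketBra y + ketBra z = s • ketBra e + (2 - s) • ketBra v := by
  let a : ℂ := (√(s / 2) : ℝ)
  let b : ℂ := (√(1 - s / 2) : ℝ)
  have ha : ‖a‖ ^ 2 = s / 2 := by
    rw [Complex.norm_real, Real.norm_eq_abs, sq_abs, Real.sq_sqrt (by linarith)]
  have hb : ‖b‖ ^ 2 = 1 - s / 2 := by
    rw [Complex.norm_real, Real.norm_eq_abs, sq_abs, Real.sq_sqrt (by linarith)]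
  have hab : ‖a • e‖ * ‖a • e‖ + ‖b • v‖ * ‖b • v‖ = 1 := by
    rw [norm_smul, norm_smul, he, hv, mul_one, mul_one, ← sq, ← sq, ha, hb, add_sub_cancel]
  have horth : ⟪a • e, b • v⟫_ℂ = 0 := by
    rw [inner_smul_left, inner_smul_right, hev, mul_zero, mul_zero]
  have hmem : a • e ∈ Submodule.span ℂ {e, v} :=
    Submodule.smul_mem _ a (Submodule.subset_span (Or.inl rfl))
  have hmem' : b • v ∈ Submodule.span ℂ {e, v} :=
    Submodule.smul_mem _ b (Submodule.subset_span (Or.inr rfl))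
  refine ⟨a • e + b • v, add_mem hmem hmem', a • e - b • v, sub_mem hmem hmem', ?_, ?_, ?_⟩
  · rwa [← pow_eq_one_iff_of_nonneg (norm_nonneg _) two_ne_zero, sq,
      norm_add_sq_eq_norm_sq_add_norm_sq_of_inner_eq_zero _ _ horth]
  · rw [← pow_eq_one_iff_of_nonneg (norm_nonneg _) two_ne_zero, sq, sub_eq_add_neg,
      norm_add_sq_eq_norm_sq_add_norm_sq_of_inner_eq_zero (𝕜 := ℂ) _ _
        (by rw [inner_neg_right, horth, neg_zero]), norm_neg, hab]
  · rw [ketBra_add_add_ketBra_sub, ketBra_smul, ketBra_smul, ha, hb]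
    module

theorem ketBra_smul_add_smul (a : ℂ) (s : ℝ) (x y : H) :
    ketBra (a • x + (s : ℂ) • y) =
      s • ketBra (a • x + y) + ((1 - s) * ‖a‖ ^ 2) • ketBra x + (s ^ 2 - s) • ketBra y := by
  rw [mul_smul, ← ketBra_smul]
  refine selfAdjoint_ext_apply fun z => ?_
  simp only [coe_add_apply, coe_smul_apply, ketBra_apply, inner_add_left, inner_smul_left,
    Complex.conj_ofReal]
  push_cast
  module

theorem eq_of_forall_nonneg_affine {a b : ℝ} (h : ∀ s, 0 ≤ s * a + (1 - s) * b) : a = b := by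
  by_contra hab
  have hs := h (-(b + 1) / (a - b))
  have heq : -(b + 1) / (a - b) * a + (1 - -(b + 1) / (a - b)) * b = -1 := by
    field_simp [sub_ne_zero.2 hab]
    ring
  linarith

/-- The pair `(θ, g)` describes an assignment `t • ketBra x ↦ g x t • ketBra (θ x)` which respects
orthogonality and the linear relations between operators living on a common plane. -/
structure IsKetBraMap (θ : H → H) (g : H → ℝ → ℝ) : Prop where
  norm_map : ∀ x, ‖θ x‖ = ‖x‖
  inner_eq_zero_iff : ∀ x y, ⟪θ x, θ y⟫_ℂ = 0 ↔ ⟪x, y⟫_ℂ = 0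
  coeff_one_ne_zero : ∀ x, x ≠ 0 → g x 1 ≠ 0
  sum_eq : ∀ (p q : H) {m n : ℕ} (t : Fin m → ℝ) (x : Fin m → H) (s : Fin n → ℝ) (y : Fin n → H),
    (∀ i, x i ∈ Submodule.span ℂ {p, q}) → (∀ j, y j ∈ Submodule.span ℂ {p, q}) →
    ∑ i, t i • ketBra (x i) = ∑ j, s j • ketBra (y j) →
    ∑ i, g (x i) (t i) • ketBra (θ (x i)) = ∑ j, g (y j) (s j) • ketBra (θ (y j))

namespace IsKetBraMap

theorem ne_zero (h : IsKetBraMap θ g) (hx : x ≠ 0) : θ x ≠ 0 := by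
  rwa [← norm_ne_zero_iff, h.norm_map, norm_ne_zero_iff]

variable {p q : H} {m n : ℕ} {t : Fin m → ℝ} {x' : Fin m → H} {s : Fin n → ℝ} {y' : Fin n → H}

theorem sum_inner_eq (h : IsKetBraMap θ g) (hx : ∀ i, x' i ∈ Submodule.span ℂ {p, q})
    (hy : ∀ j, y' j ∈ Submodule.span ℂ {p, q})
    (hxy : ∑ i, t i • ketBra (x' i) = ∑ j, s j • ketBra (y' j)) (u w : H) :
    ∑ i, (g (x' i) (t i) : ℂ) * (⟪θ (x' i), w⟫_ℂ * ⟪u, θ (x' i)⟫_ℂ) =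
      ∑ j, (g (y' j) (s j) : ℂ) * (⟪θ (y' j), w⟫_ℂ * ⟪u, θ (y' j)⟫_ℂ) := by
  rw [← inner_sum_smul_ketBra_apply, ← inner_sum_smul_ketBra_apply,
    h.sum_eq p q t x' s y' hx hy hxy]

theorem sum_norm_inner_sq_eq (h : IsKetBraMap θ g) (hx : ∀ i, x' i ∈ Submodule.span ℂ {p, q})
    (hy : ∀ j, y' j ∈ Submodule.span ℂ {p, q})
    (hxy : ∑ i, t i • ketBra (x' i) = ∑ j, s j • ketBra (y' j)) (w : H) :
    ∑ i, g (x' i) (t i) * ‖⟪θ (x' i), w⟫_ℂ‖ ^ 2 = ∑ j, g (y' j) (s j) * ‖⟪θ (y' j), w⟫_ℂ‖ ^ 2 := by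
  have key := h.sum_inner_eq hx hy hxy w w
  have hsq (z : H) : ⟪z, w⟫_ℂ * ⟪w, z⟫_ℂ = ((‖⟪z, w⟫_ℂ‖ ^ 2 : ℝ) : ℂ) := by
    rw [← inner_conj_symm w z, Complex.mul_conj', Complex.ofReal_pow]
  simp only [hsq] at key
  exact_mod_cast key

theorem coeff_add (h : IsKetBraMap θ g) (hx : x ≠ 0) (s t : ℝ) : g x (s + t) = g x s + g x t := by
  have key := h.sum_norm_inner_sq_eq (p := x) (q := x) (t := ![s + t]) (x' := ![x])
    (s := ![s, t]) (y' := ![x, x]) (by simp) (by simp)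
    (by simp [Fin.sum_univ_two, add_smul]) (θ x)
  have hne : ‖⟪θ x, θ x⟫_ℂ‖ ^ 2 ≠ 0 := by simp [h.ne_zero hx]
  simp only [Fin.sum_univ_one, Fin.sum_univ_two, Matrix.cons_val_zero, Matrix.cons_val_one,
    ← add_mul] at key
  exact mul_right_cancel₀ hne key

theorem two_mul_coeff_add (h : IsKetBraMap θ g) (he : ‖e‖ = 1) (hv : ‖v‖ = 1) (hev : ⟪e, v⟫_ℂ = 0)
    (t : ℝ) : 2 * g (e + v) t = g e (2 * t) := by
  have hve : ⟪v, e⟫_ℂ = 0 := inner_eq_zero_symm.1 hev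
  have hself {x : H} (hx : ‖x‖ = 1) : ⟪x, x⟫_ℂ = 1 := inner_self_eq_one_of_norm_eq_one hx
  have he' : ‖θ e‖ = 1 := (h.norm_map e).trans he
  have hadd : ⟪θ (e + v), θ (e + v)⟫_ℂ = 2 := by
    rw [inner_self_eq_norm_sq_to_K, h.norm_map, ← inner_self_eq_norm_sq_to_K]
    simp only [inner_add_left, inner_add_right, hself he, hself hv, hev, hve]
    norm_num
  have hsub : ⟪θ (e - v), θ (e + v)⟫_ℂ = 0 := (h.inner_eq_zero_iff _ _).2 <| by
    simp only [inner_sub_left, inner_add_right, hself he, hself hv, hev, hve]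
    norm_num
  have hne : ⟪θ e, θ (e + v)⟫_ℂ ≠ 0 := fun h0 => one_ne_zero (α := ℂ) <| by
    rw [← hself he, ← add_zero ⟪e, e⟫_ℂ, ← hev, ← inner_add_right,
      (h.inner_eq_zero_iff _ _).1 h0, hev]
  have hmem : e ∈ Submodule.span ℂ {e, v} := Submodule.subset_span (Or.inl rfl)
  have hmem' : v ∈ Submodule.span ℂ {e, v} := Submodule.subset_span (Or.inr rfl)
  have key := h.sum_inner_eq (t := ![t, t]) (x' := ![e + v, e - v]) (s := ![2 * t, 2 * t])
    (y' := ![e, v]) (Fin.forall_fin_two.2 ⟨add_mem hmem hmem', sub_mem hmem hmem'⟩)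
    (Fin.forall_fin_two.2 ⟨hmem, hmem'⟩)
    (by simp only [Fin.sum_univ_two, Matrix.cons_val_zero, Matrix.cons_val_one]
        linear_combination (norm := module) t • ketBra_add_add_ketBra_sub e v)
    (θ e) (θ (e + v))
  simp only [Fin.sum_univ_two, Matrix.cons_val_zero, Matrix.cons_val_one, hadd, hsub, hself he',
    (h.inner_eq_zero_iff e v).2 hev, zero_mul, mul_zero, add_zero, mul_one, ← mul_assoc] at key
  have key' := mul_right_cancel₀ hne key
  rw [mul_comm]
  exact_mod_cast key'

theorem coeff_eq_of_norm_eq_one (h : IsKetBraMap θ g) (hdim : 3 ≤ Module.rank ℂ H)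
    (hx : ‖x‖ = 1) (hy : ‖y‖ = 1) (t : ℝ) : g x t = g y t := by
  have horth {e v : H} (he : ‖e‖ = 1) (hv : ‖v‖ = 1) (hev : ⟪e, v⟫_ℂ = 0) : g e t = g v t := by
    have h1 := h.two_mul_coeff_add he hv hev (t / 2)
    have h2 := h.two_mul_coeff_add hv he (inner_eq_zero_symm.1 hev) (t / 2)
    rw [mul_div_cancel₀ t two_ne_zero] at h1 h2
    rw [← h1, add_comm, h2]
  obtain ⟨v, hv, hxv, hyv⟩ := exists_norm_eq_one_inner_eq_zero hdim x y
  rw [horth hx hv hxv, horth hy hv hyv]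

theorem coeff_mul_coeff_nonneg (h : IsKetBraMap θ g) (hdim : 3 ≤ Module.rank ℂ H) (he : ‖e‖ = 1)
    {s : ℝ} (hs0 : 0 ≤ s) (hs2 : s ≤ 2) : 0 ≤ g e 1 * g e s := by
  obtain ⟨v, hv, hev, -⟩ := exists_norm_eq_one_inner_eq_zero hdim e e
  obtain ⟨y, hye, z, hze, hy, hz, hyz⟩ := exists_ketBra_add_ketBra_eq he hv hev hs0 hs2
  have key := h.sum_norm_inner_sq_eq (t := ![1, 1]) (x' := ![y, z]) (s := ![s, 2 - s])
    (y' := ![e, v]) (Fin.forall_fin_two.2 ⟨hye, hze⟩)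
    (Fin.forall_fin_two.2
      ⟨Submodule.subset_span (Or.inl rfl), Submodule.subset_span (Or.inr rfl)⟩)
    (by simpa only [Fin.sum_univ_two, Matrix.cons_val_zero, Matrix.cons_val_one, one_smul]
      using hyz)
    (θ e)
  simp only [Fin.sum_univ_two, Matrix.cons_val_zero, Matrix.cons_val_one,
    h.coeff_eq_of_norm_eq_one hdim hy he, h.coeff_eq_of_norm_eq_one hdim hz he,
    (h.inner_eq_zero_iff v e).2 (inner_eq_zero_symm.1 hev), norm_inner_self, h.norm_map, he,
    one_pow, mul_one, norm_zero, zero_pow two_ne_zero, mul_zero, add_zero, ← mul_add] at key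
  rw [← key, ← mul_assoc]
  exact mul_nonneg (mul_self_nonneg _) (by positivity)

theorem coeff_eq_mul_of_norm_eq_one (h : IsKetBraMap θ g) (hdim : 3 ≤ Module.rank ℂ H)
    (he : ‖e‖ = 1) (t : ℝ) : g e t = g e 1 * t := by
  have he0 : e ≠ 0 := norm_ne_zero_iff.1 (he ▸ one_ne_zero)
  let f : ℝ →+ ℝ := AddMonoidHom.mk' (fun s => g e 1 * g e s) fun s t => by
    rw [h.coeff_add he0, mul_add]
  have hf : g e 1 * g e t = t * (g e 1 * g e 1) := map_eq_mul_map_one_of_nonneg f two_pos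
    (fun s hs0 hs2 => h.coeff_mul_coeff_nonneg hdim he hs0 hs2) t
  refine mul_left_cancel₀ (h.coeff_one_ne_zero e he0) ?_
  rw [hf]
  ring

theorem sq_norm_mul_coeff_smul (h : IsKetBraMap θ g) (hx : x ≠ 0) {a : ℂ} (ha : a ≠ 0) (t : ℝ) :
    ‖a‖ ^ 2 * g (a • x) t = g x (‖a‖ ^ 2 * t) := by
  have hmem : x ∈ Submodule.span ℂ {x, x} := Submodule.subset_span (Or.inl rfl)
  have key := h.sum_inner_eq (t := ![t]) (x' := ![a • x]) (s := ![‖a‖ ^ 2 * t]) (y' := ![x])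
    (Fin.forall_fin_one.2 (Submodule.smul_mem _ a hmem)) (Fin.forall_fin_one.2 hmem)
    (by simp only [Fin.sum_univ_one, Matrix.cons_val_zero, ketBra_smul, mul_comm, mul_smul])
    (θ x) (θ (a • x))
  have hne : ⟪θ x, θ (a • x)⟫_ℂ ≠ 0 := by
    rw [Ne, h.inner_eq_zero_iff, inner_smul_right]
    exact mul_ne_zero ha (inner_self_ne_zero.2 hx)
  have hx0 : (‖x‖ ^ 2 : ℂ) ≠ 0 := pow_ne_zero 2 (by exact_mod_cast norm_ne_zero_iff.2 hx)
  simp only [Fin.sum_univ_one, Matrix.cons_val_zero, inner_self_eq_norm_sq_to_K, h.norm_map,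
    norm_smul, RCLike.ofReal_eq_complex_ofReal, Complex.ofReal_mul] at key
  have key' : (‖a‖ ^ 2 * g (a • x) t : ℂ) = g x (‖a‖ ^ 2 * t) := by
    refine mul_right_cancel₀ (mul_ne_zero hx0 hne) ?_
    linear_combination key
  exact_mod_cast key'

theorem coeff_eq_mul (h : IsKetBraMap θ g) (hdim : 3 ≤ Module.rank ℂ H) (he : ‖e‖ = 1)
    (hx : x ≠ 0) (t : ℝ) : g x t = g e 1 * t := by
  have ha : ((‖x‖⁻¹ : ℝ) : ℂ) ≠ 0 := by simpa using hx
  have hx' : ‖((‖x‖⁻¹ : ℝ) : ℂ) • x‖ = 1 := by simp [norm_smul, hx]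
  have key := h.sq_norm_mul_coeff_smul hx ha (‖x‖ ^ 2 * t)
  rw [h.coeff_eq_mul_of_norm_eq_one hdim hx', h.coeff_eq_of_norm_eq_one hdim hx' he] at key
  have hx0 := norm_ne_zero_iff.2 hx
  simp only [Complex.norm_real, norm_inv, norm_norm, inv_pow] at key
  field_simp at key
  exact key.symm

theorem normalize (h : IsKetBraMap θ g) (hdim : 3 ≤ Module.rank ℂ H) (he : ‖e‖ = 1) :
    IsKetBraMap θ fun _ t => t where
  norm_map := h.norm_map
  inner_eq_zero_iff := h.inner_eq_zero_iff
  coeff_one_ne_zero _ _ := one_ne_zero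
  sum_eq p q m n t x s y hx hy hxy := by
    have hg (x : H) (t : ℝ) : g x t • ketBra (θ x) = g e 1 • t • ketBra (θ x) := by
      rcases eq_or_ne x 0 with rfl | hx
      · rw [norm_eq_zero.1 ((h.norm_map 0).trans norm_zero), ketBra_zero, smul_zero, smul_zero,
          smul_zero]
      · rw [h.coeff_eq_mul hdim he hx, mul_smul]
    have key := h.sum_eq p q t x s y hx hy hxy
    simp only [hg, ← Finset.smul_sum] at key
    have he0 : e ≠ 0 := norm_ne_zero_iff.1 (he ▸ one_ne_zero)
    exact (IsUnit.mk0 _ (h.coeff_one_ne_zero e he0)).smul_left_cancel.1 key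

theorem preservesNormInner_of_coeff_eq (h : IsKetBraMap θ fun _ t => t) :
    PreservesNormInner θ := fun x y => by
  obtain ⟨a, w, rfl, hyw⟩ := exists_eq_smul_add_inner_eq_zero y x
  have hwy : ⟪w, y⟫_ℂ = 0 := inner_eq_zero_symm.1 hyw
  have hy : y ∈ Submodule.span ℂ {y, w} := Submodule.subset_span (Or.inl rfl)
  have hw : w ∈ Submodule.span ℂ {y, w} := Submodule.subset_span (Or.inr rfl)
  have key (s : ℝ) := h.sum_norm_inner_sq_eq (t := ![1]) (x' := ![a • y + (s : ℂ) • w])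
    (s := ![s, (1 - s) * ‖a‖ ^ 2, s ^ 2 - s]) (y' := ![a • y + w, y, w])
    (Fin.forall_fin_one.2 (add_mem (Submodule.smul_mem _ _ hy) (Submodule.smul_mem _ _ hw)))
    (Fin.forall_fin_succ.2
      ⟨add_mem (Submodule.smul_mem _ _ hy) hw, Fin.forall_fin_two.2 ⟨hy, hw⟩⟩)
    (by simpa [Fin.sum_univ_three] using ketBra_smul_add_smul a s y w) (θ y)
  have hsq : ‖⟪θ (a • y + w), θ y⟫_ℂ‖ ^ 2 = ‖a‖ ^ 2 * (‖y‖ ^ 2) ^ 2 := by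
    refine eq_of_forall_nonneg_affine fun s => ?_
    have hs := key s
    simp only [Fin.sum_univ_one, Fin.sum_univ_three, Matrix.cons_val_zero, Matrix.cons_val_one,
      Matrix.cons_val, norm_inner_self, h.norm_map, (h.inner_eq_zero_iff w y).2 hwy, norm_zero,
      zero_pow two_ne_zero, mul_zero, add_zero, one_mul, mul_assoc] at hs
    rw [← hs]
    positivity
  rw [← sq_eq_sq₀ (norm_nonneg _) (norm_nonneg _), hsq, inner_add_left, hwy, add_zero,
    inner_smul_left, norm_mul, norm_inner_self, RCLike.norm_conj, mul_pow]

end IsKetBraMap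

end KetBraMap

section KetBraBicommutant

variable {A C X : Bₛ(H)} {s t : ℝ} {x y z : H}

theorem linearIndependent_modScalar_ketBra (hdim : 3 ≤ Module.rank ℂ H)
    (hxy : LinearIndependent ℂ ![x, y]) :
    LinearIndependent ℝ ![modScalar (ketBra x), modScalar (ketBra y)] := by
  refine LinearIndependent.pair_iff.2 fun s t hst => ?_
  rw [← map_smul, ← map_smul, ← map_add] at hst
  obtain ⟨v, hv, hxv, hyv⟩ := exists_norm_eq_one_inner_eq_zero hdim x y
  have hz (z : H) : ((s : ℂ) * ⟪x, z⟫_ℂ) • x + ((t : ℂ) * ⟪y, z⟫_ℂ) • y = 0 := by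
    have h0 := eq_zero_of_modScalar_eq_zero hst (norm_ne_zero_iff.1 (hv ▸ one_ne_zero)) <| by
      rw [coe_add_apply, coe_smul_apply, coe_smul_apply, ketBra_apply_of_inner_eq_zero hxv,
        ketBra_apply_of_inner_eq_zero hyv, smul_zero, smul_zero, add_zero]
    rw [mul_smul, mul_smul, ← ketBra_apply, ← ketBra_apply, ← coe_smul_apply, ← coe_smul_apply,
      ← coe_add_apply, h0, coe_zero_apply]
  have hx : ⟪x, x⟫_ℂ ≠ 0 := inner_self_ne_zero.2 (hxy.ne_zero 0)
  have hy : ⟪y, y⟫_ℂ ≠ 0 := inner_self_ne_zero.2 (hxy.ne_zero 1)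
  constructor
  · exact_mod_cast (mul_eq_zero.1 (LinearIndependent.pair_iff.1 hxy _ _ (hz x)).1).resolve_right hx
  · exact_mod_cast (mul_eq_zero.1 (LinearIndependent.pair_iff.1 hxy _ _ (hz y)).2).resolve_right hy

theorem ketBra_mem_bicomm_iff (hdim : 3 ≤ Module.rank ℂ H) :
    ketBra z ∈ bicomm {ketBra x} ↔ z ∈ ℂ ∙ x := by
  refine ⟨fun h => ?_, fun h => ?_⟩
  · obtain ⟨v, hv, hxv, hzv⟩ := exists_norm_eq_one_inner_eq_zero hdim x z
    obtain ⟨l, w, rfl, hxw⟩ := exists_eq_smul_add_inner_eq_zero x z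
    have hxwv : ketBra x (w + v) = (0 : ℂ) • (w + v) := by
      rw [ketBra_apply_of_inner_eq_zero (by rw [inner_add_right, hxw, hxv, add_zero]), zero_smul]
    obtain ⟨r, hr⟩ :=
      (mem_bicomm_singleton.1 h _ (commC_ketBra_of_apply_eq hxwv)).exists_apply_eq_smul
    have hvw : ⟪v, w⟫_ℂ = 0 := by
      rwa [inner_add_left, inner_smul_left, hxv, mul_zero, zero_add, inner_eq_zero_symm] at hzv
    have hr0 : (r : ℂ) = 0 := by
      have hv' := congrArg (fun u => ⟪v, u⟫_ℂ) hr
      simpa [ketBra_apply, inner_smul_right, inner_add_right, inner_eq_zero_symm.1 hxv, hvw, hv]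
        using hv'.symm
    rw [hr0, zero_smul, ketBra_apply, inner_add_right, hzv, add_zero, inner_add_left,
      inner_smul_left, hxw, mul_zero, zero_add, smul_eq_zero, inner_self_eq_zero] at hr
    rcases hr with rfl | h0
    · rw [add_zero]
      exact Submodule.smul_mem _ l (Submodule.mem_span_singleton_self x)
    · rw [h0]
      exact zero_mem _
  · obtain ⟨l, rfl⟩ := Submodule.mem_span_singleton.1 h
    rw [ketBra_smul]
    exact Submodule.smul_mem _ _ (subset_bicomm rfl)

theorem inner_eq_zero_iff_commC_ketBra :
    ⟪x, y⟫_ℂ = 0 ↔ CommC (ketBra x) (ketBra y) ∧ (y ∈ ℂ ∙ x → x = 0 ∨ y = 0) := by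
  refine ⟨fun h => ⟨commC_ketBra_of_apply_eq (l := 0) ?_, fun hy => ?_⟩, fun ⟨hc, hs⟩ => ?_⟩
  · rw [ketBra_apply_of_inner_eq_zero h, zero_smul]
  · obtain ⟨l, rfl⟩ := Submodule.mem_span_singleton.1 hy
    rw [inner_smul_right, mul_eq_zero, inner_self_eq_zero] at h
    exact h.symm.imp_right fun hl => by rw [hl, zero_smul]
  · obtain ⟨r, hr⟩ := hc.symm.exists_apply_eq_smul
    rw [ketBra_apply] at hr
    by_contra hxy
    have hyx : ⟪y, x⟫_ℂ ≠ 0 := fun h => hxy (inner_eq_zero_symm.1 h)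
    have hy : y ∈ ℂ ∙ x := Submodule.mem_span_singleton.2
      ⟨(⟪y, x⟫_ℂ)⁻¹ * r, by rw [mul_smul, ← hr, inv_smul_smul₀ hyx]⟩
    rcases hs hy with rfl | rfl
    · exact hxy (inner_zero_left _)
    · exact hxy (inner_zero_right _)

theorem commC_smul_add_iff (hs : s ≠ 0) : CommC (s • C + t • 1) X ↔ CommC C X := by
  refine ⟨fun h => ?_, fun h => (h.smul_left s).add_left ((commC_one_left X).smul_left t)⟩
  have h' := (h.add_left ((commC_one_left X).smul_left (-t))).smul_left s⁻¹
  rwa [neg_smul, add_neg_cancel_right, inv_smul_smul₀ hs] at h'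

theorem bicomm_smul_add (hs : s ≠ 0) : bicomm {s • C + t • 1} = bicomm {C} := by
  ext D
  simp only [mem_bicomm_singleton, commC_smul_add_iff hs]

theorem smul_add_mem_bicomm_iff {S : Set Bₛ(H)} (hs : s ≠ 0) :
    s • C + t • 1 ∈ bicomm S ↔ C ∈ bicomm S := by
  simp only [mem_bicomm, commC_smul_add_iff hs]

end KetBraBicommutant

section Preserver

/-- `φ` is a surjection preserving the relation `A - B ↔_q C` in both directions. -/
structure IsCommQPreserver (φ : Bₛ(H) → Bₛ(H)) : Prop where
  surjective : Function.Surjective φ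
  commQ_sub_iff : ∀ A B C, CommQ (A - B) C ↔ CommQ (φ A - φ B) (φ C)

namespace IsCommQPreserver

variable {φ : Bₛ(H) → Bₛ(H)} {A B C D : Bₛ(H)} {S : Set Bₛ(H)} {x : H}

theorem modScalar_map_eq_iff (h : IsCommQPreserver φ) :
    modScalar (φ A) = modScalar (φ B) ↔ modScalar A = modScalar B := by
  rw [← sub_eq_zero, ← map_sub, modScalar_eq_zero_iff_commQ, h.surjective.forall,
    ← sub_eq_zero (a := modScalar A), ← map_sub, modScalar_eq_zero_iff_commQ]
  exact forall_congr' fun C => (h.commQ_sub_iff A B C).symm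

theorem modScalar_map_zero (h : IsCommQPreserver φ) : modScalar (φ 0) = 0 := by
  refine modScalar_eq_zero_iff_commQ.2 (h.surjective.forall.2 fun A => ?_)
  obtain ⟨B, hB⟩ := h.surjective 0
  have hAB := (h.commQ_sub_iff A B 0).1 (Or.inl (by simp))
  rw [hB, sub_zero] at hAB
  exact hAB.imp Eq.symm fun h => by rwa [add_comm]

theorem modScalar_map_eq_zero_iff (h : IsCommQPreserver φ) :
    modScalar (φ A) = 0 ↔ modScalar A = 0 := by
  rw [← h.modScalar_map_zero, h.modScalar_map_eq_iff, h.modScalar_map_zero, map_zero]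

theorem commC_sub_iff (h : IsCommQPreserver φ) :
    CommC (φ A - φ B) (φ C) ↔ CommC (A - B) C := by
  simp only [commC_iff_forall_commQ, ← add_sub_right_comm]
  constructor <;> intro hc k
  · have hk : modScalar (A + k • 1) = modScalar A := modScalar_eq_iff.2 ⟨k, rfl⟩
    obtain ⟨l, hl⟩ := modScalar_eq_iff.1 (h.modScalar_map_eq_iff.2 hk)
    exact (h.commQ_sub_iff _ _ _).2 (hl ▸ hc l)
  · obtain ⟨A', hA'⟩ := h.surjective (φ A + k • 1)
    obtain ⟨l, rfl⟩ := modScalar_eq_iff.1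
      (h.modScalar_map_eq_iff.1 (modScalar_eq_iff.2 ⟨k, hA'⟩))
    exact hA' ▸ (h.commQ_sub_iff _ _ _).1 (hc l)

theorem commC_iff (h : IsCommQPreserver φ) : CommC (φ A) (φ C) ↔ CommC A C := by
  have hA : modScalar (φ A - φ 0) = modScalar (φ A) := by
    rw [map_sub, h.modScalar_map_zero, sub_zero]
  rw [← sub_zero A, ← h.commC_sub_iff, sub_zero]
  exact ⟨fun h' => h'.congr_left hA.symm, fun h' => h'.congr_left hA⟩

theorem sub_mem_bicomm_iff (h : IsCommQPreserver φ) :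
    φ A - φ B ∈ bicomm (φ '' S) ↔ A - B ∈ bicomm S := by
  refine h.surjective.forall.trans (forall_congr' fun X => ?_)
  simp only [Set.forall_mem_image, h.commC_iff, h.commC_sub_iff]

theorem mem_bicomm_iff (h : IsCommQPreserver φ) : φ D ∈ bicomm (φ '' S) ↔ D ∈ bicomm S := by
  refine h.surjective.forall.trans (forall_congr' fun X => ?_)
  simp only [Set.forall_mem_image, h.commC_iff]

theorem mem_bicomm_empty_iff (h : IsCommQPreserver φ) : φ D ∈ bicomm ∅ ↔ D ∈ bicomm ∅ := by
  rw [mem_bicomm_empty, mem_bicomm_empty, h.modScalar_map_eq_zero_iff]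

theorem mem_bicomm_singleton_iff (h : IsCommQPreserver φ) :
    φ D ∈ bicomm {φ C} ↔ D ∈ bicomm {C} := by
  rw [← h.mem_bicomm_iff (S := {C}), Set.image_singleton]

theorem mem_bicomm_pair_iff (h : IsCommQPreserver φ) :
    φ D ∈ bicomm {φ A, φ B} ↔ D ∈ bicomm {A, B} := by
  rw [← h.mem_bicomm_iff (S := {A, B}), Set.image_pair]

theorem isMinimal_map_iff (h : IsCommQPreserver φ) : IsMinimal (φ C) ↔ IsMinimal C := by
  refine h.surjective.forall.trans (forall_congr' fun D => ?_)
  rw [h.mem_bicomm_singleton_iff, h.mem_bicomm_empty_iff, h.mem_bicomm_singleton_iff]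

theorem rankOneLike_map_iff (h : IsCommQPreserver φ) : RankOneLike (φ C) ↔ RankOneLike C := by
  refine ⟨fun ⟨h1, h2, h3⟩ => ⟨?_, h.isMinimal_map_iff.1 h2, fun D hDC hD E => ?_⟩,
    fun ⟨h1, h2, h3⟩ => ⟨?_, h.isMinimal_map_iff.2 h2, h.surjective.forall.2 fun D hDC hD =>
      h.surjective.forall.2 fun E => ?_⟩⟩
  · rwa [← h.mem_bicomm_empty_iff]
  · have hE := h3 _ (h.commC_iff.2 hDC) (h.isMinimal_map_iff.2 hD) (φ E)
    rwa [h.mem_bicomm_pair_iff, h.mem_bicomm_singleton_iff, h.mem_bicomm_pair_iff] at hE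
  · rwa [h.mem_bicomm_empty_iff]
  · rw [h.mem_bicomm_pair_iff, h.mem_bicomm_singleton_iff, h.mem_bicomm_pair_iff]
    exact h3 _ (h.commC_iff.1 hDC) (h.isMinimal_map_iff.1 hD) _

theorem exists_map_ketBra_eq (h : IsCommQPreserver φ) (hdim : 3 ≤ Module.rank ℂ H) (x : H) :
    ∃ y : H, ‖y‖ = ‖x‖ ∧ ∃ s t : ℝ, s ≠ 0 ∧ φ (ketBra x) = s • ketBra y + t • 1 := by
  rcases eq_or_ne x 0 with rfl | hx
  · obtain ⟨k, hk⟩ := modScalar_eq_zero_iff.1 h.modScalar_map_zero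
    exact ⟨0, rfl, 1, k, one_ne_zero, by rw [ketBra_zero, smul_zero, zero_add, hk]⟩
  obtain ⟨e, he, s, t, hs, hst⟩ :=
    (h.rankOneLike_map_iff.2 (rankOneLike_ketBra hdim hx)).exists_eq_smul_ketBra_add
  have hx2 : ‖x‖ ^ 2 ≠ 0 := pow_ne_zero 2 (norm_ne_zero_iff.2 hx)
  refine ⟨(‖x‖ : ℂ) • e, by simp [norm_smul, he], s / ‖x‖ ^ 2, t,
    div_ne_zero hs hx2, ?_⟩
  rw [hst, ketBra_smul, smul_smul, Complex.norm_real, norm_norm, div_mul_cancel₀ _ hx2]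

end IsCommQPreserver

end Preserver

section VectorMap

/-- `φ` preserves `A - B ↔_q C` and sends each `ketBra x` to `ketBra (θ x)`, up to a nonzero factor
and a multiple of the identity; for unit vectors, `θ` is the map induced by `φ` on lines. -/
structure IsImplementedBy (φ : Bₛ(H) → Bₛ(H)) (θ : H → H) : Prop extends IsCommQPreserver φ where
  norm_map : ∀ x, ‖θ x‖ = ‖x‖
  map_ketBra : ∀ x, ∃ s t : ℝ, s ≠ 0 ∧ φ (ketBra x) = s • ketBra (θ x) + t • 1

theorem IsCommQPreserver.exists_isImplementedBy {φ : Bₛ(H) → Bₛ(H)} (h : IsCommQPreserver φ)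
    (hdim : 3 ≤ Module.rank ℂ H) : ∃ θ, IsImplementedBy φ θ := by
  choose θ hθ hφ using h.exists_map_ketBra_eq hdim
  exact ⟨θ, h, hθ, hφ⟩

namespace IsImplementedBy

variable {φ : Bₛ(H) → Bₛ(H)} {θ : H → H} {A B : Bₛ(H)} {x y z v : H} {s t : ℝ}

theorem map_eq_zero_iff (h : IsImplementedBy φ θ) : θ x = 0 ↔ x = 0 := by
  rw [← norm_eq_zero, h.norm_map, norm_eq_zero]

theorem commC_ketBra_map_iff (h : IsImplementedBy φ θ) :
    CommC A (ketBra (θ x)) ↔ CommC A (φ (ketBra x)) := by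
  obtain ⟨s, t, hs, hst⟩ := h.map_ketBra x
  exact ⟨fun hA => hst ▸ ((commC_smul_add_iff hs).2 hA.symm).symm,
    fun hA => ((commC_smul_add_iff hs).1 (hst ▸ hA.symm)).symm⟩

theorem commC_sub_ketBra_iff (h : IsImplementedBy φ θ) :
    CommC (φ A - φ B) (ketBra (θ x)) ↔ CommC (A - B) (ketBra x) := by
  rw [h.commC_ketBra_map_iff, h.commC_sub_iff]

theorem commC_ketBra_iff (h : IsImplementedBy φ θ) :
    CommC (φ A) (ketBra (θ x)) ↔ CommC A (ketBra x) := by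
  rw [h.commC_ketBra_map_iff, h.commC_iff]

theorem bicomm_ketBra_map (h : IsImplementedBy φ θ) :
    bicomm {ketBra (θ x)} = bicomm {φ (ketBra x)} := by
  obtain ⟨s, t, hs, hst⟩ := h.map_ketBra x
  rw [hst, bicomm_smul_add hs]

theorem mem_span_iff (h : IsImplementedBy φ θ) (hdim : 3 ≤ Module.rank ℂ H) :
    θ z ∈ ℂ ∙ θ x ↔ z ∈ ℂ ∙ x := by
  obtain ⟨s, t, hs, hst⟩ := h.map_ketBra z
  rw [← ketBra_mem_bicomm_iff hdim, h.bicomm_ketBra_map, ← smul_add_mem_bicomm_iff hs, ← hst,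
    h.mem_bicomm_singleton_iff, ketBra_mem_bicomm_iff hdim]

theorem inner_eq_zero_iff (h : IsImplementedBy φ θ) (hdim : 3 ≤ Module.rank ℂ H) :
    ⟪θ x, θ y⟫_ℂ = 0 ↔ ⟪x, y⟫_ℂ = 0 := by
  have hc : CommC (ketBra (θ x)) (ketBra (θ y)) ↔ CommC (ketBra x) (ketBra y) := by
    rw [← h.commC_ketBra_iff (A := ketBra x)]
    exact ⟨fun hxy => (h.commC_ketBra_map_iff.1 hxy.symm).symm,
      fun hxy => (h.commC_ketBra_map_iff.2 hxy.symm).symm⟩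
  rw [inner_eq_zero_iff_commC_ketBra, inner_eq_zero_iff_commC_ketBra, hc, h.mem_span_iff hdim,
    h.map_eq_zero_iff, h.map_eq_zero_iff]

theorem exists_modScalar_map_add (h : IsImplementedBy φ θ) (A : Bₛ(H)) (t : ℝ) (x : H) :
    ∃ r : ℝ, modScalar (φ (A + t • ketBra x)) =
      modScalar (φ A) + r • modScalar (ketBra (θ x)) := by
  rcases eq_or_ne x 0 with rfl | hx
  · exact ⟨0, by rw [ketBra_zero, smul_zero, add_zero, zero_smul, add_zero]⟩
  have hmem : φ (A + t • ketBra x) - φ A ∈ bicomm {ketBra (θ x)} := by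
    rw [h.bicomm_ketBra_map, ← Set.image_singleton, h.sub_mem_bicomm_iff, add_sub_cancel_left]
    exact Submodule.smul_mem _ t (subset_bicomm rfl)
  have hne : ‖θ x‖ ^ 2 ≠ 0 := pow_ne_zero 2 (norm_ne_zero_iff.2 (h.map_eq_zero_iff.not.2 hx))
  obtain ⟨r, k, hrk⟩ := (isQuadratic_ketBra (θ x)).exists_eq_smul_add hne hmem
  refine ⟨r, ?_⟩
  rw [eq_add_of_sub_eq' hrk, map_add, map_add, map_smul, map_smul, modScalar_one, smul_zero,
    add_zero]

theorem hasZeroSecondDiff_of_notMem_span (h : IsImplementedBy φ θ) (hdim : 3 ≤ Module.rank ℂ H)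
    (hx : x ≠ 0) (hyx : y ∉ ℂ ∙ x) (s t : ℝ) :
    HasZeroSecondDiff (fun A => modScalar (φ A)) (s • ketBra y) (t • ketBra x) := fun A => by
  have hθx : θ x ≠ 0 := h.map_eq_zero_iff.not.2 hx
  have hli : LinearIndependent ℂ ![θ x, θ y] := (LinearIndependent.pair_iff' hθx).2 fun a ha =>
    hyx ((h.mem_span_iff hdim).1 (Submodule.mem_span_singleton.2 ⟨a, ha⟩))
  obtain ⟨p, hp⟩ := h.exists_modScalar_map_add (A + s • ketBra y) t x
  obtain ⟨p', hp'⟩ := h.exists_modScalar_map_add A t x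
  obtain ⟨q, hq⟩ := h.exists_modScalar_map_add (A + t • ketBra x) s y
  obtain ⟨q', hq'⟩ := h.exists_modScalar_map_add A s y
  rw [add_right_comm] at hq
  have hpq : (p - p') • modScalar (ketBra (θ x)) + (q' - q) • modScalar (ketBra (θ y)) = 0 := by
    linear_combination (norm := module) hp' - hp + hq - hq'
  have hpp := (LinearIndependent.pair_iff.1 (linearIndependent_modScalar_ketBra hdim hli) _ _ hpq).1
  change modScalar (φ (A + s • ketBra y + t • ketBra x)) + modScalar (φ A) =
    modScalar (φ (A + s • ketBra y)) + modScalar (φ (A + t • ketBra x))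
  rw [hp, hp', sub_eq_zero.1 hpp, add_assoc, add_comm (modScalar (φ A))]

theorem hasZeroSecondDiff (h : IsImplementedBy φ θ) (hdim : 3 ≤ Module.rank ℂ H) (s t : ℝ)
    (x y : H) : HasZeroSecondDiff (fun A => modScalar (φ A)) (s • ketBra y) (t • ketBra x) := by
  rcases eq_or_ne x 0 with rfl | hx
  · rw [ketBra_zero, smul_zero]
    exact fun A => by simp only [add_zero]
  by_cases hyx : y ∈ ℂ ∙ x
  · obtain ⟨l, rfl⟩ := Submodule.mem_span_singleton.1 hyx
    obtain ⟨v, hv, hxv, -⟩ := exists_norm_eq_one_inner_eq_zero hdim x x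
    have hvx : v ∉ ℂ ∙ x := fun hmem =>
      have := (inner_eq_zero_iff_commC_ketBra.1 hxv).2 hmem
      this.elim hx (norm_ne_zero_iff.1 (hv ▸ one_ne_zero))
    have hxx : x ∈ ℂ ∙ x := Submodule.mem_span_singleton_self x
    have hdecomp : s • ketBra (l • x) = (s * ‖l‖ ^ 2 / 2) • ketBra (x + v) +
        (s * ‖l‖ ^ 2 / 2) • ketBra (x - v) + (-(s * ‖l‖ ^ 2)) • ketBra v := by
      rw [ketBra_smul]
      linear_combination (norm := module) (-(s * ‖l‖ ^ 2 / 2)) • ketBra_add_add_ketBra_sub x v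
    have hsecond {y : H} (hy : y ∉ ℂ ∙ x) (s : ℝ) :=
      h.hasZeroSecondDiff_of_notMem_span hdim hx hy s t
    rw [hdecomp]
    exact ((hsecond (by rwa [Submodule.add_mem_iff_right _ hxx]) _).add_left
      (hsecond (by rwa [sub_eq_add_neg, Submodule.add_mem_iff_right _ hxx,
        Submodule.neg_mem_iff]) _)).add_left (hsecond hvx _)
  · exact h.hasZeroSecondDiff_of_notMem_span hdim hx hyx s t

theorem exists_isKetBraMap (h : IsImplementedBy φ θ) (hdim : 3 ≤ Module.rank ℂ H) :
    ∃ g : H → ℝ → ℝ, IsKetBraMap θ g ∧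
      ∀ x t, modScalar (φ (t • ketBra x)) = g x t • modScalar (ketBra (θ x)) := by
  choose g hg using fun x t => h.exists_modScalar_map_add 0 t x
  simp only [zero_add, h.modScalar_map_zero] at hg
  have hsum {n : ℕ} (t : Fin n → ℝ) (x : Fin n → H) :
      modScalar (φ (∑ i, t i • ketBra (x i))) =
        modScalar (∑ i, g (x i) (t i) • ketBra (θ (x i))) := by
    simp only [map_sum, map_smul, ← hg]
    exact map_sum_of_hasZeroSecondDiff h.modScalar_map_zero
      (fun i j => h.hasZeroSecondDiff hdim _ _ _ _) _
  refine ⟨g, ⟨h.norm_map, fun x y => h.inner_eq_zero_iff hdim, fun x hx hgx => ?_,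
    fun p q m n t x s y hx hy hxy => ?_⟩, hg⟩
  · have h1 := hg x 1
    rw [one_smul, hgx, zero_smul, h.modScalar_map_eq_zero_iff] at h1
    exact modScalar_ketBra_ne_zero hdim hx h1
  · obtain ⟨v, hv, hpv, hqv⟩ := exists_norm_eq_one_inner_eq_zero hdim p q
    have hθv : θ v ≠ 0 := h.map_eq_zero_iff.not.2 (norm_ne_zero_iff.1 (hv ▸ one_ne_zero))
    have hkill {n : ℕ} {t : Fin n → ℝ} {x : Fin n → H}
        (hx : ∀ i, x i ∈ Submodule.span ℂ {p, q}) :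
        (∑ i, g (x i) (t i) • ketBra (θ (x i)) : Bₛ(H)) (θ v) = 0 :=
      sum_smul_ketBra_apply_eq_zero fun i =>
        (h.inner_eq_zero_iff hdim).2 (inner_eq_zero_of_mem_span_pair hpv hqv (hx i))
    refine sub_eq_zero.1 (eq_zero_of_modScalar_eq_zero ?_ hθv ?_)
    · rw [map_sub, ← hsum, ← hsum, hxy, sub_self]
    · rw [coe_sub_apply, hkill hx, hkill hy, sub_zero]

theorem exists_modScalar_map_smul_ketBra_eq (h : IsImplementedBy φ θ)
    (hdim : 3 ≤ Module.rank ℂ H) : PreservesNormInner θ ∧ ∃ c : ℝ, c ≠ 0 ∧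
      ∀ x t, modScalar (φ (t • ketBra x)) = (c * t) • modScalar (ketBra (θ x)) := by
  obtain ⟨g, hg, hgφ⟩ := h.exists_isKetBraMap hdim
  obtain ⟨e, he, -⟩ := exists_norm_eq_one_inner_eq_zero hdim 0 0
  refine ⟨(hg.normalize hdim he).preservesNormInner_of_coeff_eq, g e 1,
    hg.coeff_one_ne_zero e (norm_ne_zero_iff.1 (he ▸ one_ne_zero)), fun x t => ?_⟩
  rcases eq_or_ne x 0 with rfl | hx
  · rw [ketBra_zero, smul_zero, h.modScalar_map_zero, h.map_eq_zero_iff.2 rfl, ketBra_zero,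
      map_zero, smul_zero]
  · rw [hgφ, hg.coeff_eq_mul hdim he hx]

end IsImplementedBy

end VectorMap

section Anticommute

variable {K R : Type*} [Field K] [NeZero (2 : K)] [Ring R] [Algebra K R] {x y : R} {a b c : K}

theorem eq_zero_of_smul_add_mul_add_mul_eq_zero (hc : c ≠ 0) (hxy : x * y + y * x = 0)
    (hcomm : ¬Commute x y)
    (h : (c • x + a • 1) * (c • y + b • 1) + (c • y + b • 1) * (c • x + a • 1) = 0) :
    b = 0 := by
  have hlin : (c * b) • x + (c * a) • y + (a * b) • (1 : R) = 0 := by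
    refine (smul_eq_zero.1 (?_ : (2 : K) • _ = (0 : R))).resolve_left two_ne_zero
    simp only [add_mul, mul_add, smul_mul_smul_comm, mul_one, one_mul] at h
    linear_combination (norm := module) h - (c * c) • hxy
  by_contra hb
  have hx : (c * b) • x = -((c * a) • y + (a * b) • (1 : R)) := by
    rw [eq_neg_iff_add_eq_zero, ← add_assoc, hlin]
  refine hcomm ((Commute.smul_left_iff₀ (mul_ne_zero hc hb)).1 ?_)
  rw [hx]
  exact (((Commute.refl y).smul_left _).add_left ((Commute.one_left y).smul_left _)).neg_left

end Anticommute

section Conjugation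

variable {φ : Bₛ(H) → Bₛ(H)} {σ : ℂ →+* ℂ} {U : H →ₛₗᵢ[σ] H} {c : ℝ} {A B P Q : Bₛ(H)}

theorem CommQ.of_intertwine (hP : ∀ x, P (U x) = U (A x)) (hQ : ∀ x, Q (U x) = U (B x))
    (h : CommQ P Q) : CommQ A B := by
  refine h.imp ?_ ?_ <;> refine fun h => ContinuousLinearMap.ext fun x => U.injective ?_ <;>
    simpa [hP, hQ] using congrArg (fun T : H →L[ℂ] H => T (U x)) h

theorem inv_sq_norm_smul_ketBra_add_apply {x u : H} (hx : x ≠ 0) (hxu : ⟪x, u⟫_ℂ = 0) :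
    ((‖x‖ ^ 2)⁻¹ • ketBra (x + u)) x = x + u := by
  have hx2 : (‖x‖ : ℂ) ^ 2 ≠ 0 := by simpa using hx
  rw [coe_smul_apply, ketBra_apply, inner_add_left, inner_eq_zero_symm.1 hxu, add_zero,
    inner_self_eq_norm_sq_to_K, Complex.ofReal_inv, Complex.ofReal_pow]
  exact inv_smul_smul₀ hx2 _

/-- `φ` preserves `A - B ↔_q C` and agrees with `A ↦ c • U A U*`, up to multiples of the identity,
on the real multiples of the operators `ketBra x`. Here `U` is complex-linear or
conjugate-linear, according to the choice of `σ`. -/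
structure IsConjOnRankOne (φ : Bₛ(H) → Bₛ(H)) (c : ℝ) (U : H →ₛₗᵢ[σ] H) : Prop
    extends IsCommQPreserver φ where
  map_ofReal : ∀ t : ℝ, σ t = t
  ne_zero : c ≠ 0
  modScalar_map : ∀ x t, modScalar (φ (t • ketBra x)) = (c * t) • modScalar (ketBra (U x))

theorem IsCommQPreserver.exists_isConjOnRankOne (h : IsCommQPreserver φ)
    (hdim : 3 ≤ Module.rank ℂ H) : ∃ c, (∃ U : H →ₗᵢ[ℂ] H, IsConjOnRankOne φ c U) ∨
      ∃ U : H →ₗᵢ⋆[ℂ] H, IsConjOnRankOne φ c U := by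
  obtain ⟨θ, hθ⟩ := h.exists_isImplementedBy hdim
  obtain ⟨hθ, c, hc, hφ⟩ := hθ.exists_modScalar_map_smul_ketBra_eq hdim
  have hket {u v : H} (huv : ∃ m : ℂ, ‖m‖ = 1 ∧ u = m • v) : ketBra u = ketBra v := by
    obtain ⟨m, hm, rfl⟩ := huv
    rw [ketBra_smul, hm, one_pow, one_smul]
  refine ⟨c, hθ.exists_linearIsometry.imp ?_ ?_⟩ <;> rintro ⟨U, hU⟩
  · exact ⟨U, h, fun _ => rfl, hc, fun x t => by rw [hφ, hket (hU x)]⟩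
  · exact ⟨U, h, Complex.conj_ofReal, hc, fun x t => by rw [hφ, hket (hU x)]⟩

namespace IsConjOnRankOne

theorem isImplementedBy (h : IsConjOnRankOne φ c U) : IsImplementedBy φ U where
  toIsCommQPreserver := h.toIsCommQPreserver
  norm_map := U.norm_map
  map_ketBra x := by
    have hx := h.modScalar_map x 1
    rw [one_smul, mul_one, ← map_smul] at hx
    obtain ⟨t, ht⟩ := modScalar_eq_iff.1 hx
    exact ⟨c, t, h.ne_zero, ht⟩

-- The operator `B` below is of rank one and `A - B` has the eigenvector `x`; so `φ A - φ B` has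
-- the eigenvector `U x`, while `φ B` is known.
theorem exists_map_apply_eq (h : IsConjOnRankOne φ c U) (hdim : 3 ≤ Module.rank ℂ H)
    (A : Bₛ(H)) (x : H) : ∃ m : ℝ, φ A (U x) - (c : ℂ) • U (A x) = (m : ℂ) • U x := by
  rcases eq_or_ne x 0 with rfl | hx
  · exact ⟨0, by simp only [map_zero, smul_zero, sub_zero]⟩
  obtain ⟨l, u, hAx, hxu⟩ := exists_eq_smul_add_inner_eq_zero x (A x)
  set B := (‖x‖ ^ 2)⁻¹ • ketBra (x + u) with hB
  have hBx : B x = x + u := inv_sq_norm_smul_ketBra_add_apply hx hxu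
  have hφB : ∃ k : ℝ, φ B (U x) = (c : ℂ) • U (x + u) + (k : ℂ) • U x := by
    have hUxu := (h.isImplementedBy.inner_eq_zero_iff hdim).2 hxu
    have hmod := h.modScalar_map (x + u) (‖x‖ ^ 2)⁻¹
    rw [← map_smul, mul_smul, map_add U, ← U.norm_map x] at hmod
    obtain ⟨k, hk⟩ := modScalar_eq_iff.1 hmod
    refine ⟨k, ?_⟩
    rw [hB, ← U.norm_map x, hk, coe_add_apply, coe_smul_apply c, coe_smul_apply k, coe_one_apply,
      inv_sq_norm_smul_ketBra_add_apply (U.injective.ne_iff' (map_zero U) |>.2 hx) hUxu, map_add]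
  have heig : CommC (A - B) (ketBra x) := commC_ketBra_of_apply_eq (l := l - 1) <| by
    rw [coe_sub_apply, hAx, hBx]; module
  obtain ⟨a, ha⟩ := heig.exists_apply_eq_smul
  obtain ⟨b, hb⟩ := (h.isImplementedBy.commC_sub_ketBra_iff.2 heig).exists_apply_eq_smul
  obtain ⟨k, hk⟩ := hφB
  refine ⟨b + k - c * a, ?_⟩
  rw [coe_sub_apply, sub_eq_iff_eq_add] at ha hb
  rw [hb, hk, ha, hBx, map_add U (_ • x), map_smulₛₗ, h.map_ofReal]
  push_cast
  module

theorem exists_forall_map_apply_eq [RingHomSurjective σ] (h : IsConjOnRankOne φ c U)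
    (hdim : 3 ≤ Module.rank ℂ H) (A : Bₛ(H)) :
    ∃ m : ℝ, ∀ x, φ A (U x) = (c : ℂ) • U (A x) + (m : ℂ) • U x := by
  obtain ⟨m, hm⟩ := exists_forall_apply_eq_smul (c := ((↑) : ℝ → ℂ)) (g := U.toLinearMap)
    (f := (φ A : H →L[ℂ] H).toLinearMap ∘ₛₗ U.toLinearMap -
      (c : ℂ) • (U.toLinearMap ∘ₛₗ (A : H →L[ℂ] H).toLinearMap))
    U.injective (h.exists_map_apply_eq hdim A)
  exact ⟨m, fun x => sub_eq_iff_eq_add'.1 (hm x)⟩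

theorem isometry_surjective [RingHomSurjective σ] (h : IsConjOnRankOne φ c U)
    (hdim : 3 ≤ Module.rank ℂ H) : Function.Surjective U := fun y => by
  obtain ⟨e, he, -⟩ := exists_norm_eq_one_inner_eq_zero hdim 0 0
  obtain ⟨l, w, rfl, hw⟩ := exists_eq_smul_add_inner_eq_zero (U e) y
  have hw' := inner_eq_zero_symm.1 hw
  have hUe : ⟪U e, U e⟫_ℂ = 1 := inner_self_eq_one_of_norm_eq_one ((U.norm_map e).trans he)
  obtain ⟨A, hA⟩ := h.surjective (ketBra (U e + w) - ketBra (U e) - ketBra w)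
  obtain ⟨m, hm⟩ := h.exists_forall_map_apply_eq hdim A
  have hAe : φ A (U e) = w := by
    rw [hA, coe_sub_apply, coe_sub_apply, ketBra_apply_of_inner_eq_zero hw', ketBra_apply,
      ketBra_apply, inner_add_left, hw', hUe]
    module
  obtain ⟨l', rfl⟩ := σ.surjective l
  refine ⟨l' • e + ((c : ℂ) • A e + (m : ℂ) • e), ?_⟩
  rw [← hAe, hm, map_add, map_add, map_smulₛₗ, map_smulₛₗ, map_smulₛₗ, h.map_ofReal,
    h.map_ofReal]

theorem eq_zero_of_anticommute (h : IsConjOnRankOne φ c U) {f : Bₛ(H) → ℝ}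
    (hf : ∀ A x, φ A (U x) = (c : ℂ) • U (A x) + (f A : ℂ) • U x) (hAB : ¬CommC A B)
    (hanti : (A : H →L[ℂ] H) * (B : H →L[ℂ] H) + (B : H →L[ℂ] H) * (A : H →L[ℂ] H) = 0) :
    f B = 0 := by
  have hQ : CommQ (c • A + (f A - f 0) • 1) (c • B + f B • 1) := by
    refine CommQ.of_intertwine (U := U) (P := φ A - φ 0) (Q := φ B) (fun x => ?_) (fun x => ?_)
      ((h.commQ_sub_iff A 0 B).1 (Or.inr (by rwa [sub_zero])))
    · rw [coe_sub_apply, hf, hf, coe_zero_apply, coe_add_apply, coe_smul_apply, coe_smul_apply,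
        coe_one_apply, map_add, map_smulₛₗ, map_smulₛₗ, h.map_ofReal, h.map_ofReal, map_zero]
      push_cast
      module
    · rw [hf, coe_add_apply, coe_smul_apply, coe_smul_apply, coe_one_apply, map_add, map_smulₛₗ,
        map_smulₛₗ, h.map_ofReal, h.map_ofReal]
  rcases hQ with hcomm | hanti'
  · have hcomm' : CommC B (c • A + (f A - f 0) • 1) :=
      (commC_smul_add_iff h.ne_zero).1 (Eq.symm hcomm)
    exact absurd ((commC_smul_add_iff h.ne_zero).1 hcomm'.symm) hAB
  · exact eq_zero_of_smul_add_mul_add_mul_eq_zero h.ne_zero hanti hAB hanti'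

theorem exists_equiv_forall_map_apply_eq [RingHomInvPair σ σ] (h : IsConjOnRankOne φ c U)
    (hdim : 3 ≤ Module.rank ℂ H) : ∃ f : Bₛ(H) → ℝ,
      (∃ V : H ≃ₛₗᵢ[σ] H, ∀ A x, φ A x = (c : ℂ) • V (A (V.symm x)) + (f A : ℂ) • x) ∧
      ∀ A B : Bₛ(H), ¬CommC A B →
        (A : H →L[ℂ] H) * (B : H →L[ℂ] H) + (B : H →L[ℂ] H) * (A : H →L[ℂ] H) = 0 → f A = 0 := by
  choose f hf using h.exists_forall_map_apply_eq hdim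
  let V : H ≃ₛₗᵢ[σ] H := LinearIsometryEquiv.ofSurjective U (h.isometry_surjective hdim)
  refine ⟨f, ⟨V, fun A x => ?_⟩, fun A B hAB hanti =>
    h.eq_zero_of_anticommute hf (mt CommC.symm hAB) ((add_comm _ _).trans hanti)⟩
  obtain ⟨x, rfl⟩ := V.surjective x
  rw [V.symm_apply_apply]
  exact hf A x

end IsConjOnRankOne

end Conjugation

theorem stmt2
    (hdim : 3 ≤ Module.rank ℂ H)
    (φ : selfAdjoint (H →L[ℂ] H) → selfAdjoint (H →L[ℂ] H))
    (hsurj : Function.Surjective φ)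
    (hpres : ∀ A B C : selfAdjoint (H →L[ℂ] H),
      CommQ (A - B) C ↔ CommQ (φ A - φ B) (φ C)) :
    ∃ c : ℝ, c ≠ 0 ∧ ∃ f : selfAdjoint (H →L[ℂ] H) → ℝ,
      ((∃ U : H ≃ₗᵢ[ℂ] H, ∀ (A : selfAdjoint (H →L[ℂ] H)) (x : H),
          (φ A : H →L[ℂ] H) x = (c : ℂ) • U ((A : H →L[ℂ] H) (U.symm x)) + (f A : ℂ) • x) ∨
       (∃ U : H ≃ₗᵢ⋆[ℂ] H, ∀ (A : selfAdjoint (H →L[ℂ] H)) (x : H),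
          (φ A : H →L[ℂ] H) x = (c : ℂ) • U ((A : H →L[ℂ] H) (U.symm x)) + (f A : ℂ) • x)) ∧
      (∀ A : selfAdjoint (H →L[ℂ] H),
        (∃ B : selfAdjoint (H →L[ℂ] H), B ≠ 0 ∧ ¬ CommC A B ∧
          (A : H →L[ℂ] H) * (B : H →L[ℂ] H) + (B : H →L[ℂ] H) * (A : H →L[ℂ] H) = 0) →
        f A = 0) := by
  have h : IsCommQPreserver φ := ⟨hsurj, hpres⟩
  obtain ⟨c, ⟨U, hU⟩ | ⟨U, hU⟩⟩ := h.exists_isConjOnRankOne hdim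
  · obtain ⟨f, hf, hzero⟩ := hU.exists_equiv_forall_map_apply_eq hdim
    exact ⟨c, hU.ne_zero, f, Or.inl hf, fun A ⟨B, _, hAB, hanti⟩ => hzero A B hAB hanti⟩
  · obtain ⟨f, hf, hzero⟩ := hU.exists_equiv_forall_map_apply_eq hdim
    exact ⟨c, hU.ne_zero, f, Or.inr hf, fun A ⟨B, _, hAB, hanti⟩ => hzero A B hAB hanti⟩
end
end

section
/- Let H be a complex Hilbert space with dim H ≥ 3 and let φ : B_s(H) → B_s(H) be an additive surjective map such that for all A, B ∈ B_s(H), A ↔_q B if and only if φ(A) ↔_q φ(B). Then there exist a nonzero real scalar c, an operator U on H that is either unitary or antiunitary, and an additive function f : B_s(H) → ℝ such that φ(A) = c·U A U* + f(A)·I for all A ∈ B_s(H). -/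
noncomputable section

variable {H : Type*} [NormedAddCommGroup H] [InnerProductSpace ℂ H] [CompleteSpace H]

/-!
Commutation itself can be expressed through quasi-commutation, since `A` commutes with `B` if and
only if it quasi-commutes with both `B` and `B + 1`; hence `φ` preserves commutation, and it
preserves anticommutation of noncommuting operators. For a unit vector `e`, the symmetry
`S = 2 e ⊗ e - 1` is singled out, up to scalars, by the way commutation behaves on the operators
anticommuting with it, namely those of the form `e ⊗ x + x ⊗ e` with `x ⊥ e`. So
`φ S = α (2 f ⊗ f - 1)` for some unit vector `f`, and `φ (e ⊗ x + x ⊗ e) = f ⊗ g x + g x ⊗ f` for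
an additive bijection `g` of the orthogonal complements. Comparing `e ⊗ e - x ⊗ x` with
`e ⊗ x + x ⊗ e`, two anticommuting operators with proportional squares, shows that `g` is `|α|`
times an isometry, and `g (i x) = ± i g x` since `e ⊗ x + x ⊗ e` anticommutes with
`e ⊗ i x + i x ⊗ e`. Thus `g / α` extends to a unitary or antiunitary `U`, and `φ` agrees modulo
scalars with `A ↦ α U A U⁻¹` on rank one projections. Commutation with these projections then
determines `φ A` modulo scalars.
-/

open scoped InnerProductSpace ComplexConjugate

section AntiCommute

variable {R : Type*} [Ring R] {a b : R}

/-- Two elements of a ring anticommute if `a * b + b * a = 0`. -/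
def AntiCommute (a b : R) : Prop :=
  a * b + b * a = 0

theorem AntiCommute.mul_eq_neg (h : AntiCommute a b) : a * b = -(b * a) :=
  eq_neg_of_add_eq_zero_left h

theorem AntiCommute.commute_mul_self (h : AntiCommute a b) : Commute (a * a) b := by
  rw [commute_iff_eq, mul_assoc, h.mul_eq_neg, mul_neg, ← mul_assoc, h.mul_eq_neg, neg_mul,
    neg_neg, mul_assoc]

theorem antiCommute_smul_left_iff {k : Type*} [DivisionRing k] [Module k R] [SMulCommClass k R R]
    [IsScalarTower k R R] {c : k} (hc : c ≠ 0) : AntiCommute (c • a) b ↔ AntiCommute a b := by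
  rw [AntiCommute, smul_mul_assoc, mul_smul_comm, ← smul_add, smul_eq_zero_iff_right hc,
    AntiCommute]

theorem AntiCommute.sub_left {c : R} (ha : AntiCommute a c) (hb : AntiCommute b c) :
    AntiCommute (a - b) c := by
  rw [AntiCommute, sub_mul, mul_sub, sub_add_sub_comm, ha, hb, sub_zero]

variable [IsAddTorsionFree R]

theorem AntiCommute.mul_eq_zero (h : AntiCommute a b) (hc : Commute a b) : a * b = 0 :=
  self_eq_neg.mp (h.mul_eq_neg.trans (congrArg _ hc.eq.symm))

theorem AntiCommute.eq_zero (h : AntiCommute a b) (hc : Commute a b) (ha : IsUnit a) : b = 0 :=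
  ha.mul_right_eq_zero.mp (h.mul_eq_zero hc)

theorem commute_of_commute_or_antiCommute_add_one (h : Commute a b ∨ AntiCommute a b)
    (h' : Commute a (b + 1) ∨ AntiCommute a (b + 1)) : Commute a b := by
  rcases h with h | h
  · exact h
  rcases h' with h' | h'
  · simpa using h'.sub_right (Commute.one_right a)
  · have : a + a = 0 := by
      rw [AntiCommute, mul_add, add_mul, mul_one, one_mul, add_add_add_comm, h, zero_add] at h'
      exact h'
    rw [← two_nsmul, nsmul_eq_zero_iff_right two_ne_zero] at this
    exact this ▸ Commute.zero_left b

theorem antiCommute_add_sub_iff : AntiCommute (a + b) (a - b) ↔ a * a = b * b := by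
  have : (a + b) * (a - b) + (a - b) * (a + b) = 2 • (a * a - b * b) := by noncomm_ring
  rw [AntiCommute, this, nsmul_eq_zero_iff_right two_ne_zero, sub_eq_zero]

theorem commute_add_sub_iff : Commute (a + b) (a - b) ↔ Commute a b := by
  have : (a + b) * (a - b) - (a - b) * (a + b) = 2 • (b * a - a * b) := by noncomm_ring
  rw [commute_iff_eq, ← sub_eq_zero, this, nsmul_eq_zero_iff_right two_ne_zero, sub_eq_zero,
    commute_iff_eq, eq_comm]

end AntiCommute

section BoundedOperators

variable {E : Type*} [NormedAddCommGroup E] [InnerProductSpace ℂ E] {A B : E →L[ℂ] E}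

instance : IsAddTorsionFree (E →L[ℂ] E) :=
  .of_isTorsionFree ℝ _

theorem commute_iff_forall_apply : Commute A B ↔ ∀ z, A (B z) = B (A z) :=
  ContinuousLinearMap.ext_iff

theorem antiCommute_iff_forall_apply : AntiCommute A B ↔ ∀ z, A (B z) + B (A z) = 0 :=
  ContinuousLinearMap.ext_iff

theorem exists_eq_smul_of_unit_eigenvector (T : E →ₗ[ℂ] E)
    (h : ∀ x : E, ‖x‖ = 1 → ∃ c : ℂ, T x = c • x) : ∃ c : ℂ, T = c • 1 := by
  refine LinearMap.exists_eq_smul_id_of_forall_notLinearIndependent fun v => ?_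
  rcases eq_or_ne v 0 with rfl | hv
  · exact fun hli => hli.ne_zero 0 rfl
  obtain ⟨c, hc⟩ := h _ (NormedSpace.norm_normalize hv)
  rw [LinearIndependent.pair_iff' hv]
  push Not
  refine ⟨c, ?_⟩
  conv_lhs => rw [← NormedSpace.norm_smul_normalize v]
  conv_rhs => rw [← NormedSpace.norm_smul_normalize v]
  rw [LinearMap.map_smul_of_tower, hc, smul_comm]

end BoundedOperators

/-- The bounded self-adjoint operators on `H`. -/
abbrev Obs (H : Type*) [NormedAddCommGroup H] [InnerProductSpace ℂ H] [CompleteSpace H] : Type _ :=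
  selfAdjoint (H →L[ℂ] H)

namespace Obs

instance : Module ℝ (Obs H) := inferInstanceAs (Module ℝ (selfAdjoint (H →L[ℂ] H)))

-- Shortcuts: the search for these instances through the lattice of subobjects is slow.
instance : DistribMulAction ℝ (Obs H) := Module.toDistribMulAction
instance : DistribSMul ℝ (Obs H) := DistribMulAction.toDistribSMul
instance : MulAction ℝ (Obs H) := DistribMulAction.toMulAction

instance : CoeFun (Obs H) fun _ => H → H := ⟨fun A => (A : H →L[ℂ] H)⟩

@[ext]
theorem ext {A B : Obs H} (h : ∀ z, A z = B z) : A = B :=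
  Subtype.ext (ContinuousLinearMap.ext h)

@[simp]
theorem add_apply (A B : Obs H) (z : H) : (A + B) z = A z + B z := rfl

@[simp]
theorem sub_apply (A B : Obs H) (z : H) : (A - B) z = A z - B z := rfl

@[simp]
theorem neg_apply (A : Obs H) (z : H) : (-A) z = -A z := rfl

@[simp]
theorem smul_apply (t : ℝ) (A : Obs H) (z : H) : (t • A) z = t • A z := rfl

@[simp]
theorem one_apply (z : H) : (1 : Obs H) z = z := rfl

theorem inner_apply_left (A : Obs H) (x y : H) : ⟪A x, y⟫_ℂ = ⟪x, A y⟫_ℂ :=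
  ContinuousLinearMap.isSelfAdjoint_iff_isSymmetric.mp A.2 x y

end Obs

/-- The symmetrized rank one operator `z ↦ ⟪y, z⟫ x + ⟪x, z⟫ y`, as a real bilinear function of
`x` and `y`. -/
def symRank : H →ₗ[ℝ] H →ₗ[ℝ] Obs H :=
  LinearMap.mk₂ ℝ
    (fun x y => ⟨InnerProductSpace.rankOne ℂ x y + InnerProductSpace.rankOne ℂ y x, by
      rw [selfAdjoint.mem_iff, star_add, ContinuousLinearMap.star_eq_adjoint,
        ContinuousLinearMap.star_eq_adjoint, InnerProductSpace.adjoint_rankOne,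
        InnerProductSpace.adjoint_rankOne, add_comm]⟩)
    (fun x₁ x₂ y => Obs.ext fun z => by simp; module)
    (fun c x y => Obs.ext fun z => by simp [inner_smul_left_eq_smul]; module)
    (fun x y₁ y₂ => Obs.ext fun z => by simp; module)
    (fun c x y => Obs.ext fun z => by simp [inner_smul_left_eq_smul]; module)

@[simp]
theorem symRank_apply (x y z : H) : symRank x y z = ⟪y, z⟫_ℂ • x + ⟪x, z⟫_ℂ • y := rfl

theorem symRank_comm (x y : H) : symRank x y = symRank y x :=
  Obs.ext fun z => by simp [add_comm]

section ScalarOperators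

variable {A : Obs H}

variable (H) in
/-- The real multiples of the identity. -/
def scalarOps : Submodule ℝ (Obs H) :=
  ℝ ∙ (1 : Obs H)

theorem one_mem_scalarOps : (1 : Obs H) ∈ scalarOps H :=
  Submodule.mem_span_singleton_self 1

theorem commute_of_mem_scalarOps (hA : A ∈ scalarOps H) (B : H →L[ℂ] H) : Commute A.1 B := by
  obtain ⟨r, rfl⟩ := Submodule.mem_span_singleton.mp hA
  exact (Commute.one_left B).smul_left r

theorem mem_scalarOps_of_coe_eq_smul_one {c : ℂ} (h : A.1 = c • 1) : A ∈ scalarOps H := by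
  have hstar : A.1 = conj c • 1 := by rw [← A.2.star_eq, h, star_smul, star_one]; rfl
  refine Submodule.mem_span_singleton.mpr ⟨c.re, Subtype.ext ?_⟩
  calc c.re • (1 : H →L[ℂ] H) = ((c + conj c) / 2) • (1 : H →L[ℂ] H) := by
        rw [Complex.add_conj, Complex.ofReal_mul, Complex.ofReal_ofNat,
          mul_div_cancel_left₀ _ two_ne_zero, Complex.coe_smul]
    _ = A.1 := by
        rw [add_div, add_smul, div_eq_inv_mul, div_eq_inv_mul, mul_smul, mul_smul, ← h, ← hstar]
        module

theorem apply_eq_smul_of_commute_symRank_self {x : H} (hx : ‖x‖ = 1)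
    (h : Commute A.1 (symRank x x).1) : A x = ⟪x, A x⟫_ℂ • x := by
  have := commute_iff_forall_apply.mp h x
  simp only [symRank_apply, inner_self_eq_one_of_norm_eq_one hx, one_smul, ← two_smul ℂ,
    map_smul] at this
  exact smul_right_injective H (two_ne_zero (α := ℂ)) this

theorem commute_symRank_self_of_apply_eq_smul {x : H} {r : ℝ} (h : A x = r • x) :
    Commute A.1 (symRank x x).1 := by
  refine commute_iff_forall_apply.mpr fun z => ?_
  have : ⟪x, A z⟫_ℂ = r • ⟪x, z⟫_ℂ := by
    rw [← A.inner_apply_left, h, inner_smul_left_eq_smul]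
  simp only [symRank_apply, map_add, map_smul, h, this, Complex.real_smul]
  rw [← Complex.coe_smul]
  module

theorem mem_scalarOps_of_forall_commute_symRank_self
    (h : ∀ x : H, ‖x‖ = 1 → Commute A.1 (symRank x x).1) : A ∈ scalarOps H := by
  obtain ⟨c, hc⟩ := exists_eq_smul_of_unit_eigenvector (A.1 : H →ₗ[ℂ] H)
    fun x hx => ⟨_, apply_eq_smul_of_commute_symRank_self hx (h x hx)⟩
  exact mem_scalarOps_of_coe_eq_smul_one (ContinuousLinearMap.coe_injective hc)

theorem commute_of_commQ {B : Obs H} (h : CommQ A B) (h' : CommQ A (B + 1)) :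
    Commute A.1 B.1 :=
  commute_of_commute_or_antiCommute_add_one h h'

theorem mem_scalarOps_iff_forall_commQ : A ∈ scalarOps H ↔ ∀ B, CommQ A B :=
  ⟨fun h B => .inl (commute_of_mem_scalarOps h B), fun h =>
    mem_scalarOps_of_forall_commute_symRank_self fun _ _ => commute_of_commQ (h _) (h _)⟩

theorem exists_eq_add_symRank (A : Obs H) {x : H} (hx : ‖x‖ = 1) :
    ∃ (C : Obs H) (w : (ℂ ∙ x)ᗮ), A = C + symRank x w ∧ Commute C.1 (symRank x x).1 := by
  obtain ⟨r, hr⟩ : ∃ r : ℝ, ⟪x, A x⟫_ℂ = r :=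
    Complex.conj_eq_iff_real.mp (by rw [inner_conj_symm, A.inner_apply_left])
  have hxx := inner_self_eq_one_of_norm_eq_one (𝕜 := ℂ) hx
  have hw : A x - r • x ∈ (ℂ ∙ x)ᗮ := by
    rw [Submodule.mem_orthogonal_singleton_iff_inner_right, inner_sub_right, hr,
      ← Complex.coe_smul, inner_smul_right, hxx, mul_one, sub_self]
  refine ⟨A - symRank x (A x - r • x), ⟨_, hw⟩, (sub_add_cancel _ _).symm,
    commute_symRank_self_of_apply_eq_smul (r := r) ?_⟩
  have hw' := Submodule.mem_orthogonal_singleton_iff_inner_left.mp hw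
  rw [Obs.sub_apply, symRank_apply, hw', hxx, zero_smul, one_smul, zero_add, sub_sub_cancel]

end ScalarOperators

section Axis

section

variable {E : Type*} [NormedAddCommGroup E] [InnerProductSpace ℂ E] {e : E}

@[simp]
theorem inner_coe_orthogonal_right (x : (ℂ ∙ e)ᗮ) : ⟪e, (x : E)⟫_ℂ = 0 :=
  Submodule.mem_orthogonal_singleton_iff_inner_right.mp x.2

@[simp]
theorem inner_coe_orthogonal_left (x : (ℂ ∙ e)ᗮ) : ⟪(x : E), e⟫_ℂ = 0 :=
  Submodule.mem_orthogonal_singleton_iff_inner_left.mp x.2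

end

variable {e : H}

/-- The symmetry `z ↦ 2 ⟪e, z⟫ e - z` attached to a unit vector `e`, equal to `1` on the line
through `e` and to `-1` on its orthogonal complement. -/
def axisSymmetry (e : H) : Obs H := symRank e e - 1

@[simp]
theorem axisSymmetry_apply (e z : H) : axisSymmetry e z = (2 * ⟪e, z⟫_ℂ) • e - z := by
  simp [axisSymmetry, two_mul, add_smul]

theorem axisSymmetry_apply_axis (he : ‖e‖ = 1) : axisSymmetry e e = e := by
  simp [he, two_smul]

theorem axisSymmetry_apply_coe (x : (ℂ ∙ e)ᗮ) : axisSymmetry e x = -(x : H) := by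
  simp

theorem axisSymmetry_mul_self (he : ‖e‖ = 1) : (axisSymmetry e).1 * (axisSymmetry e).1 = 1 := by
  ext z
  simp [he]
  module

theorem isUnit_axisSymmetry (he : ‖e‖ = 1) : IsUnit (axisSymmetry e).1 :=
  isUnit_iff_exists.mpr ⟨_, axisSymmetry_mul_self he, axisSymmetry_mul_self he⟩

theorem commute_axisSymmetry_iff {A : Obs H} :
    Commute A.1 (axisSymmetry e).1 ↔ Commute A.1 (symRank e e).1 := by
  refine ⟨fun h => ?_, fun h => h.sub_right (Commute.one_right _)⟩
  simpa [axisSymmetry] using h.add_right (Commute.one_right _)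

theorem antiCommute_axisSymmetry_symRank (he : ‖e‖ = 1) (x : (ℂ ∙ e)ᗮ) :
    AntiCommute (axisSymmetry e).1 (symRank e x).1 := by
  refine antiCommute_iff_forall_apply.mpr fun z => ?_
  simp [he]
  module

@[simp]
theorem symRank_apply_axis (he : ‖e‖ = 1) (x : (ℂ ∙ e)ᗮ) : symRank e x e = (x : H) := by
  simp [he]

theorem symRank_injective (he : ‖e‖ = 1) :
    Function.Injective fun x : (ℂ ∙ e)ᗮ => symRank e x := fun x y h =>
  Subtype.ext (by rw [← symRank_apply_axis he x, ← symRank_apply_axis he y]; exact congrArg (· e) h)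

theorem exists_eq_symRank_of_antiCommute_axisSymmetry {B : Obs H} (he : ‖e‖ = 1)
    (h : AntiCommute (axisSymmetry e).1 B.1) : ∃ x : (ℂ ∙ e)ᗮ, B = symRank e x := by
  have h1 := fun z => antiCommute_iff_forall_apply.mp h z
  simp only [axisSymmetry_apply, map_sub, map_smul] at h1
  have h0 : ⟪e, B e⟫_ℂ = 0 := by
    have h2 := congrArg (⟪e, ·⟫_ℂ) (h1 e)
    simp [he] at h2
    linear_combination h2
  refine ⟨⟨B e, Submodule.mem_orthogonal_singleton_iff_inner_right.mpr h0⟩, Obs.ext fun z => ?_⟩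
  refine smul_right_injective H (two_ne_zero (α := ℂ)) ?_
  simp only
  rw [← sub_eq_zero, ← neg_eq_zero, ← h1 z, symRank_apply, B.inner_apply_left]
  module

theorem exists_real_smul_of_commute_symRank {x y : (ℂ ∙ e)ᗮ} (he : ‖e‖ = 1) (hx : x ≠ 0)
    (h : Commute (symRank e x).1 (symRank e y).1) : ∃ t : ℝ, y = t • x := by
  have hcomm := commute_iff_forall_apply.mp h
  have he0 : e ≠ 0 := norm_ne_zero_iff.mp (by simp [he])
  have hne : ‖x‖ ^ 2 ≠ 0 := pow_ne_zero 2 (norm_ne_zero_iff.mpr hx)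
  obtain ⟨r, hr⟩ : ∃ r : ℝ, ⟪(y : H), (x : H)⟫_ℂ = r := by
    refine Complex.conj_eq_iff_real.mp (smul_left_injective ℂ he0 ?_)
    simpa [he, he0] using hcomm e
  have hyx : r • (x : H) = ⟪(x : H), (x : H)⟫_ℂ • (y : H) := by
    have := hcomm x
    simpa [hr, inner_self_eq_one_of_norm_eq_one he, -inner_self_eq_norm_sq_to_K] using this
  refine ⟨(‖x‖ ^ 2)⁻¹ * r, Subtype.ext ?_⟩
  rw [Submodule.coe_smul_of_tower, mul_smul, hyx, inner_self_eq_norm_sq_to_K,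
    ← RCLike.ofReal_pow, ← RCLike.real_smul_eq_coe_smul]
  exact (inv_smul_smul₀ hne _).symm

theorem scalarOps_eq_top_of_axisSymmetry_mem (he : ‖e‖ = 1)
    (h : axisSymmetry e ∈ scalarOps H) : scalarOps H = ⊤ := by
  obtain ⟨r, hr⟩ := Submodule.mem_span_singleton.mp h
  have happ : ∀ z, r • z = (2 * ⟪e, z⟫_ℂ) • e - z := fun z => by
    rw [← axisSymmetry_apply, ← hr, Obs.smul_apply, Obs.one_apply]
  have he0 : e ≠ 0 := norm_ne_zero_iff.mp (by simp [he])
  have hr1 : r = 1 := smul_left_injective ℝ he0 <| by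
    simp only [happ, inner_self_eq_one_of_norm_eq_one he]
    module
  have hz : ∀ z, z = ⟪e, z⟫_ℂ • e := fun z => by
    refine smul_right_injective H (two_ne_zero (α := ℂ)) ?_
    have := happ z
    rw [hr1, one_smul, eq_sub_iff_add_eq, ← two_smul ℂ] at this
    simpa only [mul_smul] using this
  refine eq_top_iff.mpr fun A _ => mem_scalarOps_of_coe_eq_smul_one (c := ⟪e, A e⟫_ℂ) ?_
  ext z
  conv_lhs => rw [hz z, map_smul, hz (A e)]
  conv_rhs => rw [hz z]
  simp [smul_smul]

end Axis

section Involution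

theorem commute_symRank_of_orthogonal {x y u v : H} (hxu : ⟪x, u⟫_ℂ = 0) (hxv : ⟪x, v⟫_ℂ = 0)
    (hyu : ⟪y, u⟫_ℂ = 0) (hyv : ⟪y, v⟫_ℂ = 0) :
    Commute (symRank x y).1 (symRank u v).1 :=
  commute_iff_forall_apply.mpr fun z => by
    simp [hxu, hxv, hyu, hyv, inner_eq_zero_symm.mp hxu, inner_eq_zero_symm.mp hxv,
      inner_eq_zero_symm.mp hyu, inner_eq_zero_symm.mp hyv]

theorem commute_of_antiCommute_axisSymmetry {e : H} {B C D : Obs H} (he : ‖e‖ = 1)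
    (hB : AntiCommute (axisSymmetry e).1 B.1) (hC : AntiCommute (axisSymmetry e).1 C.1)
    (hD : AntiCommute (axisSymmetry e).1 D.1) (hB0 : B ≠ 0)
    (hBC : Commute B.1 C.1) (hBD : Commute B.1 D.1) : Commute C.1 D.1 := by
  obtain ⟨x, rfl⟩ := exists_eq_symRank_of_antiCommute_axisSymmetry he hB
  obtain ⟨y, rfl⟩ := exists_eq_symRank_of_antiCommute_axisSymmetry he hC
  obtain ⟨z, rfl⟩ := exists_eq_symRank_of_antiCommute_axisSymmetry he hD
  have hx : x ≠ 0 := fun h => hB0 (by rw [h, Submodule.coe_zero, map_zero])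
  obtain ⟨s, rfl⟩ := exists_real_smul_of_commute_symRank he hx hBC
  obtain ⟨t, rfl⟩ := exists_real_smul_of_commute_symRank he hx hBD
  rw [Submodule.coe_smul_of_tower, Submodule.coe_smul_of_tower, map_smul, map_smul]
  exact ((Commute.refl _).smul_left s).smul_right t

variable {J : Obs H}

theorem antiCommute_symRank_of_apply_eq {u v : H} (hu : J u = u) (hv : J v = -v) :
    AntiCommute J.1 (symRank u v).1 := by
  refine antiCommute_iff_forall_apply.mpr fun z => ?_
  have hu' : ⟪u, J z⟫_ℂ = ⟪u, z⟫_ℂ := by rw [← J.inner_apply_left, hu]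
  have hv' : ⟪v, J z⟫_ℂ = -⟪v, z⟫_ℂ := by rw [← J.inner_apply_left, hv, inner_neg_left]
  simp only [symRank_apply, map_add, map_smul, hu, hv, hu', hv']
  module

theorem inner_eq_zero_of_apply_eq {u v : H} (hu : J u = u) (hv : J v = -v) : ⟪u, v⟫_ℂ = 0 := by
  have := J.inner_apply_left u v
  rwa [hu, hv, inner_neg_right, self_eq_neg] at this

theorem symRank_ne_zero_of_inner_eq_zero {x y : H} (hx : x ≠ 0) (hy : y ≠ 0)
    (hxy : ⟪x, y⟫_ℂ = 0) : symRank x y ≠ 0 := fun h => by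
  have : symRank x y y = 0 := by rw [h]; rfl
  simp [hxy, hx, hy] at this

theorem not_commute_symRank_symRank_I_smul {u v : H} (hu : ‖u‖ = 1) (hv : ‖v‖ = 1)
    (huv : ⟪u, v⟫_ℂ = 0) : ¬Commute (symRank u v).1 (symRank (Complex.I • u) v).1 := fun h => by
  have := commute_iff_forall_apply.mp h u
  have hI : -(Complex.I • u) = Complex.I • u := by
    simpa only [symRank_apply, inner_add_right, inner_smul_left, inner_smul_right, inner_neg_right,
      huv, inner_eq_zero_symm.mp huv, inner_self_eq_one_of_norm_eq_one hu,
      inner_self_eq_one_of_norm_eq_one hv, Complex.conj_I, neg_mul, mul_one, mul_zero, neg_zero,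
      neg_smul, zero_smul, one_smul, zero_add, add_zero, smul_zero, smul_neg] using this
  have := IsAddTorsionFree.of_isTorsionFree ℝ H
  rw [neg_eq_self, smul_eq_zero_iff_right Complex.I_ne_zero] at hI
  exact norm_ne_zero_iff.mp (hu ▸ one_ne_zero) hI

theorem eq_axisSymmetry_of_fixed (hJ : J.1 * J.1 = 1) {f : H} (hf : ‖f‖ = 1) (hJf : J f = f)
    (h : ∀ x, ⟪f, x⟫_ℂ = 0 → J x = x → x = 0) : J = axisSymmetry f := by
  ext z
  have hJJ : J (J z) = z := congrArg (· z) hJ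
  have hz : ⟪f, J z⟫_ℂ = ⟪f, z⟫_ℂ := by rw [← J.inner_apply_left, hJf]
  have hw := h (J z + z - (2 * ⟪f, z⟫_ℂ) • f)
    (by simp [hz, hf]; ring)
    (by rw [map_sub, map_add, map_smul, hJJ, hJf, add_comm z])
  rw [axisSymmetry_apply, eq_sub_iff_add_eq, ← sub_eq_zero, hw]

theorem eq_axisSymmetry_or_exists_orthogonal_fixed (hJ : J.1 * J.1 = 1) (hJ' : J ≠ -1) :
    (∃ f, ‖f‖ = 1 ∧ J = axisSymmetry f) ∨
      ∃ u x, ‖u‖ = 1 ∧ x ≠ 0 ∧ ⟪u, x⟫_ℂ = 0 ∧ J u = u ∧ J x = x := by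
  obtain ⟨z, hz⟩ : ∃ z, J z + z ≠ 0 := by
    contrapose! hJ'
    exact Obs.ext fun z => eq_neg_of_add_eq_zero_left (hJ' z)
  have hJz : J (J z + z) = J z + z := by
    rw [map_add, add_comm]
    exact congrArg (J z + ·) (congrArg (· z) hJ)
  set f := NormedSpace.normalize (J z + z) with hf_def
  have hf : ‖f‖ = 1 := NormedSpace.norm_normalize hz
  have hJf : J f = f := by
    rw [hf_def, NormedSpace.normalize, ContinuousLinearMap.map_smul_of_tower, hJz]
  by_cases h : ∀ x, ⟪f, x⟫_ℂ = 0 → J x = x → x = 0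
  · exact .inl ⟨f, hf, eq_axisSymmetry_of_fixed hJ hf hJf h⟩
  · push Not at h
    obtain ⟨x, hfx, hJx, hx⟩ := h
    exact .inr ⟨f, x, hf, hx, hfx, hJf, hJx⟩

theorem exists_eq_axisSymmetry_or_neg (hJ : J.1 * J.1 = 1) (hJs : J ∉ scalarOps H)
    (htrans : ∀ B C D : Obs H, AntiCommute J.1 B.1 → AntiCommute J.1 C.1 → AntiCommute J.1 D.1 →
      B ≠ 0 → Commute B.1 C.1 → Commute B.1 D.1 → Commute C.1 D.1) :
    ∃ f, ‖f‖ = 1 ∧ (J = axisSymmetry f ∨ J = -axisSymmetry f) := by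
  rcases eq_axisSymmetry_or_exists_orthogonal_fixed hJ
    fun h => hJs (h ▸ neg_mem one_mem_scalarOps) with ⟨f, hf, h⟩ | ⟨u, x, hu, hx, hux, hJu, hJx⟩
  · exact ⟨f, hf, .inl h⟩
  rcases eq_axisSymmetry_or_exists_orthogonal_fixed (J := -J) ((neg_mul_neg _ _).trans hJ)
    fun h => hJs (neg_injective h ▸ one_mem_scalarOps) with
    ⟨f, hf, h⟩ | ⟨v, y, hv, hy, hvy, hJv, hJy⟩
  · exact ⟨f, hf, .inr (neg_eq_iff_eq_neg.mp h)⟩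
  replace hJv : J v = -v := neg_eq_iff_eq_neg.mp hJv
  replace hJy : J y = -y := neg_eq_iff_eq_neg.mp hJy
  have hJIu : J (Complex.I • u) = Complex.I • u := by rw [map_smul, hJu]
  have hxy0 : symRank x y ≠ 0 :=
    symRank_ne_zero_of_inner_eq_zero hx hy (inner_eq_zero_of_apply_eq hJx hJy)
  refine (not_commute_symRank_symRank_I_smul hu hv (inner_eq_zero_of_apply_eq hJu hJv) ?_).elim
  exact htrans (symRank x y) _ _ (antiCommute_symRank_of_apply_eq hJx hJy)
    (antiCommute_symRank_of_apply_eq hJu hJv) (antiCommute_symRank_of_apply_eq hJIu hJv) hxy0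
    (commute_symRank_of_orthogonal (inner_eq_zero_symm.mp hux) (inner_eq_zero_of_apply_eq hJx hJv)
      (inner_eq_zero_symm.mp (inner_eq_zero_of_apply_eq hJu hJy)) (inner_eq_zero_symm.mp hvy))
    (commute_symRank_of_orthogonal
      (inner_eq_zero_symm.mp (by rw [inner_smul_left, hux, mul_zero]))
      (inner_eq_zero_of_apply_eq hJx hJv)
      (inner_eq_zero_symm.mp (inner_eq_zero_of_apply_eq hJIu hJy)) (inner_eq_zero_symm.mp hvy))

end Involution

theorem Obs.pos_of_mul_self_eq_smul_one {A : Obs H} {r : ℝ} (hA : A ≠ 0) (h : A.1 * A.1 = r • 1) :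
    0 < r := by
  obtain ⟨z, hz⟩ : ∃ z, A z ≠ 0 := by
    contrapose! hA
    exact Obs.ext hA
  have hAA : A (A z) = r • z := congrArg (· z) h
  have hnorm : ‖A z‖ ^ 2 = r * ‖z‖ ^ 2 := by
    rw [← inner_self_eq_norm_sq (𝕜 := ℂ), A.inner_apply_left, hAA, inner_smul_right_eq_smul,
      RCLike.smul_re, inner_self_eq_norm_sq]
  exact pos_of_mul_pos_left (hnorm ▸ pow_pos (norm_pos_iff.mpr hz) 2) (sq_nonneg _)

variable {K : Type*} [NormedAddCommGroup K] [InnerProductSpace ℂ K] [CompleteSpace K]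

/-- A surjective additive map between spaces of observables which preserves quasi-commutativity
in both directions. -/
structure QuasiCommutePreserver (φ : Obs H →+ Obs K) : Prop where
  surjective : Function.Surjective φ
  commQ_iff (A B : Obs H) : CommQ A B ↔ CommQ (φ A) (φ B)

namespace QuasiCommutePreserver

variable {φ : Obs H →+ Obs K} {A B : Obs H} {e : H}

theorem map_mem_scalarOps_iff (hφ : QuasiCommutePreserver φ) :
    φ A ∈ scalarOps K ↔ A ∈ scalarOps H := by
  simp only [mem_scalarOps_iff_forall_commQ, hφ.surjective.forall, hφ.commQ_iff]

theorem commute_map_iff (hφ : QuasiCommutePreserver φ) :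
    Commute (φ A).1 (φ B).1 ↔ Commute A.1 B.1 := by
  constructor <;> intro h
  · refine commute_of_commQ ((hφ.commQ_iff _ _).mpr (.inl h)) ((hφ.commQ_iff _ _).mpr (.inl ?_))
    have h1 := commute_of_mem_scalarOps
      (hφ.map_mem_scalarOps_iff.mpr one_mem_scalarOps) (φ A).1
    rw [map_add]
    exact h.add_right h1.symm
  · obtain ⟨C, hC⟩ := hφ.surjective (φ B + 1)
    have hCB : C - B ∈ scalarOps H := by
      rw [← hφ.map_mem_scalarOps_iff, map_sub, hC, add_sub_cancel_left]
      exact one_mem_scalarOps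
    have hAC : Commute A.1 C.1 := by
      rw [← sub_add_cancel C B]
      exact (commute_of_mem_scalarOps hCB A.1).symm.add_right h
    exact commute_of_commQ ((hφ.commQ_iff _ _).mp (.inl h)) (hC ▸ (hφ.commQ_iff _ _).mp (.inl hAC))

theorem antiCommute_map_iff (hφ : QuasiCommutePreserver φ) (h : ¬Commute A.1 B.1) :
    AntiCommute (φ A).1 (φ B).1 ↔ AntiCommute A.1 B.1 :=
  ((or_iff_right (hφ.commute_map_iff.not.mpr h)).symm.trans (hφ.commQ_iff A B).symm).trans
    (or_iff_right h)

theorem antiCommute_map_axisSymmetry (hφ : QuasiCommutePreserver φ) (he : ‖e‖ = 1)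
    (h : AntiCommute (axisSymmetry e).1 B.1) : AntiCommute (φ (axisSymmetry e)).1 (φ B).1 := by
  by_cases hc : Commute (axisSymmetry e).1 B.1
  · obtain rfl : B = 0 :=
      Subtype.ext (h.eq_zero hc (isUnit_axisSymmetry he))
    rw [map_zero]
    exact (congrArg₂ _ (mul_zero _) (zero_mul _)).trans (add_zero 0)
  · exact (hφ.antiCommute_map_iff hc).mpr h

theorem map_axisSymmetry_mul_self (hφ : QuasiCommutePreserver φ) (he : ‖e‖ = 1)
    (hS : axisSymmetry e ∉ scalarOps H) :
    ∃ r : ℝ, 0 < r ∧ (φ (axisSymmetry e)).1 * (φ (axisSymmetry e)).1 = r • 1 := by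
  set S := φ (axisSymmetry e)
  have hcomm : ∀ B : Obs K, Commute (S.1 * S.1) B.1 := fun B => by
    obtain ⟨A, rfl⟩ := hφ.surjective B
    obtain ⟨C, w, rfl, hC⟩ := exists_eq_add_symRank A he
    have hSC : Commute S.1 (φ C).1 :=
      hφ.commute_map_iff.mpr (commute_axisSymmetry_iff.mpr hC).symm
    have hSw := hφ.antiCommute_map_axisSymmetry he (antiCommute_axisSymmetry_symRank he w)
    rw [map_add]
    exact (hSC.mul_left hSC).add_right hSw.commute_mul_self
  obtain ⟨r, hr⟩ := Submodule.mem_span_singleton.mp <|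
    mem_scalarOps_of_forall_commute_symRank_self
      (A := ⟨S.1 * S.1, by rw [selfAdjoint.mem_iff, star_mul, S.2.star_eq]⟩)
      fun x _ => hcomm (symRank x x)
  have hS' : S ∉ scalarOps K := hφ.map_mem_scalarOps_iff.not.mpr hS
  have hS0 : S ≠ 0 := fun h => hS' (h ▸ zero_mem (scalarOps K))
  exact ⟨r, Obs.pos_of_mul_self_eq_smul_one hS0 (congrArg Subtype.val hr.symm),
    congrArg Subtype.val hr.symm⟩

theorem isUnit_map_axisSymmetry (hφ : QuasiCommutePreserver φ) (he : ‖e‖ = 1)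
    (hS : axisSymmetry e ∉ scalarOps H) : IsUnit (φ (axisSymmetry e)).1 := by
  obtain ⟨r, hr, h⟩ := hφ.map_axisSymmetry_mul_self he hS
  refine isUnit_iff_exists.mpr ⟨r⁻¹ • (φ (axisSymmetry e)).1, ?_, ?_⟩
  · rw [mul_smul_comm, h, inv_smul_smul₀ hr.ne']
  · rw [smul_mul_assoc, h, inv_smul_smul₀ hr.ne']

theorem exists_map_symRank_eq (hφ : QuasiCommutePreserver φ) (he : ‖e‖ = 1)
    (hS : axisSymmetry e ∉ scalarOps H) {B : Obs K}
    (h : AntiCommute (φ (axisSymmetry e)).1 B.1) : ∃ x : (ℂ ∙ e)ᗮ, φ (symRank e x) = B := by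
  obtain ⟨A, rfl⟩ := hφ.surjective B
  by_cases hc : Commute (axisSymmetry e).1 A.1
  · refine ⟨0, Subtype.ext ?_⟩
    rw [h.eq_zero (hφ.commute_map_iff.mpr hc) (hφ.isUnit_map_axisSymmetry he hS),
      Submodule.coe_zero, map_zero, map_zero, AddSubgroup.coe_zero]
  · obtain ⟨x, rfl⟩ :=
      exists_eq_symRank_of_antiCommute_axisSymmetry he ((hφ.antiCommute_map_iff hc).mp h)
    exact ⟨x, rfl⟩

theorem commute_of_antiCommute_map_axisSymmetry (hφ : QuasiCommutePreserver φ) (he : ‖e‖ = 1)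
    (hS : axisSymmetry e ∉ scalarOps H) {B C D : Obs K}
    (hB : AntiCommute (φ (axisSymmetry e)).1 B.1) (hC : AntiCommute (φ (axisSymmetry e)).1 C.1)
    (hD : AntiCommute (φ (axisSymmetry e)).1 D.1) (hB0 : B ≠ 0)
    (hBC : Commute B.1 C.1) (hBD : Commute B.1 D.1) : Commute C.1 D.1 := by
  obtain ⟨x, rfl⟩ := hφ.exists_map_symRank_eq he hS hB
  obtain ⟨y, rfl⟩ := hφ.exists_map_symRank_eq he hS hC
  obtain ⟨z, rfl⟩ := hφ.exists_map_symRank_eq he hS hD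
  exact hφ.commute_map_iff.mpr (commute_of_antiCommute_axisSymmetry he
    (antiCommute_axisSymmetry_symRank he x) (antiCommute_axisSymmetry_symRank he y)
    (antiCommute_axisSymmetry_symRank he z) (fun h => hB0 (by rw [h, map_zero]))
    (hφ.commute_map_iff.mp hBC) (hφ.commute_map_iff.mp hBD))

theorem exists_map_axisSymmetry_eq_smul (hφ : QuasiCommutePreserver φ) (he : ‖e‖ = 1)
    (hS : axisSymmetry e ∉ scalarOps H) :
    ∃ (f : K) (α : ℝ), ‖f‖ = 1 ∧ α ≠ 0 ∧ φ (axisSymmetry e) = α • axisSymmetry f := by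
  obtain ⟨r, hr, hsq⟩ := hφ.map_axisSymmetry_mul_self he hS
  set S := φ (axisSymmetry e)
  set J := (√r)⁻¹ • S
  have hr' : √r ≠ 0 := (Real.sqrt_pos.mpr hr).ne'
  have hSJ : S = √r • J := (smul_inv_smul₀ hr' S).symm
  have hJ : J.1 * J.1 = 1 := by
    change ((√r)⁻¹ • S.1) * ((√r)⁻¹ • S.1) = 1
    rw [smul_mul_smul_comm, hsq, smul_smul, ← mul_inv, Real.mul_self_sqrt hr.le,
      inv_mul_cancel₀ hr.ne', one_smul]
  have hS' : S ∉ scalarOps K := hφ.map_mem_scalarOps_iff.not.mpr hS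
  have hJs : J ∉ scalarOps K := fun h => hS' (by rw [hSJ]; exact Submodule.smul_mem _ _ h)
  have hanti : ∀ B : Obs K, AntiCommute J.1 B.1 → AntiCommute S.1 B.1 := fun B h =>
    hSJ ▸ (antiCommute_smul_left_iff hr').mpr h
  obtain ⟨f, hf, hJf | hJf⟩ := exists_eq_axisSymmetry_or_neg hJ hJs fun B C D hB hC hD =>
    hφ.commute_of_antiCommute_map_axisSymmetry he hS (hanti B hB) (hanti C hC) (hanti D hD)
  · exact ⟨f, √r, hf, hr', hJf ▸ hSJ⟩
  · exact ⟨f, -√r, hf, neg_ne_zero.mpr hr', Obs.ext fun z => by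
      rw [hSJ, hJf, Obs.smul_apply, Obs.neg_apply, Obs.smul_apply, smul_neg, neg_smul]⟩

end QuasiCommutePreserver

/-- `φ` carries the symmetry with axis `e` to `α` times the symmetry with axis `f`, and acts on the
operators `symRank e x`, `x ⊥ e`, which anticommute with that symmetry, through the additive map
`g` between the orthogonal complements of the two axes. -/
structure AxisTransport (φ : Obs H →+ Obs K) (e : H) (f : K) (α : ℝ)
    (g : (ℂ ∙ e)ᗮ →+ (ℂ ∙ f)ᗮ) : Prop extends QuasiCommutePreserver φ where
  norm_source : ‖e‖ = 1
  norm_target : ‖f‖ = 1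
  ne_zero : α ≠ 0
  map_axisSymmetry : φ (axisSymmetry e) = α • axisSymmetry f
  map_symRank (x : (ℂ ∙ e)ᗮ) : φ (symRank e x) = symRank f (g x)

theorem QuasiCommutePreserver.exists_axisTransport {φ : Obs H →+ Obs K} {e : H}
    (hφ : QuasiCommutePreserver φ) (he : ‖e‖ = 1) (hS : axisSymmetry e ∉ scalarOps H) :
    ∃ (f : K) (α : ℝ) (g : (ℂ ∙ e)ᗮ →+ (ℂ ∙ f)ᗮ), AxisTransport φ e f α g := by
  obtain ⟨f, α, hf, hα, hmap⟩ := hφ.exists_map_axisSymmetry_eq_smul he hS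
  have hanti : ∀ x : (ℂ ∙ e)ᗮ, AntiCommute (axisSymmetry f).1 (φ (symRank e x)).1 := fun x => by
    have h := hφ.antiCommute_map_axisSymmetry he (antiCommute_axisSymmetry_symRank he x)
    rw [hmap] at h
    exact (antiCommute_smul_left_iff hα).mp h
  choose g hg using fun x => exists_eq_symRank_of_antiCommute_axisSymmetry hf (hanti x)
  have hadd : ∀ x y, g (x + y) = g x + g y := fun x y => symRank_injective hf <| by
    simp only [Submodule.coe_add, map_add, ← hg]
  exact ⟨f, α, .mk' g hadd, hφ, he, hf, hα, hmap, hg⟩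

section Square

variable {f : K} {x X : (ℂ ∙ f)ᗮ} {D : Obs K} {α : ℝ}

theorem antiCommute_symRank_sub_symRank (hf : ‖f‖ = 1) (hx : ‖x‖ = 1) :
    AntiCommute (symRank f f - symRank (x : K) x).1 (symRank f x).1 := by
  refine antiCommute_iff_forall_apply.mpr fun z => ?_
  have hx' : ‖(x : K)‖ = 1 := hx
  simp [hf, hx']
  module

theorem not_commute_symRank_sub_symRank (hf : ‖f‖ = 1) (hx : ‖x‖ = 1) :
    ¬Commute (symRank f f - symRank (x : K) x).1 (symRank f x).1 := fun h => by
  have hx' : ‖(x : K)‖ = 1 := hx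
  have := congrArg (· f) ((antiCommute_symRank_sub_symRank hf hx).mul_eq_zero h)
  change (symRank f f - symRank (x : K) x) (symRank f x f) = 0 at this
  have h0 : -(x : K) + -x = 0 := by simpa [hf, hx'] using this
  rw [← neg_add, neg_eq_zero, ← two_smul ℂ, smul_eq_zero_iff_right two_ne_zero] at h0
  exact one_ne_zero (hx'.symm.trans (norm_eq_zero.mpr h0))

theorem symRank_sub_symRank_mul_self (hf : ‖f‖ = 1) (hx : ‖x‖ = 1) :
    (symRank f f - symRank (x : K) x).1 * (symRank f f - symRank (x : K) x).1 =
      ((2 : ℝ) • symRank f x).1 * ((2 : ℝ) • symRank f x).1 := by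
  ext z
  have hx' : ‖(x : K)‖ = 1 := hx
  change (symRank f f - symRank (x : K) x) _ = ((2 : ℝ) • symRank f x) _
  simp [hf, hx']
  module

theorem commute_axisSymmetry_add_axisSymmetry (hf : ‖f‖ = 1) (hx : ‖x‖ = 1) :
    Commute (axisSymmetry f + axisSymmetry (x : K)).1 (symRank f x).1 := by
  refine commute_iff_forall_apply.mpr fun z => ?_
  have hx' : ‖(x : K)‖ = 1 := hx
  simp [hf, hx']
  module

theorem symRank_apply_coe (x y : (ℂ ∙ f)ᗮ) : symRank f (x : K) y = ⟪(x : K), y⟫_ℂ • f := by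
  simp

theorem apply_eq_of_commute_two_smul_axisSymmetry_sub (hf : ‖f‖ = 1) (hX : X ≠ 0) (hα : α ≠ 0)
    (hanti : AntiCommute D.1 (symRank f X).1)
    (hcomm : Commute ((2 * α) • axisSymmetry f - D).1 (symRank f X).1) :
    D f = (2 * α) • f ∧ D X = -((2 * α) • (X : K)) := by
  have hsymm : AntiCommute ((2 * α) • axisSymmetry f).1 (symRank f X).1 :=
    (antiCommute_smul_left_iff (mul_ne_zero two_ne_zero hα)).mpr
      (antiCommute_axisSymmetry_symRank hf X)
  have hker : ∀ z, D (symRank f X z) = ((2 * α) • axisSymmetry f) (symRank f X z) := fun z =>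
    (sub_eq_zero.mp (congrArg (· z) ((hsymm.sub_left hanti).mul_eq_zero hcomm))).symm
  have hXX : ⟪(X : K), X⟫_ℂ ≠ 0 := inner_self_ne_zero.mpr (Submodule.coe_eq_zero.not.mpr hX)
  constructor
  · have := hker X
    rw [symRank_apply_coe, map_smul, map_smul] at this
    rw [smul_right_injective K hXX this, Obs.smul_apply, axisSymmetry_apply_axis hf]
  · have := hker f
    rw [symRank_apply_axis hf] at this
    rw [this, Obs.smul_apply, axisSymmetry_apply_coe, smul_neg]

theorem norm_sq_eq_of_mul_self_eq (hf : ‖f‖ = 1) (hDf : D f = (2 * α) • f)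
    (hsq : D.1 * D.1 = ((2 : ℝ) • symRank f X).1 * ((2 : ℝ) • symRank f X).1) :
    ‖X‖ ^ 2 = α ^ 2 := by
  have h : D (D f) = ((2 : ℝ) • symRank f X) (((2 : ℝ) • symRank f X) f) := congrArg (· f) hsq
  have hinner : (2 * α * (2 * α) : ℂ) = 2 * (2 * ‖X‖ ^ 2) := by
    simpa [hDf, hf] using congrArg (⟪f, ·⟫_ℂ) h
  have : 2 * α * (2 * α) = 2 * (2 * ‖X‖ ^ 2) := mod_cast hinner
  linarith

theorem eq_symRank_sub_of_mul_self_eq (hf : ‖f‖ = 1) (hα : α ≠ 0) (hX : ‖X‖ ^ 2 = α ^ 2)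
    (hDf : D f = (2 * α) • f) (hDX : D X = -((2 * α) • (X : K)))
    (hsq : D.1 * D.1 = ((2 : ℝ) • symRank f X).1 * ((2 : ℝ) • symRank f X).1) :
    D = α • symRank f f - α⁻¹ • symRank (X : K) X := by
  have hker : ∀ z, ⟪f, z⟫_ℂ = 0 → ⟪(X : K), z⟫_ℂ = 0 → D z = 0 := fun z hfz hXz => by
    have h : D (D z) = ((2 : ℝ) • symRank f X) (((2 : ℝ) • symRank f X) z) := congrArg (· z) hsq
    rw [Obs.smul_apply _ _ z, symRank_apply, hfz, hXz, zero_smul, zero_smul, add_zero, smul_zero,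
      map_zero] at h
    rw [← inner_self_eq_zero (𝕜 := ℂ), D.inner_apply_left, h, inner_zero_right]
  ext z
  have h := hker (z - ⟪f, z⟫_ℂ • f - ((α ^ 2)⁻¹ * ⟪(X : K), z⟫_ℂ) • (X : K)) ?_ ?_
  · rw [map_sub, map_sub, map_smul, map_smul, hDf, hDX, sub_sub, sub_eq_zero] at h
    simp only [h, Obs.sub_apply, Obs.smul_apply, symRank_apply]
    simp only [← Complex.coe_smul]
    push_cast
    have : (α : ℂ) ≠ 0 := mod_cast hα
    match_scalars <;> field_simp <;> ring
  · simp [hf]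
  · have hX' : (‖(X : K)‖ : ℂ) ^ 2 = α ^ 2 := mod_cast hX
    have : (α : ℂ) ≠ 0 := mod_cast hα
    simp [hX']
    field_simp
    ring

end Square

namespace AxisTransport

variable {φ : Obs H →+ Obs K} {e : H} {f : K} {α : ℝ} {g : (ℂ ∙ e)ᗮ →+ (ℂ ∙ f)ᗮ}

theorem surjective_transport (h : AxisTransport φ e f α g) (hS : axisSymmetry e ∉ scalarOps H) :
    Function.Surjective g := fun y => by
  have hy : AntiCommute (φ (axisSymmetry e)).1 (symRank f y).1 := by
    rw [h.map_axisSymmetry]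
    exact (antiCommute_smul_left_iff h.ne_zero).mpr
      (antiCommute_axisSymmetry_symRank h.norm_target y)
  obtain ⟨x, hx⟩ := h.exists_map_symRank_eq h.norm_source hS hy
  exact ⟨x, symRank_injective h.norm_target ((h.map_symRank x).symm.trans hx)⟩

theorem injective_transport (h : AxisTransport φ e f α g) : Function.Injective g := by
  refine (injective_iff_map_eq_zero g).mpr fun x hx => ?_
  have hs : symRank e (x : H) ∈ scalarOps H := by
    rw [← h.map_mem_scalarOps_iff, h.map_symRank, hx, Submodule.coe_zero, map_zero]
    exact zero_mem _
  have h0 := (antiCommute_axisSymmetry_symRank h.norm_source x).eq_zero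
    (commute_of_mem_scalarOps hs _).symm (isUnit_axisSymmetry h.norm_source)
  refine symRank_injective h.norm_source (Subtype.ext ?_)
  simp [h0]

theorem norm_sq_and_map_symRank_sub (h : AxisTransport φ e f α g) {x : (ℂ ∙ e)ᗮ} (hx : ‖x‖ = 1) :
    ‖g x‖ ^ 2 = α ^ 2 ∧ φ (symRank e e - symRank (x : H) x) =
      α • symRank f f - α⁻¹ • symRank (g x : K) (g x) := by
  set W := symRank e e - symRank (x : H) x with hW
  have hanti : AntiCommute (φ W).1 (symRank f (g x)).1 :=
    h.map_symRank x ▸ (h.antiCommute_map_iff (not_commute_symRank_sub_symRank h.norm_source hx)).mpr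
      (antiCommute_symRank_sub_symRank h.norm_source hx)
  have hsq : (φ W).1 * (φ W).1 = ((2 : ℝ) • symRank f (g x)).1 * ((2 : ℝ) • symRank f (g x)).1 := by
    have hφB : φ ((2 : ℝ) • symRank e x) = (2 : ℝ) • symRank f (g x) := by
      rw [two_smul, two_smul, map_add, h.map_symRank]
    rw [← hφB]
    refine antiCommute_add_sub_iff.mp ?_
    have := (h.antiCommute_map_iff (A := W + (2 : ℝ) • symRank e x)
      (B := W - (2 : ℝ) • symRank e x) ?_).mpr
      (antiCommute_add_sub_iff.mpr (symRank_sub_symRank_mul_self h.norm_source hx))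
    · rwa [map_add φ W, map_sub φ W] at this
    · refine commute_add_sub_iff.not.mpr fun hc => ?_
      refine not_commute_symRank_sub_symRank h.norm_source hx ?_
      exact (Commute.smul_right_iff₀ (two_ne_zero (α := ℝ))).mp hc
  have hcomm : Commute ((2 * α) • axisSymmetry f - φ W).1 (symRank f (g x)).1 := by
    have hsum : φ (axisSymmetry e + axisSymmetry (x : H)) = (2 * α) • axisSymmetry f - φ W := by
      have : axisSymmetry e + axisSymmetry (x : H) = axisSymmetry e + axisSymmetry e - W := by
        rw [hW, axisSymmetry, axisSymmetry]; abel
      rw [this, map_sub, map_add, h.map_axisSymmetry, ← add_smul, two_mul]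
    rw [← hsum, ← h.map_symRank, h.commute_map_iff]
    exact commute_axisSymmetry_add_axisSymmetry h.norm_source hx
  have hx0 : g x ≠ 0 := (map_ne_zero_iff g h.injective_transport).mpr <|
    norm_ne_zero_iff.mp (hx ▸ one_ne_zero)
  obtain ⟨hf, hX⟩ := apply_eq_of_commute_two_smul_axisSymmetry_sub h.norm_target hx0 h.ne_zero
    hanti hcomm
  have hnorm := norm_sq_eq_of_mul_self_eq h.norm_target hf hsq
  exact ⟨hnorm, eq_symRank_sub_of_mul_self_eq h.norm_target h.ne_zero hnorm hf hX hsq⟩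

end AxisTransport

section Real

variable {E F : Type*} [NormedAddCommGroup E] [NormedSpace ℂ E]

theorem exists_norm_eq_one_add_eq {v : E} (hv : v ≠ 0) (hv2 : ‖v‖ ≤ 2) :
    ∃ u w : E, ‖u‖ = 1 ∧ ‖w‖ = 1 ∧ u + w = v := by
  set c : ℂ := ⟨‖v‖ / 2, √(1 - (‖v‖ / 2) ^ 2)⟩
  have hc : ‖c‖ = 1 := by
    have : 0 ≤ 1 - (‖v‖ / 2) ^ 2 := by nlinarith [norm_nonneg v]
    rw [← sq_eq_sq₀ (norm_nonneg c) zero_le_one, Complex.sq_norm, Complex.normSq_mk, ← sq, ← sq,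
      Real.sq_sqrt this]
    ring
  refine ⟨c • NormedSpace.normalize v, conj c • NormedSpace.normalize v, ?_, ?_, ?_⟩
  · rw [norm_smul, hc, NormedSpace.norm_normalize hv, one_mul]
  · rw [norm_smul, RCLike.norm_conj, hc, NormedSpace.norm_normalize hv, one_mul]
  · rw [← add_smul, Complex.add_conj, mul_div_cancel₀ _ two_ne_zero, Complex.coe_smul,
      NormedSpace.norm_smul_normalize]

theorem continuous_of_norm_map_le_of_norm_eq_one [SeminormedAddCommGroup F] [NormedSpace ℝ F]
    (g : E →+ F) {C : ℝ} (h : ∀ x, ‖x‖ = 1 → ‖g x‖ ≤ C) : Continuous g := by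
  refine g.continuous_of_isBounded_nhds_zero (Metric.closedBall_mem_nhds 0 two_pos) ?_
  refine (Metric.isBounded_closedBall (x := (0 : F)) (r := max 0 (C + C))).subset ?_
  rintro _ ⟨v, hv, rfl⟩
  rw [mem_closedBall_zero_iff] at hv ⊢
  rcases eq_or_ne v 0 with rfl | hv0
  · simp
  obtain ⟨u, w, hu, hw, rfl⟩ := exists_norm_eq_one_add_eq hv0 hv
  rw [map_add]
  exact ((norm_add_le _ _).trans (add_le_add (h u hu) (h w hw))).trans (le_max_right _ _)

end Real

section Semilinear

variable {E F : Type*} [AddCommGroup E] [Module ℂ E] [AddCommGroup F] [Module ℂ F]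

theorem forall_map_I_smul_eq_or_eq_neg (g : E →+ F)
    (h : ∀ x, g (Complex.I • x) = Complex.I • g x ∨ g (Complex.I • x) = -(Complex.I • g x)) :
    (∀ x, g (Complex.I • x) = Complex.I • g x) ∨ ∀ x, g (Complex.I • x) = -(Complex.I • g x) := by
  set g₁ := g.comp (DistribSMul.toAddMonoidHom E Complex.I)
  set g₂ := (DistribSMul.toAddMonoidHom F Complex.I).comp g
  have : ((⊤ : AddSubgroup E) : Set E) ⊆ g₁.eqLocus g₂ ∪ g₁.eqLocus (-g₂) := fun x _ => h x
  exact (AddSubgroupClass.subset_union.mp this).imp (fun h x => h trivial) fun h x => h trivial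

theorem map_smul_of_map_I_smul {σ : ℂ →+* ℂ} (hσ : ∀ r : ℝ, σ r = r) (g : E →ₗ[ℝ] F)
    (h : ∀ x, g (Complex.I • x) = σ Complex.I • g x) (c : ℂ) (x : E) :
    g (c • x) = σ c • g x := by
  have hre : ∀ (r : ℝ) (y : E), g ((r : ℂ) • y) = (r : ℂ) • g y := fun r y => by
    rw [Complex.coe_smul, map_smul, Complex.coe_smul]
  rw [← Complex.re_add_im c, map_add, map_mul, hσ, hσ, add_smul, mul_smul, map_add, hre, hre, h,
    add_smul, mul_smul]

end Semilinear

theorem eq_I_smul_or_eq_neg_of_antiCommute_symRank {f : K} {x y : (ℂ ∙ f)ᗮ} (hf : ‖f‖ = 1)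
    (hxy : ‖x‖ = ‖y‖) (h : AntiCommute (symRank f x).1 (symRank f y).1) :
    y = Complex.I • x ∨ y = -(Complex.I • x) := by
  rcases eq_or_ne x 0 with rfl | hx
  · exact .inl (by rw [smul_zero, ← norm_eq_zero, ← hxy, norm_zero])
  set n : ℂ := (‖x‖ : ℂ) ^ 2
  set c : ℂ := ⟪(y : K), x⟫_ℂ
  have hn : n ≠ 0 := by simpa [n] using hx
  have hcn : c • x + n • y = 0 := by
    have hz := antiCommute_iff_forall_apply.mp h x
    rw [symRank_apply_coe, symRank_apply_coe, map_smul, map_smul, symRank_apply_axis hf,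
      symRank_apply_axis hf, inner_self_eq_norm_sq_to_K] at hz
    exact Subtype.ext hz
  have hcc : (c - Complex.I * n) * (c + Complex.I * n) = 0 := by
    have hy : c * c + n * n = 0 := by
      have hy := congrArg (⟪y, ·⟫_ℂ) hcn
      rwa [inner_add_right, inner_smul_right, inner_smul_right, inner_self_eq_norm_sq_to_K, ← hxy,
        inner_zero_right] at hy
    linear_combination hy - n ^ 2 * Complex.I_sq
  have hny : n • y = (-c) • x := by rw [neg_smul, eq_neg_of_add_eq_zero_right hcn]
  rcases mul_eq_zero.mp hcc with hc | hc
  · refine .inr (smul_right_injective _ hn ?_)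
    simp only [hny, sub_eq_zero.mp hc, smul_neg, smul_smul, neg_smul, mul_comm n]
  · refine .inl (smul_right_injective _ hn ?_)
    simp only [hny, eq_neg_of_add_eq_zero_left hc, smul_smul, neg_neg, mul_comm n]

theorem antiCommute_symRank_I_smul {e : H} (he : ‖e‖ = 1) (x : (ℂ ∙ e)ᗮ) :
    AntiCommute (symRank e x).1 (symRank e (Complex.I • x : (ℂ ∙ e)ᗮ)).1 := by
  refine antiCommute_iff_forall_apply.mpr fun z => ?_
  rw [Submodule.coe_smul]
  simp only [symRank_apply, inner_add_right, inner_smul_left, inner_smul_right, Complex.conj_I,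
    inner_coe_orthogonal_left, inner_coe_orthogonal_right, inner_self_eq_one_of_norm_eq_one he]
  module

namespace AxisTransport

variable {φ : Obs H →+ Obs K} {e : H} {f : K} {α : ℝ} {g : (ℂ ∙ e)ᗮ →+ (ℂ ∙ f)ᗮ}

theorem norm_transport_of_norm_eq_one (h : AxisTransport φ e f α g) {x : (ℂ ∙ e)ᗮ}
    (hx : ‖x‖ = 1) : ‖g x‖ = |α| := by
  rw [← abs_norm, ← sq_eq_sq_iff_abs_eq_abs]
  exact (h.norm_sq_and_map_symRank_sub hx).1

theorem transport_real_smul (h : AxisTransport φ e f α g) (t : ℝ) (x : (ℂ ∙ e)ᗮ) :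
    g (t • x) = t • g x :=
  map_real_smul g (continuous_of_norm_map_le_of_norm_eq_one g fun _ hx =>
    (h.norm_transport_of_norm_eq_one hx).le) t x

theorem norm_transport (h : AxisTransport φ e f α g) (x : (ℂ ∙ e)ᗮ) : ‖g x‖ = |α| * ‖x‖ := by
  rcases eq_or_ne x 0 with rfl | hx
  · rw [map_zero, norm_zero, norm_zero, mul_zero]
  calc ‖g x‖ = ‖g (‖x‖ • NormedSpace.normalize x)‖ := by rw [NormedSpace.norm_smul_normalize]
    _ = |α| * ‖x‖ := by
      rw [h.transport_real_smul, norm_smul, norm_norm,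
        h.norm_transport_of_norm_eq_one (NormedSpace.norm_normalize hx), mul_comm]

theorem transport_I_smul (h : AxisTransport φ e f α g) (x : (ℂ ∙ e)ᗮ) :
    g (Complex.I • x) = Complex.I • g x ∨ g (Complex.I • x) = -(Complex.I • g x) := by
  rcases eq_or_ne x 0 with rfl | hx
  · exact .inl (by rw [smul_zero, map_zero, smul_zero])
  refine eq_I_smul_or_eq_neg_of_antiCommute_symRank h.norm_target
    (by rw [h.norm_transport, h.norm_transport, norm_smul, Complex.norm_I, one_mul]) ?_
  rw [← h.map_symRank, ← h.map_symRank]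
  refine (h.antiCommute_map_iff fun hc => ?_).mpr (antiCommute_symRank_I_smul h.norm_source x)
  obtain ⟨t, ht⟩ := exists_real_smul_of_commute_symRank h.norm_source hx hc
  have hI : Complex.I = t := smul_left_injective ℂ hx (ht.trans (Complex.coe_smul t x).symm)
  simpa using congrArg Complex.im hI

theorem transport_smul (h : AxisTransport φ e f α g) :
    (∀ (c : ℂ) x, g (c • x) = c • g x) ∨ ∀ (c : ℂ) x, g (c • x) = conj c • g x := by
  let gR : (ℂ ∙ e)ᗮ →ₗ[ℝ] (ℂ ∙ f)ᗮ := { g with map_smul' := h.transport_real_smul }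
  refine (forall_map_I_smul_eq_or_eq_neg g h.transport_I_smul).imp
    (map_smul_of_map_I_smul (σ := .id ℂ) (fun _ => rfl) gR)
    fun hI => map_smul_of_map_I_smul Complex.conj_ofReal gR fun x => ?_
  rw [Complex.conj_I, neg_smul]
  exact hI x

theorem exists_linearIsometryEquiv {σ : ℂ →+* ℂ} [RingHomInvPair σ σ]
    (h : AxisTransport φ e f α g) (hS : axisSymmetry e ∉ scalarOps H)
    (hg : ∀ (c : ℂ) x, g (c • x) = σ c • g x) :
    ∃ V : (ℂ ∙ e)ᗮ ≃ₛₗᵢ[σ] (ℂ ∙ f)ᗮ, ∀ x, g x = α • V x := by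
  let V₀ : (ℂ ∙ e)ᗮ →ₛₗᵢ[σ] (ℂ ∙ f)ᗮ :=
    { toFun x := α⁻¹ • g x
      map_add' x y := by rw [map_add, smul_add]
      map_smul' c x := by rw [hg, smul_comm]
      norm_map' x := by
        change ‖α⁻¹ • g x‖ = ‖x‖
        rw [norm_smul, norm_inv, Real.norm_eq_abs, h.norm_transport,
          inv_mul_cancel_left₀ (abs_ne_zero.mpr h.ne_zero)] }
  refine ⟨.ofSurjective V₀ fun y => ?_, fun x => (smul_inv_smul₀ h.ne_zero _).symm⟩
  obtain ⟨x, hx⟩ := h.surjective_transport hS (α • y)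
  exact ⟨x, (congrArg (α⁻¹ • ·) hx).trans (inv_smul_smul₀ h.ne_zero y)⟩

end AxisTransport

section Semiunitary

variable {σ : ℂ →+* ℂ} [RingHomInvPair σ σ] [RingHomIsometric σ]

section Extension

variable {E F : Type*} [NormedAddCommGroup E] [InnerProductSpace ℂ E]
  [NormedAddCommGroup F] [InnerProductSpace ℂ F] {e : E} {f : F}

theorem smul_add_orthogonalProjectionOnto_eq (he : ‖e‖ = 1) (x : E) :
    ⟪e, x⟫_ℂ • e + ((ℂ ∙ e)ᗮ.orthogonalProjectionOnto x : E) = x := by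
  rw [← Submodule.starProjection_apply, ← Submodule.starProjection_unit_singleton ℂ he]
  exact Submodule.starProjection_add_starProjection_orthogonal _

theorem norm_sq_smul_add_coe (he : ‖e‖ = 1) (c : ℂ) (x : (ℂ ∙ e)ᗮ) :
    ‖c • e + (x : E)‖ ^ 2 = ‖c‖ ^ 2 + ‖x‖ ^ 2 := by
  have := norm_add_sq_eq_norm_sq_add_norm_sq_of_inner_eq_zero (c • e) (x : E)
    (by rw [inner_smul_left, inner_coe_orthogonal_right, mul_zero])
  rw [← sq, ← sq, ← sq, norm_smul, he, mul_one] at this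
  exact this

theorem exists_linearIsometryEquiv_extending (he : ‖e‖ = 1) (hf : ‖f‖ = 1)
    (V : (ℂ ∙ e)ᗮ ≃ₛₗᵢ[σ] (ℂ ∙ f)ᗮ) :
    ∃ U : E ≃ₛₗᵢ[σ] F, U e = f ∧ ∀ x : (ℂ ∙ e)ᗮ, U x = V x := by
  let U₀ : E →ₛₗᵢ[σ] F :=
    { toFun x := σ ⟪e, x⟫_ℂ • f + V ((ℂ ∙ e)ᗮ.orthogonalProjectionOnto x)
      map_add' x y := by
        simp only [inner_add_right, map_add, Submodule.coe_add]
        module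
      map_smul' c x := by
        simp only [inner_smul_right, map_mul, map_smul, map_smulₛₗ, Submodule.coe_smul, smul_add,
          mul_smul]
      norm_map' x := by
        rw [← sq_eq_sq₀ (norm_nonneg _) (norm_nonneg _)]
        refine (norm_sq_smul_add_coe hf _ _).trans ?_
        rw [RingHomIsometric.norm_map, V.norm_map, ← norm_sq_smul_add_coe he,
          smul_add_orthogonalProjectionOnto_eq he] }
  have hU₀ : ∀ (c : ℂ) (x : (ℂ ∙ e)ᗮ), U₀ (c • e + (x : E)) = σ c • f + V x := fun c x => by
    change σ _ • f + (V _ : F) = _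
    rw [map_add, map_smul, Submodule.orthogonalProjectionOnto_orthogonal_apply_eq_zero
      (Submodule.mem_span_singleton_self e)]
    simp [he]
  have hsurj : Function.Surjective U₀ := fun y => by
    refine ⟨σ ⟪f, y⟫_ℂ • e + (V.symm ((ℂ ∙ f)ᗮ.orthogonalProjectionOnto y) : E), ?_⟩
    rw [hU₀, V.apply_symm_apply, RingHomInvPair.comp_apply_eq,
      smul_add_orthogonalProjectionOnto_eq hf]
  refine ⟨.ofSurjective U₀ hsurj, ?_, fun x => ?_⟩
  · simpa using hU₀ 1 0
  · simpa using hU₀ 0 x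

theorem inner_semilinearIsometryEquiv (U : E ≃ₛₗᵢ[σ] F) (x y : E) :
    ⟪U x, U y⟫_ℂ = σ ⟪x, y⟫_ℂ := by
  have hσ : Continuous σ :=
    (AddMonoidHomClass.isometry_of_norm σ fun _ => RingHomIsometric.norm_map).continuous
  obtain rfl | rfl := Complex.ringHom_eq_id_or_conj_of_continuous hσ
  · exact U.inner_map_map x y
  · have hI : Complex.I • U y = -U (Complex.I • y) := by
      rw [map_smulₛₗ, Complex.conj_I, neg_smul, neg_neg]
    rw [inner_eq_sum_norm_sq_div_four, inner_eq_sum_norm_sq_div_four x y, RCLike.I_to_complex, hI,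
      sub_neg_eq_add, ← sub_eq_add_neg]
    simp only [← map_add, ← map_sub, U.norm_map]
    simp only [map_div₀, map_add, map_sub, map_mul, map_pow, RCLike.conj_ofReal, Complex.conj_I,
      map_ofNat]
    ring

end Extension

/-- Conjugation `A ↦ U A U⁻¹` of self-adjoint operators by a unitary (`σ = id`) or antiunitary
(`σ = conj`) operator `U`. -/
def conjBy (U : H ≃ₛₗᵢ[σ] K) : Obs H →ₗ[ℝ] Obs K where
  toFun A := ⟨(U : H →SL[σ] K) ∘SL A.1 ∘SL (U.symm : K →SL[σ] H), by
    refine ContinuousLinearMap.isSelfAdjoint_iff_isSymmetric.mpr fun x y => ?_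
    change ⟪U (A (U.symm x)), y⟫_ℂ = ⟪x, U (A (U.symm y))⟫_ℂ
    rw [← U.apply_symm_apply y, inner_semilinearIsometryEquiv U]
    nth_rw 2 [← U.apply_symm_apply x]
    rw [inner_semilinearIsometryEquiv U, A.inner_apply_left, U.symm_apply_apply]⟩
  map_add' A B := Obs.ext fun z => map_add U _ _
  map_smul' t A := Obs.ext fun z => map_real_smul U U.continuous t _

variable (U : H ≃ₛₗᵢ[σ] K)

@[simp]
theorem conjBy_apply (A : Obs H) (z : K) : conjBy U A z = U (A (U.symm z)) := rfl

theorem conjBy_symRank (x y : H) : conjBy U (symRank x y) = symRank (U x) (U y) :=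
  Obs.ext fun z => by
    have h : ∀ w : H, σ ⟪w, U.symm z⟫_ℂ = ⟪U w, z⟫_ℂ := fun w => by
      rw [← inner_semilinearIsometryEquiv U, U.apply_symm_apply]
    rw [conjBy_apply, symRank_apply, symRank_apply, map_add, map_smulₛₗ, map_smulₛₗ, h, h]

theorem commute_conjBy {A B : Obs H} (h : Commute A.1 B.1) :
    Commute (conjBy U A).1 (conjBy U B).1 :=
  commute_iff_forall_apply.mpr fun z => by
    simp only [conjBy_apply, U.symm_apply_apply]
    exact congrArg U (commute_iff_forall_apply.mp h _)

end Semiunitary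

theorem symRank_smul_left (c : ℂ) (x y : H) : symRank (c • x) y = symRank x (conj c • y) :=
  Obs.ext fun z => by
    simp only [symRank_apply, inner_smul_left, Complex.conj_conj]
    module

theorem symRank_mem_of_axis {S : Submodule ℝ (Obs H)} {e : H} (he : ‖e‖ = 1)
    (hee : symRank e e ∈ S) (hex : ∀ x : (ℂ ∙ e)ᗮ, symRank e x ∈ S)
    (hxx : ∀ x : (ℂ ∙ e)ᗮ, ‖x‖ = 1 → symRank (x : H) x ∈ S) (x y : H) : symRank x y ∈ S := by
  have hself_orth : ∀ x : (ℂ ∙ e)ᗮ, symRank (x : H) x ∈ S := fun x => by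
    rcases eq_or_ne x 0 with rfl | hx
    · rw [Submodule.coe_zero, map_zero]
      exact zero_mem S
    · rw [← NormedSpace.norm_smul_normalize x, Submodule.coe_smul_of_tower, LinearMap.map_smul₂,
        map_smul]
      exact S.smul_mem _ (S.smul_mem _ (hxx _ (NormedSpace.norm_normalize hx)))
  have hself : ∀ z, symRank z z ∈ S := fun z => by
    rw [← smul_add_orthogonalProjectionOnto_eq he z]
    set c := ⟪e, z⟫_ℂ
    set w := (ℂ ∙ e)ᗮ.orthogonalProjectionOnto z
    have hcc : symRank (c • e) (c • e) = ‖c‖ ^ 2 • symRank e e := by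
      rw [symRank_smul_left, smul_smul, Complex.conj_mul', ← Complex.ofReal_pow, Complex.coe_smul,
        map_smul]
    have hcw : symRank (c • e) (w : H) = symRank e (conj c • w : (ℂ ∙ e)ᗮ) :=
      symRank_smul_left c e w
    simp only [map_add, LinearMap.add_apply, symRank_comm (w : H) (c • e), hcc, hcw]
    exact S.add_mem (S.add_mem (S.smul_mem _ hee) (hex _)) (S.add_mem (hex _) (hself_orth w))
  have hpol : (2 : ℝ) • symRank x y = symRank (x + y) (x + y) - symRank x x - symRank y y := by
    rw [map_add, map_add, LinearMap.add_apply, LinearMap.add_apply, symRank_comm y x, two_smul]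
    abel
  rw [← inv_smul_smul₀ (two_ne_zero (α := ℝ)) (symRank x y), hpol]
  exact S.smul_mem _ (S.sub_mem (S.sub_mem (hself _) (hself _)) (hself _))

section Implementation

variable {φ : Obs H →+ Obs K}

namespace QuasiCommutePreserver

theorem map_smul_sub_smul_map_mem (hφ : QuasiCommutePreserver φ) (t : ℝ) (A : Obs H) :
    φ (t • A) - t • φ A ∈ scalarOps K := by
  by_cases hH : scalarOps H = ⊤
  · have hmem : ∀ B, φ B ∈ scalarOps K := fun B => hφ.map_mem_scalarOps_iff.mpr (hH ▸ trivial)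
    exact sub_mem (hmem _) ((scalarOps K).smul_mem t (hmem A))
  obtain ⟨D, hD⟩ := hφ.surjective (φ (t • A) - t • φ A)
  rw [← hD, hφ.map_mem_scalarOps_iff]
  refine mem_scalarOps_of_forall_commute_symRank_self fun x hx => ?_
  obtain ⟨f, α, g, h⟩ :=
    hφ.exists_axisTransport hx (mt (scalarOps_eq_top_of_axisSymmetry_mem hx) hH)
  rw [← hφ.commute_map_iff, hD]
  obtain ⟨C, w, rfl, hC⟩ := exists_eq_add_symRank A hx
  have hw : φ (t • symRank x (w : H)) = t • φ (symRank x w) := by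
    rw [← map_smul, ← Submodule.coe_smul_of_tower, h.map_symRank, h.map_symRank,
      h.transport_real_smul, Submodule.coe_smul_of_tower, map_smul]
  rw [smul_add, map_add, map_add, hw, smul_add, add_sub_add_right_eq_sub]
  exact (hφ.commute_map_iff.mpr (hC.smul_left t)).sub_left ((hφ.commute_map_iff.mpr hC).smul_left t)

/-- The map `Obs H → Obs K ⧸ ℝ` induced by `φ`, which is real linear although `φ` is only
assumed to be additive. -/
def modScalars (hφ : QuasiCommutePreserver φ) : Obs H →ₗ[ℝ] Obs K ⧸ scalarOps K where
  toFun A := (scalarOps K).mkQ (φ A)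
  map_add' A B := by rw [map_add, map_add]
  map_smul' t A := by
    rw [RingHom.id_apply, ← map_smul]
    exact (Submodule.Quotient.eq _).mpr (hφ.map_smul_sub_smul_map_mem t A)

end QuasiCommutePreserver

variable {σ : ℂ →+* ℂ} [RingHomInvPair σ σ] [RingHomIsometric σ]

section

variable {U : H ≃ₛₗᵢ[σ] K} {e : H} {f : K} {α : ℝ} {g : (ℂ ∙ e)ᗮ →+ (ℂ ∙ f)ᗮ}

theorem QuasiCommutePreserver.map_sub_smul_conjBy_mem_of_symRank (hφ : QuasiCommutePreserver φ)
    (hα : α ≠ 0)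
    (h : ∀ x y, φ (symRank x y) - α • conjBy U (symRank x y) ∈ scalarOps K) (A : Obs H) :
    φ A - α • conjBy U A ∈ scalarOps K := by
  refine mem_scalarOps_of_forall_commute_symRank_self fun u hu => ?_
  obtain ⟨x, rfl⟩ := U.surjective u
  rw [← conjBy_symRank]
  obtain ⟨C, w, rfl, hC⟩ := exists_eq_add_symRank A (U.norm_map x ▸ hu)
  have hφC : Commute (φ C).1 (conjBy U (symRank x x)).1 := by
    have := (hφ.commute_map_iff.mpr hC).sub_right (commute_of_mem_scalarOps (h x x) (φ C).1).symm
    rw [← AddSubgroup.coe_sub, sub_sub_cancel] at this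
    exact (Commute.smul_right_iff₀ hα).mp this
  rw [map_add, map_add, smul_add, add_sub_add_comm]
  exact (hφC.sub_left ((commute_conjBy U hC).smul_left α)).add_left
    (commute_of_mem_scalarOps (h x w) _)

theorem AxisTransport.map_symRank_sub_smul_conjBy_mem (h : AxisTransport φ e f α g)
    (hUe : U e = f) (hU : ∀ x, (g x : K) = α • U x) (x y : H) :
    φ (symRank x y) - α • conjBy U (symRank x y) ∈ scalarOps K := by
  set S := h.modScalars.eqLocus ((scalarOps K).mkQ ∘ₗ (α • conjBy U))
  have hmem : ∀ A, A ∈ S ↔ φ A - α • conjBy U A ∈ scalarOps K := fun _ =>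
    Submodule.Quotient.eq (scalarOps K)
  have hee : symRank e e ∈ S := by
    have : φ (symRank e e) = α • axisSymmetry f + φ 1 := by
      rw [← h.map_axisSymmetry, ← map_add, axisSymmetry, sub_add_cancel]
    rw [hmem, conjBy_symRank, hUe, this, add_sub_right_comm, ← smul_sub, axisSymmetry,
      sub_sub_cancel_left]
    exact add_mem ((scalarOps K).smul_mem α (neg_mem one_mem_scalarOps))
      (h.map_mem_scalarOps_iff.mpr one_mem_scalarOps)
  refine (hmem _).mp (symRank_mem_of_axis h.norm_source hee (fun x => ?_) (fun x hx => ?_) x y)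
  · rw [hmem, h.map_symRank, conjBy_symRank, hUe, hU, map_smul, sub_self]
    exact zero_mem _
  · rw [← sub_sub_cancel (symRank e e) (symRank (x : H) x)]
    refine S.sub_mem hee ((hmem _).mpr ?_)
    rw [(h.norm_sq_and_map_symRank_sub hx).2, map_sub, conjBy_symRank, conjBy_symRank, hUe, hU,
      map_smul, LinearMap.map_smul₂, inv_smul_smul₀ h.ne_zero, smul_sub, sub_self]
    exact zero_mem _

theorem AxisTransport.exists_map_sub_smul_conjBy_mem (h : AxisTransport φ e f α g)
    (hS : axisSymmetry e ∉ scalarOps H) (hg : ∀ (c : ℂ) x, g (c • x) = σ c • g x) :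
    ∃ U : H ≃ₛₗᵢ[σ] K, ∀ A, φ A - α • conjBy U A ∈ scalarOps K := by
  obtain ⟨V, hV⟩ := h.exists_linearIsometryEquiv hS hg
  obtain ⟨U, hUe, hU⟩ := exists_linearIsometryEquiv_extending h.norm_source h.norm_target V
  refine ⟨U, h.map_sub_smul_conjBy_mem_of_symRank h.ne_zero
    (h.map_symRank_sub_smul_conjBy_mem hUe fun x => ?_)⟩
  rw [hV, hU, Submodule.coe_smul_of_tower]

end

theorem exists_addMonoidHom_eq_smul {k G M : Type*} [Field k] [AddZeroClass G] [AddCommGroup M]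
    [Module k M] {δ : G →+ M} {v : M} (h : ∀ a, δ a ∈ k ∙ v) :
    ∃ f : G →+ k, ∀ a, δ a = f a • v := by
  rcases eq_or_ne v 0 with rfl | hv
  · exact ⟨0, fun a => by simpa using h a⟩
  · let L := (LinearEquiv.toSpanNonzeroSingleton k M v hv).symm.toAddMonoidHom
    refine ⟨L.comp (δ.codRestrict (k ∙ v) h), fun a => ?_⟩
    exact (congrArg Subtype.val
      ((LinearEquiv.toSpanNonzeroSingleton k M v hv).apply_symm_apply ⟨δ a, h a⟩)).symm

theorem exists_additive_apply_eq {U : H ≃ₛₗᵢ[σ] K} {c : ℝ}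
    (h : ∀ A, φ A - c • conjBy U A ∈ scalarOps K) :
    ∃ f : Obs H → ℝ, (∀ A B, f (A + B) = f A + f B) ∧
      ∀ A x, φ A x = (c : ℂ) • U (A (U.symm x)) + (f A : ℂ) • x := by
  obtain ⟨f, hf⟩ := exists_addMonoidHom_eq_smul
    (δ := φ - (c • conjBy U : Obs H →ₗ[ℝ] Obs K).toAddMonoidHom) h
  refine ⟨f, map_add f, fun A x => ?_⟩
  have hA : φ A = c • conjBy U A + f A • 1 := eq_add_of_sub_eq' (hf A)
  rw [hA]
  rfl

theorem exists_axisSymmetry_notMem (h : scalarOps H ≠ ⊤) :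
    ∃ e : H, ‖e‖ = 1 ∧ axisSymmetry e ∉ scalarOps H := by
  have : Nontrivial H := by
    by_contra hH
    rw [not_nontrivial_iff_subsingleton] at hH
    exact h (eq_top_iff.mpr fun A _ => Submodule.mem_span_singleton.mpr
      ⟨0, Obs.ext fun z => Subsingleton.elim _ _⟩)
  obtain ⟨e, he⟩ := exists_norm_eq H zero_le_one
  exact ⟨e, he, mt (scalarOps_eq_top_of_axisSymmetry_mem he) h⟩

end Implementation

theorem stmt3_general
    (φ : selfAdjoint (H →L[ℂ] H) → selfAdjoint (H →L[ℂ] H))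
    (hadd : ∀ A B : selfAdjoint (H →L[ℂ] H), φ (A + B) = φ A + φ B)
    (hsurj : Function.Surjective φ)
    (hpres : ∀ A B : selfAdjoint (H →L[ℂ] H), CommQ A B ↔ CommQ (φ A) (φ B)) :
    ∃ c : ℝ, c ≠ 0 ∧ ∃ f : selfAdjoint (H →L[ℂ] H) → ℝ,
      (∀ A B : selfAdjoint (H →L[ℂ] H), f (A + B) = f A + f B) ∧
      ((∃ U : H ≃ₗᵢ[ℂ] H, ∀ (A : selfAdjoint (H →L[ℂ] H)) (x : H),
          (φ A : H →L[ℂ] H) x = (c : ℂ) • U ((A : H →L[ℂ] H) (U.symm x)) + (f A : ℂ) • x) ∨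
       (∃ U : H ≃ₗᵢ⋆[ℂ] H, ∀ (A : selfAdjoint (H →L[ℂ] H)) (x : H),
          (φ A : H →L[ℂ] H) x = (c : ℂ) • U ((A : H →L[ℂ] H) (U.symm x)) + (f A : ℂ) • x)) := by
  have hφ : QuasiCommutePreserver (AddMonoidHom.mk' φ hadd) := ⟨hsurj, hpres⟩
  by_cases hH : scalarOps H = ⊤
  · obtain ⟨f, hf, h⟩ := exists_additive_apply_eq (φ := AddMonoidHom.mk' φ hadd) (c := 1)
      (U := LinearIsometryEquiv.refl ℂ H) fun A => hH ▸ trivial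
    exact ⟨1, one_ne_zero, f, hf, .inl ⟨_, h⟩⟩
  obtain ⟨e, he, hS⟩ := exists_axisSymmetry_notMem hH
  obtain ⟨_, α, g, h⟩ := hφ.exists_axisTransport he hS
  rcases h.transport_smul with hg | hg
  · obtain ⟨U, hU⟩ := h.exists_map_sub_smul_conjBy_mem (σ := .id ℂ) hS hg
    obtain ⟨f, hf, hφU⟩ := exists_additive_apply_eq hU
    exact ⟨α, h.ne_zero, f, hf, .inl ⟨U, hφU⟩⟩
  · obtain ⟨U, hU⟩ := h.exists_map_sub_smul_conjBy_mem hS hg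
    obtain ⟨f, hf, hφU⟩ := exists_additive_apply_eq hU
    exact ⟨α, h.ne_zero, f, hf, .inr ⟨U, hφU⟩⟩

theorem stmt3
    (hdim : 3 ≤ Module.rank ℂ H)
    (φ : selfAdjoint (H →L[ℂ] H) → selfAdjoint (H →L[ℂ] H))
    (hadd : ∀ A B : selfAdjoint (H →L[ℂ] H), φ (A + B) = φ A + φ B)
    (hsurj : Function.Surjective φ)
    (hpres : ∀ A B : selfAdjoint (H →L[ℂ] H), CommQ A B ↔ CommQ (φ A) (φ B)) :
    ∃ c : ℝ, c ≠ 0 ∧ ∃ f : selfAdjoint (H →L[ℂ] H) → ℝ,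
      (∀ A B : selfAdjoint (H →L[ℂ] H), f (A + B) = f A + f B) ∧
      ((∃ U : H ≃ₗᵢ[ℂ] H, ∀ (A : selfAdjoint (H →L[ℂ] H)) (x : H),
          (φ A : H →L[ℂ] H) x = (c : ℂ) • U ((A : H →L[ℂ] H) (U.symm x)) + (f A : ℂ) • x) ∨
       (∃ U : H ≃ₗᵢ⋆[ℂ] H, ∀ (A : selfAdjoint (H →L[ℂ] H)) (x : H),
          (φ A : H →L[ℂ] H) x = (c : ℂ) • U ((A : H →L[ℂ] H) (U.symm x)) + (f A : ℂ) • x)) :=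
  stmt3_general φ hadd hsurj hpres
end
end
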